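/- arXiv:2401.12670 — 6 statements merged into one kernel-verified Lean document; each statement's English description precedes it below -/
import Mathlib

section
/- Let k ≥ 2 be an integer and set d = 4k − 4. Let G be a finite simple graph on vertex set V with |V| ≥ C(d+1, 2), and suppose G contains two edge-disjoint spanning subgraphs G₁ and G₂ such that, for each i ∈ {1, 2}, |E(G_i)| = d|V| − C(d+1, 2) and i_{G_i}(X) ≤ d|X| − C(d+1, 2) for every X ⊆ V with |X| ≥ d. Then G has a k-connected orientation. -/
/-- `inducedEdgeCount G X` is `i_G(X)`, the number of edges of `G` with both endpoints
in `X`. -/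
noncomputable def inducedEdgeCount {W : Type*} (G : SimpleGraph W) (X : Set W) : ℕ :=
  {e ∈ G.edgeSet | ∀ x ∈ e, x ∈ X}.ncard

/-- `D` is an orientation of the simple graph `G`: every arc of `D` comes from an edge of `G`,
and for each edge `{u, v}` of `G` exactly one of the arcs `(u, v)`, `(v, u)` belongs to `D`. -/
def IsOrientation {W : Type*} (G : SimpleGraph W) (D : W → W → Prop) : Prop :=
  (∀ u v, D u v → G.Adj u v) ∧ ∀ u v, G.Adj u v → (D u v ↔ ¬ D v u)

/-- After deleting the vertex set `S`, the directed graph `D` is strongly connected: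
any vertex outside `S` can be reached from any other vertex outside `S` by a directed
path avoiding `S`. -/
def StronglyConnectedOutside {W : Type*} (D : W → W → Prop) (S : Set W) : Prop :=
  ∀ u v : W, u ∉ S → v ∉ S →
    Relation.ReflTransGen (fun a b => D a b ∧ a ∉ S ∧ b ∉ S) u v

/-- A directed graph `D` is `k`-connected if it has at least `k+1` vertices and it remains
strongly connected after the removal of any set of fewer than `k` vertices. -/
def DKConnected {W : Type*} (D : W → W → Prop) (k : ℕ) : Prop :=
  k + 1 ≤ Nat.card W ∧
    ∀ S : Set W, S.Finite → S.ncard < k → StronglyConnectedOutside D S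

open Classical in
lemma ors_sum_m {V : Type*} [Fintype V] (d : ℕ) (hd : 1 ≤ d) (Z X : Finset V) :
    (∑ v ∈ X, (if v ∈ Z then d - 1 else d)) + (X ∩ Z).card = d * X.card := by
  have h1 : (X ∩ Z).card = ∑ v ∈ X, (if v ∈ Z then 1 else 0) := by
    rw [Finset.sum_ite_mem]; simp
  rw [h1, ← Finset.sum_add_distrib, mul_comm, ← smul_eq_mul, ← Finset.sum_const]
  apply Finset.sum_congr rfl
  intro v _
  split_ifs <;> omega

open Classical in
lemma ors_head {V : Type*} [Fintype V] (d : ℕ) (hd : 2 ≤ d) (H : SimpleGraph V)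
    (Z : Finset V) (hZ : Z.card = (d + 1).choose 2)
    (hE : H.edgeSet.ncard + (d + 1).choose 2 = d * Fintype.card V)
    (hs : ∀ X : Set V, d ≤ X.ncard →
      inducedEdgeCount H X + (d + 1).choose 2 ≤ d * X.ncard) :
    ∃ h : Sym2 V → V, (∀ e ∈ H.edgeSet, h e ∈ e) ∧
      ∀ X : Finset V, (H.edgeFinset.filter (fun e => h e ∈ X)).card + (X ∩ Z).card
        = d * X.card := by
  set m : V → ℕ := fun v => if v ∈ Z then d - 1 else d with hm
  have hsum : ∀ X : Finset V, (∑ v ∈ X, m v) + (X ∩ Z).card = d * X.card :=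
    fun X => ors_sum_m d (by omega) Z X
  let t : H.edgeSet → Finset (Σ _ : V, ℕ) := fun e =>
    (Finset.univ.filter (fun v => v ∈ e.1)).sigma (fun v => Finset.range (m v))
  have hall : ∀ F : Finset H.edgeSet, F.card ≤ (F.biUnion t).card := by
    intro F
    set X : Finset V := Finset.univ.filter (fun v => ∃ e ∈ F, v ∈ e.1) with hX
    have hb : F.biUnion t = X.sigma (fun v => Finset.range (m v)) := by
      ext ⟨v, i⟩
      simp only [t, hX, Finset.mem_biUnion, Finset.mem_sigma, Finset.mem_filter,
        Finset.mem_univ, true_and, Finset.mem_range]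
      constructor
      · rintro ⟨e, he, h1, h2⟩; exact ⟨⟨e, he, h1⟩, h2⟩
      · rintro ⟨⟨e, he, h1⟩, h2⟩; exact ⟨e, he, h1, h2⟩
    rw [hb, Finset.card_sigma]
    simp only [Finset.card_range]
    have hsX := hsum X
    have hFimg : (F.image Subtype.val).card = F.card :=
      Finset.card_image_of_injective _ Subtype.val_injective
    by_cases hc : d ≤ X.card
    · have h1 := hs (X : Set V) (by simpa using hc)
      rw [Set.ncard_coe_finset] at h1
      have h2 : F.card ≤ inducedEdgeCount H (X : Set V) := by
        rw [← hFimg, inducedEdgeCount, ← Set.ncard_coe_finset]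
        apply Set.ncard_le_ncard _ (Set.toFinite _)
        intro e he
        simp only [Finset.coe_image, Set.mem_image, Finset.mem_coe] at he
        obtain ⟨e, he, rfl⟩ := he
        refine ⟨e.2, fun x hx => ?_⟩
        simp only [hX, Finset.coe_filter, Finset.mem_univ, true_and, Set.mem_setOf_eq]
        exact ⟨e, he, hx⟩
      have h3 : (X ∩ Z).card ≤ Z.card := Finset.card_le_card Finset.inter_subset_right
      omega
    · have h2 : F.card ≤ (X.card + 1).choose 2 := by
        rw [← hFimg, ← Finset.card_sym2]
        apply Finset.card_le_card
        intro e he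
        simp only [Finset.mem_image] at he
        obtain ⟨e, he, rfl⟩ := he
        rw [Finset.mem_sym2_iff]
        intro x hx
        simp only [hX, Finset.mem_filter, Finset.mem_univ, true_and]
        exact ⟨e, he, hx⟩
      have h3 : (X ∩ Z).card ≤ X.card := Finset.card_le_card Finset.inter_subset_left
      have h4 : (X.card + 1).choose 2 * 2 = (X.card + 1) * X.card := by
        have := Nat.add_one_mul_choose_eq X.card 1
        simp at this
        linarith
      have h5 : (X.card + 1) * X.card ≤ d * X.card := Nat.mul_le_mul_right _ (by omega)
      have h6 : 2 * X.card ≤ d * X.card := Nat.mul_le_mul_right _ hd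
      omega
  obtain ⟨f, hfi, hft⟩ := (Finset.all_card_le_biUnion_card_iff_exists_injective t).1 hall
  have hf1 : ∀ e, (f e).1 ∈ e.1 := by
    intro e
    have := hft e
    simp only [t, Finset.mem_sigma, Finset.mem_filter, Finset.mem_univ, true_and] at this
    exact this.1
  have hf2 : ∀ e, (f e).2 < m (f e).1 := by
    intro e
    have := hft e
    simp only [t, Finset.mem_sigma, Finset.mem_range] at this
    exact this.2
  refine ⟨fun e => if he : e ∈ H.edgeSet then (f ⟨e, he⟩).1 else e.out.1, ?_, ?_⟩
  · intro e he
    simp only [he, dif_pos]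
    exact hf1 ⟨e, he⟩
  · set h : Sym2 V → V := fun e => if he : e ∈ H.edgeSet then (f ⟨e, he⟩).1 else e.out.1 with hh
    have key : ∀ X : Finset V, (H.edgeFinset.filter (fun e => h e ∈ X)).card ≤ ∑ v ∈ X, m v := by
      intro X
      have : ∑ v ∈ X, m v = (X.sigma (fun v => Finset.range (m v))).card := by
        simp [Finset.card_sigma]
      rw [this]
      have h0 : (H.edgeFinset.filter (fun e => h e ∈ X)).card
          = ((Finset.univ : Finset H.edgeSet).filter (fun e => h e.1 ∈ X)).card := by
        rw [← Finset.card_image_of_injective _ (Subtype.val_injective (p := (· ∈ H.edgeSet)))]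
        congr 1
        ext e
        simp only [Finset.mem_filter, SimpleGraph.mem_edgeFinset, Finset.mem_image,
          Finset.mem_univ, true_and]
        constructor
        · rintro ⟨h1, h2⟩; exact ⟨⟨e, h1⟩, h2, rfl⟩
        · rintro ⟨e, h1, rfl⟩; exact ⟨e.2, h1⟩
      rw [h0]
      apply Finset.card_le_card_of_injOn f
      · intro e he
        simp only [Finset.coe_filter, Finset.mem_univ, true_and, Set.mem_setOf_eq, hh,
          e.2, dif_pos] at he
        simp only [Finset.mem_coe, Finset.mem_sigma, Finset.mem_range]
        exact ⟨he, hf2 e⟩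
      · exact hfi.injOn
    intro X
    have k1 := key X
    have k2 := key Xᶜ
    have k3 := hsum X
    have k4 := hsum Finset.univ
    have k5 : ∑ v ∈ X, m v + ∑ v ∈ Xᶜ, m v = ∑ v, m v := Finset.sum_add_sum_compl X m
    have k6 : (H.edgeFinset.filter (fun e => h e ∈ X)).card
        + (H.edgeFinset.filter (fun e => h e ∈ Xᶜ)).card = H.edgeSet.ncard := by
      simp only [Finset.mem_compl]
      rw [Finset.card_filter_add_card_filter_not, ← Set.ncard_coe_finset,
        SimpleGraph.coe_edgeFinset]
    rw [Finset.univ_inter, Finset.card_univ] at k4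
    omega

open Classical in
lemma ors_cut {V : Type*} [Fintype V] (d : ℕ) (H : SimpleGraph V)
    (Z : Finset V) (hZ : Z.card = (d + 1).choose 2)
    (hs : ∀ X : Set V, d ≤ X.ncard →
      inducedEdgeCount H X + (d + 1).choose 2 ≤ d * X.ncard)
    (h : Sym2 V → V) (hmem : ∀ e ∈ H.edgeSet, h e ∈ e)
    (hdeg : ∀ X : Finset V, (H.edgeFinset.filter (fun e => h e ∈ X)).card + (X ∩ Z).card
        = d * X.card)
    (S B : Finset V) (hSB : Disjoint S B) (hB : B.Nonempty)
    (hcase : (B ∪ S).card < d ∨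
      (d ≤ (B ∪ S).card ∧ d * S.card < ((B ∪ S)ᶜ ∩ Z).card + (S ∩ Z).card)) :
    ∃ a b, a ∉ B ∪ S ∧ b ∈ B ∧ H.Adj a b ∧ h s(a, b) = b := by
  by_contra hcon
  push Not at hcon
  have hin : ∀ e ∈ H.edgeSet, h e ∈ B → ∀ x ∈ e, x ∈ B ∪ S := by
    intro e he hb x hx
    by_contra hxn
    have hne : h e ≠ x := by
      rintro rfl; exact hxn (Finset.mem_union_left _ hb)
    have hee : e = s(x, h e) := ((Sym2.mem_and_mem_iff hne.symm).1 ⟨hx, hmem e he⟩)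
    apply hcon x (h e) hxn hb
    · rw [← SimpleGraph.mem_edgeSet, ← hee]; exact he
    · rw [← hee]
  rcases hcase with hlt | ⟨hge, hgt⟩
  · obtain ⟨v, hv⟩ := hB
    have h1 := hdeg {v}
    have h2 : (H.edgeFinset.filter (fun e => h e ∈ ({v} : Finset V))).card
        ≤ (((B ∪ S).erase v).image (fun x => s(x, v))).card := by
      apply Finset.card_le_card
      intro e he
      simp only [Finset.mem_filter, SimpleGraph.mem_edgeFinset, Finset.mem_singleton] at he
      obtain ⟨he, hev⟩ := he
      have hve : v ∈ e := hev ▸ hmem e he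
      obtain ⟨x, rfl⟩ := Sym2.mem_iff_exists.1 hve
      have hx := hin _ he (by rw [hev]; exact hv) x (by simp)
      rw [SimpleGraph.mem_edgeSet] at he
      simp only [Finset.mem_image, Finset.mem_erase]
      exact ⟨x, ⟨he.ne', hx⟩, Sym2.eq_swap⟩
    have h3 := Finset.card_image_le (s := (B ∪ S).erase v) (f := fun x => s(x, v))
    have hvm : v ∈ B ∪ S := Finset.mem_union_left _ hv
    rw [Finset.card_erase_of_mem hvm] at h3
    have h5 : 0 < (B ∪ S).card := Finset.card_pos.2 ⟨v, hvm⟩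
    have h4 : (({v} : Finset V) ∩ Z).card ≤ 1 := by
      simpa using Finset.card_le_card (Finset.inter_subset_left (s₁ := {v}) (s₂ := Z))
    simp only [Finset.card_singleton, mul_one] at h1
    omega
  · have h1 := hdeg B
    have h2 := hs ((B ∪ S : Finset V) : Set V) (by rwa [Set.ncard_coe_finset])
    rw [Set.ncard_coe_finset] at h2
    have h3 : (H.edgeFinset.filter (fun e => h e ∈ B)).card
        ≤ inducedEdgeCount H ((B ∪ S : Finset V) : Set V) := by
      rw [inducedEdgeCount, ← Set.ncard_coe_finset]
      apply Set.ncard_le_ncard _ (Set.toFinite _)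
      intro e he
      simp only [Finset.coe_filter, SimpleGraph.mem_edgeFinset, Set.mem_setOf_eq] at he
      exact ⟨he.1, fun x hx => Finset.mem_coe.2 (hin e he.1 he.2 x hx)⟩
    have h4 : (B ∪ S).card = B.card + S.card := Finset.card_union_of_disjoint hSB.symm
    have h5 : ((B ∪ S) ∩ Z).card = (B ∩ Z).card + (S ∩ Z).card := by
      rw [Finset.union_inter_distrib_right]
      exact Finset.card_union_of_disjoint
        (hSB.symm.mono Finset.inter_subset_left Finset.inter_subset_left)
    have h6 : ((B ∪ S) ∩ Z).card + ((B ∪ S)ᶜ ∩ Z).card = Z.card := by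
      rw [← Finset.card_union_of_disjoint, ← Finset.union_inter_distrib_right,
        Finset.union_compl, Finset.univ_inter]
      exact disjoint_compl_right.mono Finset.inter_subset_left Finset.inter_subset_left
    rw [h4, mul_add] at h2
    omega

/-- Let `k ≥ 2` and `d = 4k − 4`. If a finite simple graph `G` with `|V| ≥ C(d+1,2)`
contains two edge-disjoint spanning subgraphs `G₁`, `G₂`, each with exactly
`d|V| − C(d+1,2)` edges and satisfying `i_{G_i}(X) ≤ d|X| − C(d+1,2)` for every `X ⊆ V`
with `|X| ≥ d`, then `G` has a `k`-connected orientation. -/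
theorem orientation_from_two_rigid_subgraphs {V : Type*} [Fintype V] (k d : ℕ)
    (hk : 2 ≤ k) (hd : d + 4 = 4 * k)
    (G G₁ G₂ : SimpleGraph V)
    (hV : (d + 1).choose 2 ≤ Fintype.card V)
    (hsub₁ : G₁ ≤ G) (hsub₂ : G₂ ≤ G)
    (hdisj : Disjoint G₁.edgeSet G₂.edgeSet)
    (hE₁ : G₁.edgeSet.ncard + (d + 1).choose 2 = d * Fintype.card V)
    (hE₂ : G₂.edgeSet.ncard + (d + 1).choose 2 = d * Fintype.card V)
    (hsparse₁ : ∀ X : Set V, d ≤ X.ncard →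
      inducedEdgeCount G₁ X + (d + 1).choose 2 ≤ d * X.ncard)
    (hsparse₂ : ∀ X : Set V, d ≤ X.ncard →
      inducedEdgeCount G₂ X + (d + 1).choose 2 ≤ d * X.ncard) :
    ∃ D : V → V → Prop, IsOrientation G D ∧ DKConnected D k := by
  classical
  have hC : (d + 1).choose 2 * 2 = (d + 1) * d := by
    have := Nat.add_one_mul_choose_eq d 1
    simp at this
    linarith
  obtain ⟨j, rfl⟩ : ∃ j, k = j + 2 := ⟨k - 2, by omega⟩
  obtain rfl : d = 4 * j + 4 := by omega
  have hC' : (4 * j + 4 + 1).choose 2 = (4 * j + 5) * (2 * j + 2) := by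
    have : (4 * j + 4 + 1) * (4 * j + 4) = ((4 * j + 5) * (2 * j + 2)) * 2 := by ring
    omega
  obtain ⟨Z, -, hZ⟩ := Finset.exists_subset_card_eq
    (show (4 * j + 4 + 1).choose 2 ≤ (Finset.univ : Finset V).card by simpa using hV)
  obtain ⟨h₁, hm₁, hd₁⟩ := ors_head _ (by omega) G₁ Z hZ hE₁ hsparse₁
  obtain ⟨h₂, hm₂, hd₂⟩ := ors_head _ (by omega) G₂ Z hZ hE₂ hsparse₂
  have hnot : ∀ u v, G₂.Adj u v → ¬ G₁.Adj u v := by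
    intro u v h2 h1
    exact Set.disjoint_left.1 hdisj (G₁.mem_edgeSet.2 h1) (G₂.mem_edgeSet.2 h2)
  let D : V → V → Prop := fun u v => G.Adj u v ∧
    (if G₁.Adj u v then h₁ s(u, v) = v else if G₂.Adj u v then h₂ s(u, v) = u
      else WellOrderingRel u v)
  refine ⟨D, ⟨fun u v h => h.1, ?_⟩, ?_, ?_⟩
  · intro u v huv
    have hne := huv.ne
    have hvu := huv.symm
    simp only [D, huv, hvu, true_and, G₁.adj_comm v u, G₂.adj_comm v u,
      Sym2.eq_swap (a := v) (b := u)]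
    split_ifs with c1 c2
    · have := hm₁ _ (G₁.mem_edgeSet.2 c1)
      rw [Sym2.mem_iff] at this
      rcases this with h | h <;> rw [h] <;> simp [hne, hne.symm]
    · have := hm₂ _ (G₂.mem_edgeSet.2 c2)
      rw [Sym2.mem_iff] at this
      rcases this with h | h <;> rw [h] <;> simp [hne, hne.symm]
    · constructor
      · intro h h'
        exact asymm_of WellOrderingRel h h'
      · intro h
        rcases trichotomous_of WellOrderingRel u v with h' | h' | h'
        · exact h'
        · exact absurd h' hne
        · exact absurd h' h
  · rw [Nat.card_eq_fintype_card]
    nlinarith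
  · intro S _ hSk u v hu hv
    by_contra hcon
    set R : V → V → Prop := fun a b => D a b ∧ a ∉ S ∧ b ∉ S with hR
    set A : Finset V := Finset.univ.filter (fun x => Relation.ReflTransGen R u x) with hA
    set T : Finset V := S.toFinset with hT
    have hAS : ∀ x, Relation.ReflTransGen R u x → x ∉ S := by
      intro x hx
      cases hx with
      | refl => exact hu
      | tail _ h => exact h.2.2
    set B : Finset V := (A ∪ T)ᶜ with hB
    have hTk : T.card < j + 2 := by rwa [hT, ← Set.ncard_eq_toFinset_card']
    have hTA : Disjoint T A := by
      rw [Finset.disjoint_left]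
      intro x hx hx'
      simp only [hT, Set.mem_toFinset] at hx
      simp only [hA, Finset.mem_filter, Finset.mem_univ, true_and] at hx'
      exact hAS x hx' hx
    have hTB : Disjoint T B := by
      rw [Finset.disjoint_left]
      intro x hx hx'
      simp only [hB, Finset.mem_compl, Finset.mem_union] at hx'
      exact hx' (Or.inr hx)
    have hAne : A.Nonempty := ⟨u, by simp [hA, Relation.ReflTransGen.refl]⟩
    have hBne : B.Nonempty := ⟨v, by simp [hB, hA, hT, hcon, hv]⟩
    have hAc : (B ∪ T)ᶜ = A := by
      ext x
      have : x ∈ T → x ∉ A := fun h => Finset.disjoint_left.1 hTA h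
      simp only [hB, Finset.mem_compl, Finset.mem_union]
      tauto
    have hno : ∀ a b, a ∈ A → b ∈ B → ¬ D a b := by
      intro a b ha hb hab
      simp only [hA, Finset.mem_filter, Finset.mem_univ, true_and] at ha
      simp only [hB, hA, hT, Finset.mem_compl, Finset.mem_union, Finset.mem_filter,
        Finset.mem_univ, true_and, Set.mem_toFinset, not_or] at hb
      exact hb.1 (ha.tail ⟨hab, hAS a ha, hb.2⟩)
    have case1 : ¬ ((B ∪ T).card < 4 * j + 4 ∨ (4 * j + 4 ≤ (B ∪ T).card ∧
        (4 * j + 4) * T.card < ((B ∪ T)ᶜ ∩ Z).card + (T ∩ Z).card)) := by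
      intro hc
      obtain ⟨a, b, ha, hb, hab, hh⟩ := ors_cut _ G₁ Z hZ hsparse₁ h₁ hm₁ hd₁ T B hTB hBne hc
      rw [← Finset.mem_compl, hAc] at ha
      exact hno a b ha hb ⟨hsub₁ hab, by rw [if_pos hab]; exact hh⟩
    have case2 : ¬ ((A ∪ T).card < 4 * j + 4 ∨ (4 * j + 4 ≤ (A ∪ T).card ∧
        (4 * j + 4) * T.card < ((A ∪ T)ᶜ ∩ Z).card + (T ∩ Z).card)) := by
      intro hc
      obtain ⟨b, a, hb, ha, hab, hh⟩ := ors_cut _ G₂ Z hZ hsparse₂ h₂ hm₂ hd₂ T A hTA hAne hc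
      rw [← Finset.mem_compl, ← hB] at hb
      refine hno a b ha hb ⟨hsub₂ hab.symm, ?_⟩
      rw [if_neg (hnot _ _ hab.symm), if_pos hab.symm, Sym2.eq_swap]
      exact hh
    rw [hAc] at case1
    rw [← hB] at case2
    have hABT : A ∪ B ∪ T = Finset.univ := by
      ext x
      simp only [hB, Finset.mem_union, Finset.mem_compl, Finset.mem_univ, iff_true]
      tauto
    have hZle : Z.card ≤ (A ∩ Z).card + (B ∩ Z).card + (T ∩ Z).card := by
      calc Z.card = ((A ∪ B ∪ T) ∩ Z).card := by rw [hABT, Finset.univ_inter]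
        _ ≤ _ := by
          rw [Finset.union_inter_distrib_right, Finset.union_inter_distrib_right]
          exact (Finset.card_union_le _ _).trans
            (Nat.add_le_add_right (Finset.card_union_le _ _) _)
    have hmul : (4 * j + 4) * T.card ≤ (4 * j + 4) * (j + 1) :=
      Nat.mul_le_mul_left _ (by omega)
    have hbig : 2 * ((4 * j + 4) * (j + 1)) < (4 * j + 5) * (2 * j + 2) := by nlinarith
    omega
end

section
/- Let G = (V, E) be a finite simple graph and let k₀, ℓ, D be positive integers satisfying k₀² + k₀(1 − D(D+1)) − ℓ(ℓ+1) ≥ 0. Suppose that every vertex of G has degree at least k₀, that for every v ∈ V the neighborhood N_G(v) does not induce a clique in G, and that for every v ∈ V any two distinct maximal cliques of the induced subgraph G[N_G(v)] have at most ℓ − 2 vertices in common. For an ordering π of V and v ∈ V, let N←π(v) be the set of neighbors of v that precede v in π, let deg←π(v) = |N←π(v)|, and define h_π(v) = min(D, deg←π(v)) + 1 if deg←π(v) ≥ D + 1 and N←π(v) does not induce a clique in G, and h_π(v) = min(D, deg←π(v)) otherwise. Then the average over all |V|! orderings π of V of the sum ∑_{v ∈ V} h_π(v) is at least D·|V|.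 -/
/-- The set of neighbors of `v` in `G` that precede `v` in the ordering `π`. -/
def backNeighbors {W : Type*} {n : ℕ} (G : SimpleGraph W) (π : W ≃ Fin n) (v : W) :
    Set W :=
  {u | G.Adj u v ∧ π u < π v}

open Classical in
/-- The quantity `h_π(v)`: it equals `min(D, deg←π(v)) + 1` if `deg←π(v) ≥ D + 1` and the
set of neighbors of `v` preceding `v` in `π` does not induce a clique in `G`, and
`min(D, deg←π(v))` otherwise. -/
noncomputable def hOrd {W : Type*} {n : ℕ} (G : SimpleGraph W) (D : ℕ) (π : W ≃ Fin n)
    (v : W) : ℕ :=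
  min D (backNeighbors G π v).ncard +
    if D + 1 ≤ (backNeighbors G π v).ncard ∧ ¬ G.IsClique (backNeighbors G π v) then 1
    else 0

/-- `s` is a maximal clique of the subgraph of `G` induced by `N`. -/
def IsMaxCliqueIn {W : Type*} (G : SimpleGraph W) (N : Set W) (s : Set W) : Prop :=
  G.IsClique s ∧ s ⊆ N ∧ ∀ t : Set W, G.IsClique t → t ⊆ N → s ⊆ t → s = t

open Finset in
lemma sum_rank {V : Type*} [DecidableEq V] {n : ℕ} (π : V ≃ Fin n) (f : ℕ → ℚ) (S : Finset V) :
    ∑ x ∈ S, f ((S.filter (fun y => π y < π x)).card) = ∑ i ∈ range S.card, f i := by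
  induction S using Finset.induction_on_max_value (fun x => π x) with
  | empty => simp
  | insert a s ha hmax ih =>
    rw [sum_insert ha, card_insert_of_notMem ha, sum_range_succ, ← ih, add_comm]
    congr 1
    · apply sum_congr rfl
      intro x hx
      rw [filter_insert, if_neg (not_lt.mpr (hmax x hx))]
    · rw [filter_insert, if_neg (lt_irrefl _), filter_true_of_mem]
      intro x hx
      refine lt_of_le_of_ne (hmax x hx) ?_
      intro h
      exact ha (π.injective h ▸ hx)

lemma sum_swap {V : Type*} [Fintype V] [DecidableEq V] {n : ℕ} (σ : Equiv.Perm V)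
    (F : (V ≃ Fin n) → ℚ) : ∑ π, F (σ.trans π) = ∑ π, F π := by
  refine Fintype.sum_bijective (fun π : V ≃ Fin n => σ.trans π) ⟨?_, ?_⟩ _ _ (fun _ => rfl)
  · intro a b h
    ext x
    have := congrArg (fun e : V ≃ Fin n => e (σ.symm x)) h
    simpa using congrArg Fin.val this
  · intro b
    refine ⟨σ.symm.trans b, ?_⟩
    ext x
    simp

open Finset in
lemma rank_swap {V : Type*} [DecidableEq V] {n : ℕ} (σ : Equiv.Perm V)
    (π : V ≃ Fin n) (S : Finset V) (hS : ∀ x, σ x ∈ S ↔ x ∈ S) (x : V) :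
    (S.filter (fun y => (σ.trans π) y < (σ.trans π) x)).card
      = (S.filter (fun y => π y < π (σ x))).card := by
  rw [← card_map σ.toEmbedding]
  congr 1
  ext y
  constructor
  · intro h
    obtain ⟨z, hz, rfl⟩ := mem_map.1 h
    have h3 := mem_filter.1 hz
    exact mem_filter.2 ⟨(hS z).2 h3.1, h3.2⟩
  · intro h
    have h3 := mem_filter.1 h
    refine mem_map.2 ⟨σ.symm y, mem_filter.2 ⟨?_, ?_⟩, by simp⟩
    · rw [← hS]; simpa using h3.1
    · simpa using h3.2

lemma swap_mem {V : Type*} [DecidableEq V] (S : Finset V) {u w : V} (hu : u ∈ S) (hw : w ∈ S)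
    (x : V) : Equiv.swap u w x ∈ S ↔ x ∈ S := by
  rw [Equiv.swap_apply_def]
  split_ifs with h1 h2
  · simp [h1, hu, hw]
  · simp [h2, hu, hw]
  · rfl

open Finset in
lemma rank_uniform {V : Type*} [Fintype V] [DecidableEq V] (N : Finset V) (v : V) (hv : v ∉ N)
    (f : ℕ → ℚ) :
    ((N.card : ℚ) + 1) * ∑ π : V ≃ Fin (Fintype.card V), f ((N.filter (fun y => π y < π v)).card)
      = ((Fintype.card V).factorial : ℚ) * ∑ i ∈ range (N.card + 1), f i := by
  have key : ∀ x ∈ insert v N, ∑ π : V ≃ Fin (Fintype.card V),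
      f (((insert v N).filter (fun y => π y < π x)).card)
      = ∑ π : V ≃ Fin (Fintype.card V), f ((N.filter (fun y => π y < π v)).card) := by
    intro x hx
    rw [← sum_swap (Equiv.swap v x)]
    apply sum_congr rfl
    intro π _
    rw [rank_swap _ _ _ (swap_mem _ (mem_insert_self v N) hx), Equiv.swap_apply_right,
      filter_insert, if_neg (lt_irrefl _)]
  have h2 := sum_congr rfl key
  rw [sum_comm, sum_const, card_insert_of_notMem hv, nsmul_eq_mul] at h2
  push_cast at h2
  rw [← h2]
  simp_rw [sum_rank, card_insert_of_notMem hv]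
  rw [sum_const, card_univ, Fintype.card_equiv (Fintype.equivFin V), nsmul_eq_mul]

open Finset in
lemma mem_uniform {V : Type*} [Fintype V] [DecidableEq V] (N : Finset V) (v : V) (hv : v ∉ N)
    (g : ℕ → ℚ) (u : V) (hu : u ∈ N) :
    (N.card : ℚ) * ∑ π : V ≃ Fin (Fintype.card V),
      g ((N.filter (fun y => π y < π v)).card) * (if π u < π v then 1 else 0)
      = ∑ π : V ≃ Fin (Fintype.card V), g ((N.filter (fun y => π y < π v)).card) *
          ((N.filter (fun y => π y < π v)).card : ℚ) := by
  have key : ∀ x ∈ N, ∑ π : V ≃ Fin (Fintype.card V),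
      g ((N.filter (fun y => π y < π v)).card) * (if π x < π v then (1 : ℚ) else 0)
      = ∑ π : V ≃ Fin (Fintype.card V),
      g ((N.filter (fun y => π y < π v)).card) * (if π u < π v then 1 else 0) := by
    intro x hx
    rw [← sum_swap (Equiv.swap u x)]
    apply sum_congr rfl
    intro π _
    have hvv : Equiv.swap u x v = v := by
      apply Equiv.swap_apply_of_ne_of_ne
      · rintro rfl; exact hv hu
      · rintro rfl; exact hv hx
    rw [rank_swap _ _ _ (swap_mem _ hu hx), hvv]
    simp [hvv]
  have h2 := sum_congr rfl key
  rw [sum_comm, sum_const, nsmul_eq_mul] at h2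
  rw [← h2]
  apply sum_congr rfl
  intro π _
  rw [← mul_sum]
  simp

lemma exists_maxClique {V : Type*} [Fintype V] (G : SimpleGraph V) (N s : Set V)
    (hs : G.IsClique s) (hsN : s ⊆ N) : ∃ t, s ⊆ t ∧ IsMaxCliqueIn G N t := by
  obtain ⟨t, hst, ht⟩ := (Set.toFinite {t : Set V | G.IsClique t ∧ t ⊆ N}).exists_le_maximal
    (a := s) ⟨hs, hsN⟩
  exact ⟨t, hst, ht.prop.1, ht.prop.2, fun t' h1 h2 h3 => ht.eq_of_le ⟨h1, h2⟩ h3⟩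

/-- two cliques differing by one exchange of nonadjacent vertices are small -/
lemma exchange {V : Type*} [Fintype V] (G : SimpleGraph V) (ℓ : ℕ) (N : Set V)
    (hmax : ∀ H₁ H₂ : Set V, H₁ ≠ H₂ → IsMaxCliqueIn G N H₁ → IsMaxCliqueIn G N H₂ →
      (H₁ ∩ H₂).ncard + 2 ≤ ℓ) (u w : V) (huw : u ≠ w) (hadj : ¬ G.Adj u w)
    (A B : Set V) (hA : G.IsClique A) (hB : G.IsClique B) (hAN : A ⊆ N) (hBN : B ⊆ N)
    (hu : u ∈ A) (hw : w ∈ B) (hAB : A \ {u} ⊆ B) : A.ncard + 1 ≤ ℓ := by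
  obtain ⟨H₁, h1, m1⟩ := exists_maxClique G N A hA hAN
  obtain ⟨H₂, h2, m2⟩ := exists_maxClique G N B hB hBN
  have hne : H₁ ≠ H₂ := by
    rintro rfl
    exact hadj (m1.1 (h1 hu) (h2 hw) huw)
  have h3 := hmax H₁ H₂ hne m1 m2
  have h4 : (A \ {u}).ncard ≤ (H₁ ∩ H₂).ncard :=
    Set.ncard_le_ncard (fun x hx => ⟨h1 hx.1, h2 (hAB hx)⟩) (Set.toFinite _)
  have h5 := Set.ncard_sdiff_singleton_add_one hu (Set.toFinite A)
  omega

lemma back_swap {V : Type*} [DecidableEq V] {n : ℕ} (G : SimpleGraph V) (π : V ≃ Fin n)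
    (u w v : V) (hu : G.Adj u v) (hw : G.Adj w v) (x : V) :
    x ∈ backNeighbors G ((Equiv.swap u w).trans π) v ↔
      Equiv.swap u w x ∈ backNeighbors G π v := by
  have hvv : Equiv.swap u w v = v :=
    Equiv.swap_apply_of_ne_of_ne hu.ne' hw.ne'
  have : G.Adj (Equiv.swap u w x) v ↔ G.Adj x v := by
    rw [Equiv.swap_apply_def]
    split_ifs with h1 h2
    · simp [h1, hu, hw]
    · simp [h2, hu, hw]
    · rfl
  simp [backNeighbors, hvv, this]

open Classical in
lemma pair_ineq {V : Type*} [Fintype V] [DecidableEq V] {n : ℕ} (G : SimpleGraph V) (ℓ : ℕ) (v : V)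
    (hmax : ∀ H₁ H₂ : Set V, H₁ ≠ H₂ → IsMaxCliqueIn G (G.neighborSet v) H₁ →
      IsMaxCliqueIn G (G.neighborSet v) H₂ → (H₁ ∩ H₂).ncard + 2 ≤ ℓ)
    (u w : V) (huw : u ≠ w) (hadj : ¬ G.Adj u w) (hu : G.Adj u v) (hw : G.Adj w v)
    (π : V ≃ Fin n) (hl : ℓ ≤ (backNeighbors G π v).ncard) :
    (if π u < π v then (1:ℚ) else 0) + (if π w < π v then 1 else 0) ≤
      (if ¬ G.IsClique (backNeighbors G π v) then 1 else 0) +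
      (if ¬ G.IsClique (backNeighbors G ((Equiv.swap u w).trans π) v) then 1 else 0) := by
  set B := backNeighbors G π v with hB
  set B' := backNeighbors G ((Equiv.swap u w).trans π) v with hB'
  have hsw := back_swap G π u w v hu hw
  have huB : u ∈ B ↔ π u < π v := by simp [hB, backNeighbors, hu]
  have hwB : w ∈ B ↔ π w < π v := by simp [hB, backNeighbors, hw]
  have huB' : u ∈ B' ↔ w ∈ B := by rw [hsw, Equiv.swap_apply_left]
  have hwB' : w ∈ B' ↔ u ∈ B := by rw [hsw, Equiv.swap_apply_right]
  have hBN : B ⊆ G.neighborSet v := fun x hx => hx.1.symm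
  have hBN' : B' ⊆ G.neighborSet v := fun x hx => hx.1.symm
  have hother : ∀ x, x ≠ u → x ≠ w → x ∈ B → x ∈ B' := by
    intro x h1 h2 h3
    rw [hsw, Equiv.swap_apply_of_ne_of_ne h1 h2]; exact h3
  have c1 : u ∈ B → w ∉ B → G.IsClique B → ¬ G.IsClique B' := by
    intro h1 h2 h3 h4
    have := exchange G ℓ _ hmax u w huw hadj B B' h3 h4 hBN hBN' h1 (hwB'.2 h1) (by
      intro x hx
      exact hother x hx.2 (fun h => h2 (h ▸ hx.1)) hx.1)
    omega
  have c2 : w ∈ B → u ∉ B → G.IsClique B → ¬ G.IsClique B' := by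
    intro h1 h2 h3 h4
    have := exchange G ℓ _ hmax w u huw.symm (fun h => hadj h.symm) B B' h3 h4 hBN hBN' h1
      (huB'.2 h1) (by
      intro x hx
      exact hother x (fun h => h2 (h ▸ hx.1)) hx.2 hx.1)
    omega
  have c3 : u ∈ B → w ∈ B → ¬ G.IsClique B := fun h1 h2 h3 => hadj (h3 h1 h2 huw)
  have c4 : u ∈ B → w ∈ B → ¬ G.IsClique B' :=
    fun h1 h2 h3 => hadj (h3 (huB'.2 h2) (hwB'.2 h1) huw)
  simp only [← huB, ← hwB]
  clear_value B B'
  clear huB hwB hsw hother hmax hBN hBN' hl hB hB' huB' hwB' 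
  by_cases a1 : u ∈ B <;> by_cases a2 : w ∈ B <;> by_cases a3 : G.IsClique B <;>
    by_cases a4 : G.IsClique B' <;> simp_all

open Finset in
lemma sum_min (D d : ℕ) (h : D ≤ d) :
    ∑ i ∈ range (d + 1), ((min D i : ℕ) : ℚ) = D * (d + 1) - D * (D + 1) / 2 := by
  induction d, h using Nat.le_induction with
  | base =>
    rw [sum_congr rfl (g := fun i : ℕ => (i : ℚ))
      (fun i hi => by rw [min_eq_right (by have := mem_range.1 hi; omega)])]
    clear * -
    have : ∀ m : ℕ, ∑ i ∈ range (m + 1), (i : ℚ) = m * (m + 1) / 2 := by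
      intro m
      induction m with
      | zero => simp
      | succ m ih => rw [sum_range_succ, ih]; push_cast; ring
    rw [this]; ring
  | succ d hd ih => rw [sum_range_succ, ih, min_eq_left (by omega)]; push_cast; ring

open Finset in
lemma sum_tail (L d : ℕ) (h : L ≤ d) :
    ∑ i ∈ range (d + 1), (if L + 1 ≤ i then (1:ℚ) else 0) * i
      = (d * (d + 1) - L * (L + 1)) / 2 := by
  induction d, h using Nat.le_induction with
  | base =>
    rw [sum_eq_zero]
    · ring
    · intro i hi
      rw [if_neg (by have := mem_range.1 hi; omega)]; ring
  | succ d hd ih => rw [sum_range_succ, ih, if_pos (by omega)]; push_cast; ring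

open Finset in
open Classical in
lemma vertex_bound {V : Type*} [Fintype V] [DecidableEq V]
    (G : SimpleGraph V) (D L d : ℕ) (v : V) (hd : d = (G.neighborSet v).ncard) (hd0 : 0 < d)
    (hDL : D ≤ L) (hLd : L ≤ d)
    (hineq : (d : ℚ) * (D * (D + 1)) + L * (L + 1) ≤ d * (d + 1))
    (hnoclique : ¬ G.IsClique (G.neighborSet v))
    (hmax : ∀ H₁ H₂ : Set V, H₁ ≠ H₂ → IsMaxCliqueIn G (G.neighborSet v) H₁ →
      IsMaxCliqueIn G (G.neighborSet v) H₂ → (H₁ ∩ H₂).ncard + 2 ≤ L) :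
    (D : ℚ) * ((Fintype.card V).factorial : ℚ) ≤
      ∑ π : V ≃ Fin (Fintype.card V), ((hOrd G D π v : ℕ) : ℚ) := by
  set N : Finset V := G.neighborFinset v with hN
  have hvN : v ∉ N := by simp [hN]
  have hNd : N.card = d := by
    rw [hd, Set.ncard_eq_toFinset_card']; rfl
  have hb : ∀ π : V ≃ Fin (Fintype.card V),
      (backNeighbors G π v).ncard = (N.filter (fun y => π y < π v)).card := by
    intro π
    rw [← Set.ncard_coe_finset]
    congr 1
    ext x
    simp [backNeighbors, hN, G.adj_comm]
  obtain ⟨u, hu, w, hw, huw, hadj⟩ : ∃ u, G.Adj u v ∧ ∃ w, G.Adj w v ∧ u ≠ w ∧ ¬ G.Adj u w := by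
    by_contra hcon
    apply hnoclique
    intro u hu w hw huw
    by_contra h
    exact hcon ⟨u, SimpleGraph.Adj.symm hu, w, SimpleGraph.Adj.symm hw, huw, h⟩
  have huN : u ∈ N := by simpa [hN] using hu.symm
  have hwN : w ∈ N := by simpa [hN] using hw.symm
  let g : ℕ → ℚ := fun i => if L + 1 ≤ i then 1 else 0
  let c : (V ≃ Fin (Fintype.card V)) → ℚ :=
    fun π => if ¬ G.IsClique (backNeighbors G π v) then 1 else 0
  let b : (V ≃ Fin (Fintype.card V)) → ℕ := fun π => (N.filter (fun y => π y < π v)).card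
  have s1 : ∀ π, ((min D (b π) : ℕ) : ℚ) + g (b π) * c π ≤ (hOrd G D π v : ℚ) := by
    intro π
    simp only [hOrd, hb, g, c, b]
    push_cast
    by_cases h1 : L + 1 ≤ (N.filter (fun y => π y < π v)).card
    · have h2 : D + 1 ≤ (N.filter (fun y => π y < π v)).card := by omega
      simp [h1, h2]
    · rw [if_neg h1, zero_mul]
      have : (0:ℚ) ≤ if D + 1 ≤ (N.filter (fun y => π y < π v)).card ∧
        ¬ G.IsClique (backNeighbors G π v) then 1 else 0 := by split_ifs <;> norm_num
      simpa using this
  have hbs : ∀ π, b ((Equiv.swap u w).trans π) = b π := by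
    intro π
    simp only [b]
    rw [rank_swap _ _ _ (swap_mem _ huN hwN), Equiv.swap_apply_of_ne_of_ne hu.ne' hw.ne']
  have s2 : ∑ π, g (b π) * ((if π u < π v then (1:ℚ) else 0) + (if π w < π v then 1 else 0)) ≤
      ∑ π, g (b π) * (c π + c ((Equiv.swap u w).trans π)) := by
    apply sum_le_sum
    intro π _
    by_cases h1 : L + 1 ≤ b π
    · simp only [g, if_pos h1, one_mul]
      exact pair_ineq G L v hmax u w huw hadj hu hw π (by rw [hb]; change L ≤ b π; omega)
    · simp only [g, if_neg h1, zero_mul, le_refl]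
  have s3 : ∑ π, g (b π) * c ((Equiv.swap u w).trans π) = ∑ π, g (b π) * c π := by
    rw [← sum_swap (Equiv.swap u w) (fun π => g (b π) * c π)]
    apply sum_congr rfl
    intro π _
    rw [hbs]
  simp only [mul_add, sum_add_distrib] at s2
  rw [s3] at s2
  have m1 := mem_uniform N v hvN g u huN
  have m2 := mem_uniform N v hvN g w hwN
  have r1 := rank_uniform N v hvN (fun i => ((min D i : ℕ) : ℚ))
  have r2 := rank_uniform N v hvN (fun i => g i * i)
  rw [hNd] at m1 m2 r1 r2
  rw [sum_min D d (hDL.trans hLd)] at r1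
  rw [show ∑ i ∈ range (d + 1), g i * (i:ℚ) = _ from sum_tail L d hLd] at r2
  have s4 := sum_le_sum (s := univ) (fun π _ => s1 π)
  rw [sum_add_distrib] at s4
  refine le_trans ?_ s4
  change (d:ℚ) * ∑ π, g (b π) * (if π u < π v then 1 else 0) = ∑ π, g (b π) * (b π : ℚ) at m1
  change (d:ℚ) * ∑ π, g (b π) * (if π w < π v then 1 else 0) = ∑ π, g (b π) * (b π : ℚ) at m2
  change ((d:ℚ) + 1) * ∑ π, ((min D (b π) : ℕ) : ℚ) = _ at r1
  change ((d:ℚ) + 1) * ∑ π, g (b π) * (b π : ℚ) = _ at r2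
  generalize (∑ π, g (b π) * (if π u < π v then (1:ℚ) else 0)) = X1 at *
  generalize (∑ π, g (b π) * (if π w < π v then (1:ℚ) else 0)) = X2 at *
  generalize (∑ π, g (b π) * (b π : ℚ)) = Y at *
  generalize (∑ π, ((min D (b π) : ℕ) : ℚ)) = Z at *
  generalize (∑ π, g (b π) * c π) = C at *
  have hf : (0:ℚ) < (Fintype.card V).factorial := by exact_mod_cast Nat.factorial_pos _
  generalize ((Fintype.card V).factorial : ℚ) = F at *
  have hdq : (0:ℚ) < d := by exact_mod_cast hd0
  have hC : Y ≤ d * C := by nlinarith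
  have h6 : (d:ℚ) * (d + 1) * (D * F) ≤ d * (d + 1) * (Z + C) := by
    have e1 : (d:ℚ) * (d + 1) * Z = d * (F * (D * (d + 1) - D * (D + 1) / 2)) := by
      rw [← r1]; ring
    have e2 : (d + 1) * Y ≤ (d + 1) * (d * C) := by gcongr
    rw [r2] at e2
    have e3 := mul_le_mul_of_nonneg_left hineq hf.le
    nlinarith
  exact le_of_mul_le_mul_left h6 (by positivity)

/-- Let `G` be a finite simple graph and `k₀, ℓ, D` positive integers with
`k₀² + k₀(1 − D(D+1)) − ℓ(ℓ+1) ≥ 0`. Suppose every vertex has degree at least `k₀`, no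
neighborhood induces a clique, and any two distinct maximal cliques of an induced
neighborhood share at most `ℓ − 2` vertices. Then the average over all `|V|!` orderings
`π` of `V` of `∑_{v} h_π(v)` is at least `D·|V|`. -/
theorem expected_edge_count {V : Type*} [Fintype V] [DecidableEq V]
    (G : SimpleGraph V) (k₀ ℓ D : ℕ) (hk₀ : 0 < k₀) (hℓ : 0 < ℓ) (hD : 0 < D)
    (hineq : 0 ≤ (k₀ : ℤ) ^ 2 + (k₀ : ℤ) * (1 - (D : ℤ) * (D + 1)) - (ℓ : ℤ) * (ℓ + 1))
    (hdeg : ∀ v : V, k₀ ≤ (G.neighborSet v).ncard)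
    (hnoclique : ∀ v : V, ¬ G.IsClique (G.neighborSet v))
    (hmaxcliques : ∀ v : V, ∀ H₁ H₂ : Set V, H₁ ≠ H₂ →
      IsMaxCliqueIn G (G.neighborSet v) H₁ → IsMaxCliqueIn G (G.neighborSet v) H₂ →
      (H₁ ∩ H₂).ncard + 2 ≤ ℓ) :
    ((D * Fintype.card V : ℕ) : ℚ) ≤
      (∑ π : V ≃ Fin (Fintype.card V), ∑ v : V, ((hOrd G D π v : ℕ) : ℚ))
        / (Nat.factorial (Fintype.card V) : ℚ) := by
  have hf : (0:ℚ) < (Fintype.card V).factorial := by exact_mod_cast Nat.factorial_pos _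
  rw [le_div_iff₀ hf, Finset.sum_comm]
  have hk : (0:ℤ) < k₀ := by exact_mod_cast hk₀
  have hl : (0:ℤ) < ℓ := by exact_mod_cast hℓ
  have hDz : (0:ℤ) < D := by exact_mod_cast hD
  have hpos : (0:ℤ) < k₀ + 1 - D * (D + 1) := by
    by_contra hcon
    push Not at hcon
    nlinarith
  -- replace ℓ by the maximum of ℓ and D
  obtain ⟨L, hLD, hLl, hL⟩ : ∃ L : ℕ, D ≤ L ∧ ℓ ≤ L ∧
      (L:ℤ) * (L + 1) ≤ k₀ * (k₀ + 1 - D * (D + 1)) := by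
    rcases le_total D ℓ with h | h
    · exact ⟨ℓ, h, le_rfl, by nlinarith⟩
    · exact ⟨D, le_rfl, h, by nlinarith⟩
  have hLk : L ≤ k₀ := by
    by_contra hcon
    have : (k₀:ℤ) + 1 ≤ L := by exact_mod_cast not_le.1 hcon
    nlinarith [mul_pos hDz hk, mul_pos (mul_pos hDz hk) hDz]
  have key : ∀ v : V, (D : ℚ) * ((Fintype.card V).factorial : ℚ) ≤
      ∑ π : V ≃ Fin (Fintype.card V), ((hOrd G D π v : ℕ) : ℚ) := by
    intro v
    have hd := hdeg v
    refine vertex_bound G D L _ v rfl (by omega) hLD (by omega) ?_ (hnoclique v)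
      (fun H₁ H₂ a b c => (hmaxcliques v H₁ H₂ a b c).trans hLl)
    generalize (G.neighborSet v).ncard = d at hd
    have hdz : (k₀:ℤ) ≤ d := by exact_mod_cast hd
    have : (d : ℤ) * (D * (D + 1)) + L * (L + 1) ≤ d * (d + 1) := by
      have h1 : (k₀:ℤ) * (k₀ + 1 - D * (D + 1)) ≤ d * (d + 1 - D * (D + 1)) := by gcongr
      nlinarith
    exact_mod_cast this
  calc _ = ∑ v : V, (D : ℚ) * ((Fintype.card V).factorial : ℚ) := by
        rw [Finset.sum_const, Finset.card_univ, nsmul_eq_mul]; push_cast; ring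
    _ ≤ _ := Finset.sum_le_sum (fun v _ => key v)
end

section
/- Let d be a positive integer and let a be the smallest positive integer with C(a+1, 2) ≥ d. For every n ≥ d + a + 2, the complete graph K_n contains two edge-disjoint spanning subgraphs T and G₀ such that T is a spanning tree and G₀ is d-connected. -/
/-- A simple graph `G` is `k`-connected if it has at least `k+1` vertices and removing any
set of fewer than `k` vertices leaves a connected induced subgraph. -/
def KConnected {W : Type*} (G : SimpleGraph W) (k : ℕ) : Prop :=
  k + 1 ≤ Nat.card W ∧
    ∀ S : Set W, S.Finite → S.ncard < k → (G.induce (Sᶜ : Set W)).Connected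

/-- Let `d` be a positive integer and `a` the smallest positive integer with
`C(a+1,2) ≥ d`. For every `n ≥ d + a + 2`, the complete graph `K_n` contains two
edge-disjoint spanning subgraphs `T` and `G₀` such that `T` is a spanning tree and
`G₀` is `d`-connected. -/
theorem complete_graph_tree_and_rigid (d a n : ℕ) (hd : 0 < d) (ha : 0 < a)
    (had : d ≤ (a + 1).choose 2)
    (hamin : ∀ b : ℕ, 0 < b → d ≤ (b + 1).choose 2 → a ≤ b)
    (hn : d + a + 2 ≤ n) :
    ∃ T G₀ : SimpleGraph (Fin n),
      T ≤ (⊤ : SimpleGraph (Fin n)) ∧ G₀ ≤ (⊤ : SimpleGraph (Fin n)) ∧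
      T.IsTree ∧ Disjoint T.edgeSet G₀.edgeSet ∧ KConnected G₀ d := by
  classical
  have hne : Nonempty (Fin n) := ⟨⟨0, by omega⟩⟩
  obtain ⟨T, hT, hTree⟩ :=
    (SimpleGraph.Connected.mk (SimpleGraph.pathGraph_preconnected n)).exists_isTree_le
  refine ⟨T, (SimpleGraph.pathGraph n)ᶜ, le_top, le_top, hTree, ?_, ?_, ?_⟩
  · rw [Set.disjoint_left]
    intro e
    induction e using Sym2.ind with
    | _ x y =>
      intro h1 h2
      rw [SimpleGraph.mem_edgeSet] at h1 h2
      exact ((SimpleGraph.compl_adj _ _ _).1 h2).2 (hT h1)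
  · rw [Nat.card_eq_fintype_card, Fintype.card_fin]; omega
  · intro S _ hS
    have hcard : 4 ≤ (Sᶜ : Set (Fin n)).ncard := by
      have := Set.ncard_add_ncard_compl S
      rw [Nat.card_eq_fintype_card, Fintype.card_fin] at this
      omega
    -- any four element cover of the complement is tight
    have key : ∀ F : Finset ℕ, F.card ≤ 3 → ∃ w : Fin n, w ∉ S ∧ (w : ℕ) ∉ F := by
      intro F hF
      by_contra hcon
      push Not at hcon
      have h1 : (Fin.val '' (Sᶜ : Set (Fin n))) ⊆ (F : Set ℕ) := by
        rintro _ ⟨w, hw, rfl⟩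
        exact hcon w hw
      have h2 := Set.ncard_le_ncard h1 F.finite_toSet
      rw [Set.ncard_image_of_injective _ Fin.val_injective, Set.ncard_coe_finset] at h2
      omega
    have adj : ∀ u v : (Sᶜ : Set (Fin n)), (u.1 : ℕ) ≠ v.1 → (u.1 : ℕ) + 1 ≠ v.1 →
        (v.1 : ℕ) + 1 ≠ u.1 →
        (((SimpleGraph.pathGraph n)ᶜ).induce (Sᶜ : Set (Fin n))).Reachable u v := by
      intro u v h1 h2 h3
      apply SimpleGraph.Adj.reachable
      simp only [SimpleGraph.comap_adj, SimpleGraph.compl_adj, SimpleGraph.pathGraph_adj,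
        Function.Embedding.subtype_apply]
      refine ⟨fun h => h1 (by rw [h]), ?_⟩
      omega
    have step : ∀ u v : (Sᶜ : Set (Fin n)), (u.1 : ℕ) + 1 = v.1 →
        (((SimpleGraph.pathGraph n)ᶜ).induce (Sᶜ : Set (Fin n))).Reachable u v := by
      intro u v huv
      -- x is not u, v, u+2 ; y is not u, v, u-1
      obtain ⟨x, hxS, hx⟩ := key {(u.1 : ℕ), (u.1 : ℕ) + 1, (u.1 : ℕ) + 2} Finset.card_le_three
      obtain ⟨y, hyS, hy⟩ := key {(u.1 : ℕ), (u.1 : ℕ) + 1, (u.1 : ℕ) - 1} Finset.card_le_three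
      simp only [Finset.mem_insert, Finset.mem_singleton, not_or] at hx hy
      have hxv := adj ⟨x, hxS⟩ v (by dsimp only; omega) (by dsimp only; omega) (by dsimp only; omega)
      have huy := adj u ⟨y, hyS⟩ (by dsimp only; omega) (by dsimp only; omega) (by dsimp only; omega)
      by_cases hxu : (x : ℕ) + 1 = u.1
      · by_cases hyv : (y : ℕ) = u.1 + 2
        · exact huy.trans ((adj ⟨y, hyS⟩ ⟨x, hxS⟩ (by dsimp only; omega) (by dsimp only; omega)
            (by dsimp only; omega)).trans hxv)
        · exact huy.trans (adj ⟨y, hyS⟩ v (by dsimp only; omega) (by dsimp only; omega)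
            (by dsimp only; omega))
      · exact (adj u ⟨x, hxS⟩ (by dsimp only; omega) (by dsimp only; omega)
            (by dsimp only; omega)).trans hxv
    obtain ⟨w, hw, -⟩ := key ∅ (by simp)
    have : Nonempty (Sᶜ : Set (Fin n)) := ⟨⟨w, hw⟩⟩
    refine SimpleGraph.Connected.mk ?_
    intro u v
    by_cases h0 : (u.1 : ℕ) = v.1
    · have : u = v := Subtype.ext (Fin.ext h0)
      rw [this]
    · by_cases h1 : (u.1 : ℕ) + 1 = v.1
      · exact step u v h1
      · by_cases h2 : (v.1 : ℕ) + 1 = u.1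
        · exact (step v u h2).symm
        · exact adj u v h0 h1 h2
end

section
/- Let d be a positive integer and let a be the smallest positive integer with C(a+1, 2) ≥ d. Let V₁ and V₂ be finite sets with |V₁ ∩ V₂| ≥ d + a + 2, and let G be the simple graph on vertex set V₁ ∪ V₂ whose edges are exactly the pairs of distinct vertices that both lie in V₁ or both lie in V₂ (the union of the complete graphs on V₁ and on V₂). Then G contains two edge-disjoint spanning subgraphs T and G₀ such that T is a spanning tree of G and G₀ is d-connected. -/
/-- Let `d` be a positive integer and `a` the smallest positive integer with
`C(a+1,2) ≥ d`. If `V₁` and `V₂` cover the (finite) vertex set, `|V₁ ∩ V₂| ≥ d + a + 2`,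
and `G` is the union of the complete graphs on `V₁` and on `V₂`, then `G` contains two
edge-disjoint spanning subgraphs `T` and `G₀` such that `T` is a spanning tree of `G` and
`G₀` is `d`-connected. -/
theorem union_of_cliques_tree_and_rigid {V : Type*} [Fintype V] (d a : ℕ)
    (hd : 0 < d) (ha : 0 < a) (had : d ≤ (a + 1).choose 2)
    (hamin : ∀ b : ℕ, 0 < b → d ≤ (b + 1).choose 2 → a ≤ b)
    (V₁ V₂ : Set V) (hcover : V₁ ∪ V₂ = Set.univ)
    (hint : d + a + 2 ≤ (V₁ ∩ V₂).ncard)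
    (G : SimpleGraph V)
    (hG : ∀ u v : V, G.Adj u v ↔
      u ≠ v ∧ ((u ∈ V₁ ∧ v ∈ V₁) ∨ (u ∈ V₂ ∧ v ∈ V₂))) :
    ∃ T G₀ : SimpleGraph V, T ≤ G ∧ G₀ ≤ G ∧
      T.IsTree ∧ Disjoint T.edgeSet G₀.edgeSet ∧ KConnected G₀ d := by
  classical
  set C : Set V := V₁ ∩ V₂ with hC
  have hCfin : C.Finite := Set.toFinite C
  have hn4 : d + 3 ≤ C.ncard := by omega
  obtain ⟨f, hinj, hsurj⟩ : ∃ f : V → ℕ, (∀ u ∈ C, ∀ v ∈ C, f u = f v → u = v) ∧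
      ∀ u ∈ C, ∀ k ≤ f u, ∃ w ∈ C, f w = k := by
    let e : C ≃ Fin (Nat.card C) := Finite.equivFin C
    refine ⟨fun v => if h : v ∈ C then (e ⟨v, h⟩ : ℕ) else 0, ?_, ?_⟩
    · intro u hu v hv h
      simp only [hu, hv, dif_pos] at h
      have := e.injective (Fin.ext h)
      simpa using this
    · intro u hu k hk
      simp only [hu, dif_pos] at hk
      refine ⟨(e.symm ⟨k, lt_of_le_of_lt hk (e ⟨u, hu⟩).2⟩ : C), Subtype.coe_prop _, ?_⟩
      have h3 := e.apply_symm_apply ⟨k, lt_of_le_of_lt hk (e ⟨u, hu⟩).2⟩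
      simp only [Subtype.coe_prop, dif_pos, Subtype.coe_eta]
      exact congrArg Fin.val h3
  have hCne : C.Nonempty := by
    rw [← Set.ncard_pos hCfin]; omega
  obtain ⟨c1, hc1⟩ := hCne
  obtain ⟨c0, hc0, hfc0⟩ := hsurj c1 hc1 0 (Nat.zero_le _)
  have hGC : ∀ u v, u ∈ C → u ≠ v → G.Adj u v := by
    intro u v hu huv
    rw [hG]
    have hv : v ∈ V₁ ∪ V₂ := by rw [hcover]; trivial
    rcases hv with hv | hv
    · exact ⟨huv, Or.inl ⟨hu.1, hv⟩⟩
    · exact ⟨huv, Or.inr ⟨hu.2, hv⟩⟩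
  let H : SimpleGraph V :=
    { Adj := fun u v => (u ∈ C ∧ v ∈ C ∧ (f u = f v + 1 ∨ f v = f u + 1)) ∨
        (u ∉ C ∧ v = c0) ∨ (v ∉ C ∧ u = c0)
      symm := ⟨by intro u v h; grind⟩
      loopless := ⟨by intro u h; grind⟩ }
  have hHadj : ∀ u v, H.Adj u v ↔ ((u ∈ C ∧ v ∈ C ∧ (f u = f v + 1 ∨ f v = f u + 1)) ∨
        (u ∉ C ∧ v = c0) ∨ (v ∉ C ∧ u = c0)) := fun u v => Iff.rfl
  have hHG : H ≤ G := by
    intro u v h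
    have hne := h.ne
    rcases (hHadj u v).1 h with h | h | h
    · exact hGC u v h.1 hne
    · exact (hGC v u (h.2 ▸ hc0) hne.symm).symm
    · exact hGC u v (h.2 ▸ hc0) hne
  have hHconn : H.Connected := by
    have key : ∀ k, ∀ u ∈ C, f u = k → H.Reachable u c0 := by
      intro k
      induction k with
      | zero =>
        intro u hu h
        rw [hinj u hu c0 hc0 (h.trans hfc0.symm)]
      | succ k ih =>
        intro u hu h
        obtain ⟨w, hw, hwk⟩ := hsurj u hu k (by omega)
        have : H.Adj u w := (hHadj u w).2 (Or.inl ⟨hu, hw, by omega⟩)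
        exact this.reachable.trans (ih w hw hwk)
    have key2 : ∀ u, H.Reachable u c0 := by
      intro u
      by_cases hu : u ∈ C
      · exact key _ u hu rfl
      · exact SimpleGraph.Adj.reachable ((hHadj u c0).2 (Or.inr (Or.inl ⟨hu, rfl⟩)))
    haveI : Nonempty V := ⟨c0⟩
    exact ⟨fun u v => (key2 u).trans (key2 v).symm⟩
  obtain ⟨T, hTH, hT⟩ := hHconn.exists_isTree_le
  refine ⟨T, G \ H, hTH.trans hHG, sdiff_le, hT, ?_, ?_, ?_⟩
  · rw [SimpleGraph.disjoint_edgeSet]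
    exact Disjoint.mono_left hTH disjoint_sdiff_self_right
  · have := Set.ncard_le_card C
    omega
  · intro S hS hSd
    have hsub : 4 ≤ (C \ S).ncard := by
      have := Set.le_ncard_diff S C hS
      omega
    have pick : ∀ F : Finset V, F.card < 4 → ∃ w, w ∈ C ∧ w ∉ S ∧ w ∉ F := by
      intro F hF
      obtain ⟨w, hw, hwF⟩ := Set.exists_mem_notMem_of_ncard_lt_ncard
        (s := (F : Set V)) (t := C \ S) (by rw [Set.ncard_coe_finset]; omega)
      exact ⟨w, hw.1, hw.2, by simpa using hwF⟩
    have adjC : ∀ (u v : V) (hu : u ∉ S) (hv : v ∉ S), u ∈ C → v ∈ C → u ≠ v →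
        f u ≠ f v + 1 → f v ≠ f u + 1 →
        ((G \ H).induce Sᶜ).Reachable ⟨u, hu⟩ ⟨v, hv⟩ := by
      intro u v hu hv huC hvC hne h1 h2
      apply SimpleGraph.Adj.reachable
      rw [SimpleGraph.comap_adj, SimpleGraph.sdiff_adj]
      refine ⟨hGC u v huC hne, fun h => ?_⟩
      have := (hHadj u v).1 h
      tauto
    have adjO : ∀ u (hu : u ∉ S), ∃ w, ∃ hw : w ∉ S, w ∈ C ∧
        ((G \ H).induce Sᶜ).Reachable ⟨u, hu⟩ ⟨w, hw⟩ := by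
      intro u hu
      by_cases huC : u ∈ C
      · exact ⟨u, hu, huC, SimpleGraph.Reachable.refl _⟩
      · obtain ⟨w, hwC, hwS, hwF⟩ := pick {c0} (by simp)
        refine ⟨w, hwS, hwC, SimpleGraph.Adj.reachable ?_⟩
        rw [SimpleGraph.comap_adj, SimpleGraph.sdiff_adj]
        have hne : w ≠ u := fun h => huC (h ▸ hwC)
        refine ⟨(hGC w u hwC hne).symm, fun h => ?_⟩
        have := (hHadj u w).1 h
        simp only [Finset.mem_singleton] at hwF
        tauto
    have reachC : ∀ (u v : V) (hu : u ∉ S) (hv : v ∉ S), u ∈ C → v ∈ C →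
        f v = f u + 1 → ((G \ H).induce Sᶜ).Reachable ⟨u, hu⟩ ⟨v, hv⟩ := by
      intro u v hu hv huC hvC h
      obtain ⟨x, hxC, hxS, hxF⟩ := pick {u, v} (lt_of_le_of_lt Finset.card_le_two (by norm_num))
      obtain ⟨y, hyC, hyS, hyF⟩ := pick {u, v, x}
        (lt_of_le_of_lt Finset.card_le_three (by norm_num))
      simp only [Finset.mem_insert, Finset.mem_singleton, not_or] at hxF hyF
      have fxu : f x ≠ f u := fun h => hxF.1 (hinj _ hxC _ huC h)
      have fxv : f x ≠ f v := fun h => hxF.2 (hinj _ hxC _ hvC h)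
      have fyu : f y ≠ f u := fun h => hyF.1 (hinj _ hyC _ huC h)
      have fyv : f y ≠ f v := fun h => hyF.2.1 (hinj _ hyC _ hvC h)
      have fyx : f y ≠ f x := fun h => hyF.2.2 (hinj _ hyC _ hxC h)
      have A : ∀ (p q : V) (hp : p ∉ S) (hq : q ∉ S), p ∈ C → q ∈ C → f p ≠ f q →
          f p ≠ f q + 1 → f q ≠ f p + 1 →
          ((G \ H).induce Sᶜ).Reachable ⟨p, hp⟩ ⟨q, hq⟩ :=
        fun p q hp hq hpC hqC h0 => adjC p q hp hq hpC hqC (fun h => h0 (h ▸ rfl))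
      by_cases ux : f u = f x + 1
      · by_cases vy : f y = f v + 1
        · exact ((A u y hu hyS huC hyC (by omega) (by omega) (by omega)).trans
            (A y x hyS hxS hyC hxC (by omega) (by omega) (by omega))).trans
            (A x v hxS hv hxC hvC (by omega) (by omega) (by omega))
        · exact (A u y hu hyS huC hyC (by omega) (by omega) (by omega)).trans
            (A y v hyS hv hyC hvC (by omega) (by omega) (by omega))
      · by_cases vx : f x = f v + 1
        · by_cases uy : f u = f y + 1
          · exact ((A u x hu hxS huC hxC (by omega) (by omega) (by omega)).trans
              (A x y hxS hyS hxC hyC (by omega) (by omega) (by omega))).trans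
              (A y v hyS hv hyC hvC (by omega) (by omega) (by omega))
          · exact (A u y hu hyS huC hyC (by omega) (by omega) (by omega)).trans
              (A y v hyS hv hyC hvC (by omega) (by omega) (by omega))
        · exact (A u x hu hxS huC hxC (by omega) (by omega) (by omega)).trans
            (A x v hxS hv hxC hvC (by omega) (by omega) (by omega))
    obtain ⟨z, -, hzS, -⟩ := pick ∅ (by simp)
    haveI : Nonempty (Sᶜ : Set V) := ⟨⟨z, hzS⟩⟩
    refine ⟨?_⟩
    rintro ⟨u, hu⟩ ⟨v, hv⟩
    obtain ⟨u', hu', huC, hur⟩ := adjO u hu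
    obtain ⟨v', hv', hvC, hvr⟩ := adjO v hv
    refine (hur.trans ?_).trans hvr.symm
    by_cases h0 : u' = v'
    · subst h0; exact SimpleGraph.Reachable.refl _
    by_cases h1 : f v' = f u' + 1
    · exact reachC _ _ hu' hv' huC hvC h1
    by_cases h2 : f u' = f v' + 1
    · exact (reachC _ _ hv' hu' hvC huC h2).symm
    exact adjC _ _ hu' hv' huC hvC h0 h2 h1
end

section
/- Let c be a positive integer and let G be a c-connected finite simple graph with at least c + 2 vertices. If v is a vertex of G whose neighborhood N_G(v) induces a clique in G, then the graph G − v obtained by deleting v is c-connected. -/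
/-- Let `G` be a `c`-connected finite simple graph with at least `c + 2` vertices. If the
neighborhood of a vertex `v` induces a clique in `G`, then the graph `G − v` obtained by
deleting `v` is `c`-connected. -/
theorem delete_simplicial_vertex {V : Type*} [Fintype V] (c : ℕ) (hc : 0 < c)
    (G : SimpleGraph V) (hG : KConnected G c)
    (hcard : c + 2 ≤ Fintype.card V)
    (v : V) (hclique : G.IsClique (G.neighborSet v)) :
    KConnected (G.induce ({v}ᶜ : Set V)) c := by
  classical
  have hcv : Nat.card ({v}ᶜ : Set V) = Fintype.card V - 1 := by
    rw [Nat.card_coe_set_eq, Set.ncard_compl, Set.ncard_singleton, Nat.card_eq_fintype_card]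
  refine ⟨by omega, ?_⟩
  intro S hS hSc
  set T : Set V := Subtype.val '' S with hT
  have hTc : T.ncard < c := by
    rw [hT, Set.ncard_image_of_injective _ Subtype.val_injective]
    exact hSc
  have hconn := hG.2 T (Set.toFinite _) hTc
  have key : ∀ (a b : (Tᶜ : Set V)) (p : (G.induce (Tᶜ : Set V)).Walk a b),
      ∀ (y : (Sᶜ : Set ({v}ᶜ : Set V))), (y : V) = b →
      ∀ (w : (Sᶜ : Set ({v}ᶜ : Set V))), ((w : V) = a ∨ ((a : V) = v ∧ G.Adj v w)) →
      ((G.induce ({v}ᶜ : Set V)).induce (Sᶜ : Set ({v}ᶜ : Set V))).Reachable w y := by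
    intro a b p
    induction p with
    | nil =>
      intro y hy w hw
      rcases hw with hw | ⟨hw, -⟩
      · have : w = y := Subtype.ext (Subtype.ext (hw.trans hy.symm))
        rw [this]
      · exact absurd (hy.trans hw) y.1.2
    | @cons a a' b h p ih =>
      intro y hy w hw
      have hadj : G.Adj (a : V) (a' : V) := h
      by_cases ha' : (a' : V) = v
      · rcases hw with hw | ⟨hw, -⟩
        · refine ih y hy w (Or.inr ⟨ha', ?_⟩)
          rw [hw, ← ha']
          exact hadj.symm
        · exact absurd (hw.trans ha'.symm) hadj.ne
      · let u : (Sᶜ : Set ({v}ᶜ : Set V)) :=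
          ⟨⟨a', ha'⟩, fun hu => a'.2 ⟨_, hu, rfl⟩⟩
        have hu : (u : V) = a' := rfl
        have h1 := ih y hy u (Or.inl hu)
        by_cases hwu : (w : V) = u
        · have : w = u := Subtype.ext (Subtype.ext hwu)
          rw [this]
          exact h1
        · have h2 : G.Adj (w : V) (u : V) := by
            rcases hw with hw | ⟨hw, hvw⟩
            · rw [hw]
              exact hadj
            · rw [hw] at hadj
              exact hclique hvw hadj hwu
          have h3 : ((G.induce ({v}ᶜ : Set V)).induce
            (Sᶜ : Set ({v}ᶜ : Set V))).Adj w u := h2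
          exact h3.reachable.trans h1
  have hne : Nonempty (Sᶜ : Set ({v}ᶜ : Set V)) := by
    by_contra hcon
    have h0 : (Sᶜ : Set ({v}ᶜ : Set V)) = ∅ := by
      rwa [Set.nonempty_coe_sort, Set.not_nonempty_iff_eq_empty] at hcon
    have h1 : S = Set.univ := Set.compl_empty_iff.mp h0
    rw [h1, Set.ncard_univ] at hSc
    omega
  have hmem : ∀ x : (Sᶜ : Set ({v}ᶜ : Set V)), (x : V) ∈ Tᶜ := by
    rintro x ⟨z, hz, hzx⟩
    exact x.2 (Subtype.ext hzx ▸ hz)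
  refine ⟨fun x y => ?_⟩
  obtain ⟨p⟩ := hconn.preconnected ⟨x, hmem x⟩ ⟨y, hmem y⟩
  exact key _ _ p y rfl x (Or.inl rfl)
end

section
/- For every positive integer k, if G is a (k²+3k+5)-connected finite simple graph, then for every pair of vertices s, t of G there exists a path P in G from s to t such that the graph obtained from G by deleting the edges of P is k-connected. -/
set_option linter.unusedVariables false
set_option linter.unusedSectionVars false
/-- abstract generic rigidity matroid -/
structure Rig (V : Type*) [Fintype V] [DecidableEq V] (k : ℕ) where
  Ind : Finset (Sym2 V) → Prop
  cl : Set (Sym2 V) → Set (Sym2 V)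
  empty : Ind ∅
  mono : ∀ I J, Ind J → I ⊆ J → Ind I
  insert_ind : ∀ I e, Ind I → e ∉ cl I → Ind (insert e I)
  sub_cl : ∀ F, F ⊆ cl F
  cl_le : ∀ F F', F ⊆ cl F' → cl F ⊆ cl F'
  card_le : ∀ I J : Finset (Sym2 V), Ind J → (J : Set (Sym2 V)) ⊆ cl I → J.card ≤ I.card
  zero_ext : ∀ (I : Finset (Sym2 V)) (v : V) (Z : Finset V), Ind I → (∀ e ∈ I, v ∉ e) → v ∉ Z →
    Z.card ≤ k → Ind (I ∪ Z.image (fun z => s(v, z)))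
  one_ext : ∀ (I : Finset (Sym2 V)) (v x y : V) (Z : Finset V), Ind (insert s(x, y) I) →
    s(x, y) ∉ I → (∀ e ∈ I, v ∉ e) → x ≠ y → v ≠ x → v ≠ y → v ∉ Z → x ∉ Z → y ∉ Z →
    Z.card + 1 ≤ k → Ind (I ∪ (insert x (insert y Z)).image (fun z => s(v, z)))
  clos : ∀ (F : Set (Sym2 V)) (v w : V) (Z : Finset V), Z.card = k → v ≠ w → v ∉ Z → w ∉ Z →
    (∀ z ∈ Z, s(v, z) ∈ cl F) → (∀ z ∈ Z, s(w, z) ∈ cl F) →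
    (∀ z ∈ Z, ∀ z' ∈ Z, z ≠ z' → s(z, z') ∈ cl F) → s(v, w) ∈ cl F
  upper : ∀ (I : Finset (Sym2 V)) (X : Finset V), Ind I → (∀ e ∈ I, ∀ v ∈ e, v ∈ X) →
    I.card ≤ k * X.card
  conn : ∀ (F : Set (Sym2 V)) (S A : Finset V) (x y : V), (∀ x y, x ≠ y → s(x, y) ∈ cl F) →
    S.card + 1 ≤ k → x ∈ A → y ∉ A → y ∉ S → Disjoint A S →
    ∃ a ∈ A, ∃ b, b ∉ A ∧ b ∉ S ∧ s(a, b) ∈ F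

namespace RigAux
variable {V : Type*} [Fintype V] [DecidableEq V] {m : ℕ}

/-- rigidity row -/
def row {R : Type*} [AddCommGroup R] (P : V → Fin m → R) : Sym2 V → (V → Fin m → R) :=
  Sym2.lift ⟨fun x y => Pi.single x (P x - P y) + Pi.single y (P y - P x),
    fun x y => add_comm _ _⟩

lemma row_mk {R : Type*} [AddCommGroup R] (P : V → Fin m → R) (x y : V) :
    row P s(x, y) = Pi.single x (P x - P y) + Pi.single y (P y - P x) := rfl

lemma row_apply_notMem (P : V → Fin m → ℝ) (e : Sym2 V) (v : V) (h : v ∉ e) :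
    row P e v = 0 := by
  induction e with
  | h x y =>
    simp only [Sym2.mem_iff, not_or] at h
    simp [row_mk, Pi.single_eq_of_ne h.1, Pi.single_eq_of_ne h.2]

lemma row_congr (P Q : V → Fin m → ℝ) (e : Sym2 V) (h : ∀ v ∈ e, P v = Q v) :
    row P e = row Q e := by
  induction e with
  | h x y =>
    rw [row_mk, row_mk, h x (by simp), h y (by simp)]

lemma row_apply_v (P : V → Fin m → ℝ) (v z : V) (h : v ≠ z) :
    row P s(v, z) v = P v - P z := by
  simp [row_mk, Pi.single_eq_of_ne h]

lemma zero_ext_aux (P : V → Fin m → ℝ) (I : Finset (Sym2 V)) (v : V) (Z : Finset V)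
    (hI : LinearIndepOn ℝ (row P) (I : Set (Sym2 V))) (hv : ∀ e ∈ I, v ∉ e) (hvZ : v ∉ Z)
    (hZ : LinearIndepOn ℝ (fun z => P v - P z) (Z : Set V)) :
    LinearIndepOn ℝ (row P) ((I ∪ Z.image (fun z => s(v, z)) : Finset (Sym2 V)) : Set (Sym2 V)) := by
  rw [linearIndepOn_finset_iff] at *
  intro f hf
  have hdisj : Disjoint I (Z.image (fun z => s(v, z))) := by
    rw [Finset.disjoint_left]
    intro e he he'
    obtain ⟨z, hz, rfl⟩ := Finset.mem_image.1 he'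
    exact hv _ he (by simp)
  have hinj : Set.InjOn (fun z => s(v, z)) (Z : Set V) := by
    intro a _ b _ h
    exact Sym2.congr_right.1 h
  rw [Finset.sum_union hdisj, Finset.sum_image hinj] at hf
  have h1 : ∀ z ∈ Z, f s(v, z) = 0 := by
    apply hZ (fun z => f s(v, z))
    have := congrFun hf v
    simp only [Pi.add_apply, Finset.sum_apply, Pi.smul_apply, Pi.zero_apply] at this
    rw [Finset.sum_eq_zero, zero_add] at this
    · rw [← this]
      apply Finset.sum_congr rfl
      intro z hz
      rw [row_apply_v _ _ _ (by rintro rfl; exact hvZ hz)]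
    · intro e he
      rw [row_apply_notMem _ _ _ (hv e he), smul_zero]
  have h2 : ∀ e ∈ I, f e = 0 := by
    apply hI
    rw [← hf, Finset.sum_eq_zero (s := Z), add_zero]
    intro z hz
    rw [h1 z hz, zero_smul]
  intro e he
  rcases Finset.mem_union.1 he with he | he
  · exact h2 e he
  · obtain ⟨z, hz, rfl⟩ := Finset.mem_image.1 he
    exact h1 z hz

lemma diff_indep (P : V → Fin m → ℝ) (v : V) (Z : Finset V) (hvZ : v ∉ Z)
    (h : LinearIndepOn ℝ P ((insert v Z : Finset V) : Set V)) :
    LinearIndepOn ℝ (fun z => P v - P z) (Z : Set V) := by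
  rw [linearIndepOn_finset_iff] at *
  intro f hf z hz
  have := h (fun u => if u = v then ∑ z ∈ Z, f z else - f u) (by
    rw [Finset.sum_insert hvZ]
    simp only [if_true]
    rw [← hf, Finset.sum_smul, ← Finset.sum_add_distrib]
    apply Finset.sum_congr rfl
    intro z hz
    rw [if_neg (by rintro rfl; exact hvZ hz)]
    rw [smul_sub, neg_smul, sub_eq_add_neg]) z (Finset.mem_insert_of_mem hz)
  rw [if_neg (by rintro rfl; exact hvZ hz)] at this
  simpa using this

lemma one_ext_aux (P : V → Fin m → ℝ) (I : Finset (Sym2 V)) (v x y : V) (Z : Finset V)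
    (hI : LinearIndepOn ℝ (row P) ((insert s(x, y) I : Finset (Sym2 V)) : Set (Sym2 V)))
    (hxyI : s(x, y) ∉ I) (hv : ∀ e ∈ I, v ∉ e) (hxy : x ≠ y) (hvx : v ≠ x) (hvy : v ≠ y)
    (hvZ : v ∉ Z) (hxZ : x ∉ Z) (hyZ : y ∉ Z)
    (hT : LinearIndepOn ℝ P ((insert y (insert x Z) : Finset V) : Set V)) :
    LinearIndepOn ℝ (row (Function.update P v ((1/2 : ℝ) • (P x + P y))))
      ((I ∪ (insert x (insert y Z)).image (fun z => s(v, z)) : Finset (Sym2 V)) : Set (Sym2 V)) := by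
  set Q := Function.update P v ((1/2 : ℝ) • (P x + P y)) with hQ
  have hQn : ∀ u, u ≠ v → Q u = P u := fun u hu => by simp [hQ, hu]
  have hQv : Q v = (1/2 : ℝ) • (P x + P y) := by simp [hQ]
  have hI' : LinearIndepOn ℝ (row Q) ((insert s(x, y) I : Finset (Sym2 V)) : Set (Sym2 V)) := by
    refine hI.congr ?_
    intro e he
    apply row_congr
    intro u hu
    rw [hQn]
    rintro rfl
    simp only [Finset.coe_insert, Set.mem_insert_iff, Finset.mem_coe] at he
    rcases he with rfl | he
    · simp [hvx, hvy] at hu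
    · exact hv e he hu
  have hyxZ : y ∉ insert x Z := by simp [hyZ, hxy.symm]
  have hvxZ : v ∉ insert x Z := by simp [hvZ, hvx]
  have hT' : LinearIndepOn ℝ Q ((insert v (insert x Z) : Finset V) : Set V) := by
    rw [Finset.coe_insert, linearIndepOn_insert (by simpa using hyxZ)] at hT
    have heq : Set.EqOn P Q ((insert x Z : Finset V) : Set V) := by
      intro u hu
      rw [hQn]
      rintro rfl
      exact hvxZ hu
    rw [Finset.coe_insert, linearIndepOn_insert (by simpa using hvxZ)]
    refine ⟨hT.1.congr heq, fun h => hT.2 ?_⟩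
    rw [← heq.image_eq, hQv] at h
    have hx : P x ∈ Submodule.span ℝ (P '' ((insert x Z : Finset V) : Set V)) :=
      Submodule.subset_span ⟨x, by simp, rfl⟩
    have : P y = (2 : ℝ) • ((1/2 : ℝ) • (P x + P y)) - P x := by
      ext i; simp; 
    rw [this]
    exact Submodule.sub_mem _ (Submodule.smul_mem _ _ h) hx
  have h0 := zero_ext_aux Q _ v (insert x Z) hI' (by
    intro e he
    rcases Finset.mem_insert.1 he with rfl | he
    · simp [hvx, hvy]
    · exact hv e he) hvxZ (diff_indep Q v _ hvxZ hT')
  set N := I ∪ (insert x Z).image (fun z => s(v, z)) with hN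
  have e1 : insert s(x, y) I ∪ (insert x Z).image (fun z => s(v, z)) = insert s(x, y) N := by
    rw [hN, Finset.insert_union]
  have e2 : I ∪ (insert x (insert y Z)).image (fun z => s(v, z)) = insert s(v, y) N := by
    rw [Finset.insert_comm, Finset.image_insert]; simp [hN]
  have n1 : s(x, y) ∉ N := by
    simp only [hN, Finset.mem_union, hxyI, Finset.mem_image, false_or, not_exists, not_and]
    intro z hz h
    have : v ∈ s(x, y) := by rw [← h]; simp
    simp [hvx, hvy] at this
  have n2 : s(v, y) ∉ N := by
    simp only [hN, Finset.mem_union, Finset.mem_image, not_or, not_exists, not_and]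
    refine ⟨fun h => hv _ h (by simp), fun z hz h => ?_⟩
    have : z = y := Sym2.congr_right.1 h
    exact hyxZ (this ▸ hz)
  rw [e1, Finset.coe_insert, linearIndepOn_insert (by simpa using n1)] at h0
  rw [e2, Finset.coe_insert, linearIndepOn_insert (by simpa using n2)]
  refine ⟨h0.1, fun h => h0.2 ?_⟩
  have hx : row Q s(v, x) ∈ Submodule.span ℝ (row Q '' (N : Set (Sym2 V))) :=
    Submodule.subset_span ⟨_, by simp [hN], rfl⟩
  have : row Q s(x, y) = (2 : ℝ) • (row Q s(v, y) + row Q s(v, x)) := by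
    funext u
    simp only [row_mk, hQv, hQn x hvx.symm, hQn y hvy.symm]
    by_cases h1 : u = v
    · subst h1
      ext i
      simp [Pi.single_eq_of_ne hvx, Pi.single_eq_of_ne hvy]
      ring
    by_cases h2 : u = x
    · subst h2
      ext i
      simp [Pi.single_eq_of_ne h1, Pi.single_eq_of_ne hxy]
      ring
    by_cases h3 : u = y
    · subst h3
      ext i
      simp [Pi.single_eq_of_ne h1, Pi.single_eq_of_ne h2]
      ring
    simp [Pi.single_eq_of_ne h1, Pi.single_eq_of_ne h2, Pi.single_eq_of_ne h3]
  rw [this]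
  exact Submodule.smul_mem _ _ (Submodule.add_mem _ h hx)

end RigAux

namespace RigAux
variable {V : Type*} [Fintype V] [DecidableEq V] {m : ℕ}

lemma gram_iff {ι μ : Type*} [Fintype ι] [DecidableEq ι] [Fintype μ] (A : Matrix ι μ ℝ) :
    LinearIndependent ℝ A.row ↔ (A * A.transpose).det ≠ 0 := by
  rw [← Matrix.vecMul_injective_iff]
  constructor
  · intro h hd
    obtain ⟨w, hw, hw'⟩ := Matrix.exists_vecMul_eq_zero_iff.2 hd
    apply hw
    apply h
    have h1 : dotProduct (Matrix.vecMul w A) (Matrix.vecMul w A) = 0 := by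
      have h2 := congrArg (fun z => dotProduct z w) hw'
      simp only [zero_dotProduct] at h2
      rw [← Matrix.vecMul_vecMul, ← Matrix.dotProduct_mulVec, Matrix.mulVec_transpose] at h2
      exact h2
    have := dotProduct_self_eq_zero.1 h1
    simpa using this
  · intro hd
    have : Function.Injective (fun w => Matrix.vecMul w (A * A.transpose)) := by
      rw [Matrix.vecMul_injective_iff]
      exact Matrix.linearIndependent_rows_of_det_ne_zero hd
    intro a b hab
    apply this
    simp only at hab ⊢
    rw [← Matrix.vecMul_vecMul, ← Matrix.vecMul_vecMul, hab]

lemma gen_LI {ι μ σ : Type*} [Fintype ι] [Fintype μ] (A : ι → μ → MvPolynomial σ ℝ)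
    (q : σ → ℝ) (h : LinearIndependent ℝ (fun i j => MvPolynomial.eval q (A i j))) :
    ∃ f : MvPolynomial σ ℝ, f ≠ 0 ∧ ∀ p, MvPolynomial.eval p f ≠ 0 →
      LinearIndependent ℝ (fun i j => MvPolynomial.eval p (A i j)) := by
  classical
  let B : Matrix ι μ (MvPolynomial σ ℝ) := A
  have key : ∀ p, MvPolynomial.eval p (B * B.transpose).det =
      ((B.map (MvPolynomial.eval p)) * (B.map (MvPolynomial.eval p)).transpose).det := by
    intro p
    rw [RingHom.map_det, RingHom.mapMatrix_apply, Matrix.map_mul, Matrix.transpose_map]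
  refine ⟨(B * B.transpose).det, ?_, ?_⟩
  · intro h0
    have := key q
    rw [h0, map_zero] at this
    exact (gram_iff _).1 h this.symm
  · intro p hp
    rw [key] at hp
    exact (gram_iff _).2 hp

lemma exists_generic {ι σ : Type*} [Fintype ι] (C : ι → (σ → ℝ) → Prop)
    (h : ∀ i, (∃ q, C i q) → ∃ f : MvPolynomial σ ℝ, f ≠ 0 ∧ ∀ p, MvPolynomial.eval p f ≠ 0 → C i p) :
    ∃ p, ∀ i, (∃ q, C i q) → C i p := by
  classical
  have h' : ∀ i, ∃ f : MvPolynomial σ ℝ, f ≠ 0 ∧ ((∃ q, C i q) →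
      ∀ p, MvPolynomial.eval p f ≠ 0 → C i p) := by
    intro i
    by_cases hi : ∃ q, C i q
    · obtain ⟨f, hf, hf'⟩ := h i hi
      exact ⟨f, hf, fun _ => hf'⟩
    · exact ⟨1, one_ne_zero, fun h => absurd h hi⟩
  choose f hf hf' using h'
  have hne : ∏ i, f i ≠ 0 := Finset.prod_ne_zero_iff.2 fun i _ => hf i
  have : ∃ p, MvPolynomial.eval p (∏ i, f i) ≠ 0 := by
    by_contra! hcon
    exact hne (MvPolynomial.funext fun p => by rw [hcon p, map_zero])
  obtain ⟨p, hp⟩ := this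
  rw [map_prod, Finset.prod_ne_zero_iff] at hp
  exact ⟨p, fun i hi => hf' i hi p (hp i (Finset.mem_univ i))⟩

/-- homogenised points -/
def hat {R : Type*} [CommRing R] {k : ℕ} (p : V × Fin k → R) : V → Fin (k + 1) → R :=
  fun v => Fin.cons 1 (fun i => p (v, i))

lemma hat_eval {k : ℕ} (p : V × Fin k → ℝ) (v : V) (i : Fin (k + 1)) :
    MvPolynomial.eval p (hat (fun j => (MvPolynomial.X j : MvPolynomial (V × Fin k) ℝ)) v i)
      = hat p v i := by
  unfold hat
  refine Fin.cases ?_ (fun i => ?_) i <;> simp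

lemma row_eval {k : ℕ} (p : V × Fin k → ℝ) (e : Sym2 V) (u : V) (i : Fin (k + 1)) :
    MvPolynomial.eval p (row (hat (fun j => (MvPolynomial.X j : MvPolynomial (V × Fin k) ℝ))) e u i)
      = row (hat p) e u i := by
  induction e with
  | h x y =>
    simp only [row_mk, Pi.add_apply, map_add]
    congr 1
    · by_cases h : u = x
      · subst h; simp [hat_eval]
      · simp [Pi.single_eq_of_ne h]
    · by_cases h : u = y
      · subst h; simp [hat_eval]
      · simp [Pi.single_eq_of_ne h]

lemma uncurry_LI {ι : Type*} {k : ℕ} (f : ι → V → Fin (k+1) → ℝ) :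
    LinearIndependent ℝ f ↔ LinearIndependent ℝ (fun i (j : V × Fin (k+1)) => f i j.1 j.2) := by
  rw [← LinearMap.linearIndependent_iff (LinearEquiv.curry ℝ ℝ V (Fin (k+1))).symm.toLinearMap
    (LinearEquiv.ker _)]
  rfl

lemma indep_T (k : ℕ) (T : Finset V) (hT : T.card ≤ k + 1) :
    ∃ p : V × Fin k → ℝ, LinearIndepOn ℝ (hat p) (T : Set V) := by
  obtain ⟨f, hf⟩ : ∃ f : V → ℝ, Function.Injective f :=
    ⟨fun v => ((Fintype.equivFin V v : ℕ) : ℝ), fun a b h => by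
      have h' : (Fintype.equivFin V a : ℕ) = (Fintype.equivFin V b : ℕ) := by
        dsimp only at h
        exact_mod_cast h
      exact (Fintype.equivFin V).injective (Fin.ext h')⟩
  refine ⟨fun j => f j.1 ^ ((j.2 : ℕ) + 1), ?_⟩
  have hh : ∀ v i, hat (fun j : V × Fin k => f j.1 ^ ((j.2 : ℕ) + 1)) v i = f v ^ (i : ℕ) := by
    intro v i
    unfold hat
    refine Fin.cases ?_ (fun i => ?_) i <;> simp
  rw [linearIndepOn_finset_iff]
  intro c hc
  have hpow : ∀ i : ℕ, i < k + 1 → ∑ v ∈ T, c v * f v ^ i = 0 := by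
    intro i hi
    have := congrFun hc ⟨i, hi⟩
    simpa [hh] using this
  let e := T.equivFin
  have := Matrix.eq_zero_of_forall_pow_sum_mul_pow_eq_zero (R := ℝ) (n := T.card)
    (f := fun j => f (e.symm j)) (v := fun j => c (e.symm j))
    (fun a b h => by simpa using Subtype.ext (hf h)) (fun i => by
      rw [← hpow i (by omega), ← Finset.sum_coe_sort T, ← e.symm.sum_comp])
  intro v hv
  have := congrFun this (e ⟨v, hv⟩)
  simpa using this

lemma exists_P (V : Type*) [Fintype V] [DecidableEq V] (k : ℕ) : ∃ P : V → Fin (k + 1) → ℝ, (∀ v, P v 0 = 1) ∧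
    (∀ T : Finset V, T.card ≤ k + 1 → LinearIndepOn ℝ P (T : Set V)) ∧
    ∀ (I : Finset (Sym2 V)) (Q : V → Fin (k + 1) → ℝ), (∀ v, Q v 0 = 1) →
      LinearIndepOn ℝ (row Q) (I : Set (Sym2 V)) → LinearIndepOn ℝ (row P) (I : Set (Sym2 V)) := by
  obtain ⟨p, hp⟩ := exists_generic (ι := Finset V ⊕ Finset (Sym2 V)) (σ := V × Fin k)
    (fun i p => match i with
      | Sum.inl T => LinearIndepOn ℝ (hat p) (T : Set V)
      | Sum.inr I => LinearIndepOn ℝ (row (hat p)) (I : Set (Sym2 V))) (by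
    rintro (T | I) ⟨q, hq⟩
    · obtain ⟨f, hf, h⟩ := gen_LI (ι := (T : Set V)) (μ := Fin (k+1)) (fun v i =>
        hat (fun j => (MvPolynomial.X j : MvPolynomial (V × Fin k) ℝ)) v i) q (by
          simp only [hat_eval]; exact hq)
      refine ⟨f, hf, fun p hp => ?_⟩
      have := h p hp
      simp only [hat_eval] at this
      exact this
    · obtain ⟨f, hf, h⟩ := gen_LI (ι := (I : Set (Sym2 V))) (μ := V × Fin (k+1)) (fun e i =>
        row (hat (fun j => (MvPolynomial.X j : MvPolynomial (V × Fin k) ℝ))) e i.1 i.2) q (by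
          simp only [row_eval]; exact (uncurry_LI _).1 hq)
      refine ⟨f, hf, fun p hp => ?_⟩
      have := h p hp
      simp only [row_eval] at this
      exact (uncurry_LI _).2 this)
  refine ⟨hat p, fun v => by simp [hat], fun T hT => hp (Sum.inl T) (indep_T k T hT),
    fun I Q hQ hI => hp (Sum.inr I) ⟨fun j => Q j.1 j.2.succ, ?_⟩⟩
  have : hat (fun j : V × Fin k => Q j.1 j.2.succ) = Q := by
    funext v i
    unfold hat
    refine Fin.cases ?_ (fun i => ?_) i <;> simp [hQ]
  rw [this]
  exact hI

end RigAux

namespace RigAux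
variable {V : Type*} [Fintype V] [DecidableEq V] {m : ℕ}

lemma card_le_aux {α E : Type*} [DecidableEq α] [AddCommGroup E] [Module ℝ E] (r : α → E)
    (I J : Finset α)
    (hJ : LinearIndepOn ℝ r (J : Set α))
    (h : ∀ e ∈ J, r e ∈ Submodule.span ℝ (r '' (I : Set α))) : J.card ≤ I.card := by
  classical
  have h1 : LinearIndependent ℝ (fun e : (J : Set α) =>
      (⟨r e, h e e.2⟩ : Submodule.span ℝ (r '' (I : Set α)))) :=
    LinearIndependent.of_comp (Submodule.subtype _) hJ
  have : FiniteDimensional ℝ (Submodule.span ℝ (r '' (I : Set α))) :=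
    FiniteDimensional.span_of_finite ℝ (I.finite_toSet.image r)
  have h2 := h1.fintype_card_le_finrank
  have h3 : Module.finrank ℝ (Submodule.span ℝ (r '' (I : Set α))) ≤ (I.image r).card := by
    have := finrank_span_finset_le_card (R := ℝ) (I.image r)
    rwa [Finset.coe_image] at this
  have h4 : (I.image r).card ≤ I.card := Finset.card_image_le
  simp at h2
  omega

lemma clos_aux {k : ℕ} (P : V → Fin (k+1) → ℝ) (hP : ∀ v, P v 0 = 1)
    (hT : ∀ T : Finset V, T.card ≤ k + 1 → LinearIndepOn ℝ P (T : Set V))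
    (W : Submodule ℝ (V → Fin (k+1) → ℝ)) (v w : V) (Z : Finset V) (hZ : Z.card = k)
    (hvw : v ≠ w) (hvZ : v ∉ Z) (hwZ : w ∉ Z)
    (h1 : ∀ z ∈ Z, row P s(v, z) ∈ W) (h2 : ∀ z ∈ Z, row P s(w, z) ∈ W)
    (h3 : ∀ z ∈ Z, ∀ z' ∈ Z, z ≠ z' → row P s(z, z') ∈ W) : row P s(v, w) ∈ W := by
  classical
  have hwv : v ∉ insert w Z := by simp [hvw, hvZ]
  set T := insert v (insert w Z) with hTd
  have hcard : T.card = k + 2 := by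
    rw [hTd, Finset.card_insert_of_notMem hwv, Finset.card_insert_of_notMem hwZ, hZ]
  have hdep : ¬ LinearIndepOn ℝ P (T : Set V) := by
    intro h
    have := LinearIndependent.fintype_card_le_finrank h
    simp at this
    omega
  rw [linearIndepOn_finset_iff] at hdep
  push Not at hdep
  obtain ⟨l, hl, u, huT, hu⟩ := hdep
  have hne : ∀ x ∈ T, l x ≠ 0 := by
    intro x hx hx0
    have := hT (T.erase x) (by rw [Finset.card_erase_of_mem hx, hcard]; omega)
    rw [linearIndepOn_finset_iff] at this
    have h0 := this l (by
      rw [← hl, ← Finset.add_sum_erase T _ hx, hx0, zero_smul, zero_add])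
    apply hu
    by_cases hux : u = x
    · rw [hux, hx0]
    · exact h0 u (Finset.mem_erase.2 ⟨hux, huT⟩)
  have hs0 : ∑ j ∈ T, l j = 0 := by
    have := congrFun hl 0
    simpa [hP] using this
  have hrow : ∀ i j, row P s(i, j) = Pi.single i (P i - P j) + Pi.single j (P j - P i) :=
    fun i j => rfl
  have hhalf : ∀ i ∈ T, ∑ j ∈ T, l j • (P i - P j) = 0 := by
    intro i _
    simp only [smul_sub]
    rw [Finset.sum_sub_distrib, ← Finset.sum_smul, hs0, hl]
    simp
  have hA : ∑ i ∈ T, ∑ j ∈ T, (l i * l j) • (Pi.single i (P i - P j) : V → Fin (k+1) → ℝ) = 0 := by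
    apply Finset.sum_eq_zero
    intro i hi
    have : ∀ j, (l i * l j) • (Pi.single i (P i - P j) : V → Fin (k+1) → ℝ)
        = l i • Pi.single i (l j • (P i - P j)) := by
      intro j
      rw [mul_smul, ← Pi.single_smul]
    simp only [this]
    rw [← Finset.smul_sum]
    have h5 : ∑ j ∈ T, (Pi.single i (l j • (P i - P j)) : V → Fin (k+1) → ℝ)
        = Pi.single i (∑ j ∈ T, l j • (P i - P j)) :=
      (map_sum (AddMonoidHom.single (fun _ : V => Fin (k+1) → ℝ) i) _ _).symm
    rw [h5, hhalf i hi]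
    simp
  have hsum : ∑ i ∈ T, ∑ j ∈ T, (l i * l j) • row P s(i, j) = 0 := by
    simp only [hrow, smul_add, Finset.sum_add_distrib]
    rw [hA, zero_add, Finset.sum_comm]
    simpa only [mul_comm] using hA
  have hpair : ∀ i ∈ T, ∀ j ∈ T, ¬ (i = v ∧ j = w) → ¬ (i = w ∧ j = v) → row P s(i, j) ∈ W := by
    intro i hi j hj n1 n2
    by_cases hij : i = j
    · subst hij
      have : row P s(i, i) = 0 := by rw [hrow]; simp
      rw [this]; exact W.zero_mem
    simp only [hTd, Finset.mem_insert] at hi hj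
    rcases hi with rfl | rfl | hi <;> rcases hj with rfl | rfl | hj
    · exact absurd rfl hij
    · exact absurd ⟨rfl, rfl⟩ n1
    · exact h1 _ hj
    · exact absurd ⟨rfl, rfl⟩ n2
    · exact absurd rfl hij
    · exact h2 _ hj
    · rw [Sym2.eq_swap]; exact h1 _ hi
    · rw [Sym2.eq_swap]; exact h2 _ hi
    · exact h3 _ hi _ hj hij
  have hvT : v ∈ T := by simp [hTd]
  have hwT : w ∈ T := by simp [hTd]
  rw [← Finset.sum_product'] at hsum
  rw [← Finset.add_sum_erase _ _ (Finset.mk_mem_product hvT hwT),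
    ← Finset.add_sum_erase _ _ (show (w, v) ∈ (T ×ˢ T).erase (v, w) by
      simp [hvT, hwT, hvw.symm])] at hsum
  simp only at hsum
  have hrest : ∑ x ∈ ((T ×ˢ T).erase (v, w)).erase (w, v), (l x.1 * l x.2) • row P s(x.1, x.2) ∈ W := by
    apply Submodule.sum_mem
    rintro ⟨i, j⟩ hx
    simp only [Finset.mem_erase, Finset.mem_product, ne_eq, Prod.mk.injEq] at hx
    exact W.smul_mem _ (hpair i hx.2.2.1 j hx.2.2.2 hx.2.1 hx.1)
  rw [Sym2.eq_swap (a := w) (b := v), ← add_assoc, ← add_smul] at hsum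
  have hmem : (l v * l w + l w * l v) • row P s(v, w) ∈ W := by
    rw [eq_neg_of_add_eq_zero_left hsum]
    exact W.neg_mem hrest
  have hc : l v * l w + l w * l v ≠ 0 := by
    have := mul_ne_zero (hne v hvT) (hne w hwT)
    intro h
    apply this
    linarith [mul_comm (l v) (l w)]
  exact (W.smul_mem_iff hc).1 hmem

lemma conn_aux {k : ℕ} (P : V → Fin (k+1) → ℝ)
    (hT : ∀ T : Finset V, T.card ≤ k + 1 → LinearIndepOn ℝ P (T : Set V))
    (F : Set (Sym2 V)) (S A : Finset V) (x y : V)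
    (hxy' : row P s(x, y) ∈ Submodule.span ℝ (row P '' F))
    (hS : S.card + 1 ≤ k) (hx : x ∈ A) (hy : y ∉ A) (hyS : y ∉ S) (hAS : Disjoint A S) :
    ∃ a ∈ A, ∃ b, b ∉ A ∧ b ∉ S ∧ s(a, b) ∈ F := by
  classical
  by_contra! hcon
  have hxS : x ∉ S := fun h => Finset.disjoint_left.1 hAS hx h
  have hxy : x ≠ y := by rintro rfl; exact hy hx
  have hx1 : x ∉ insert y S := by simp [hxy, hxS]
  have hy1 : y ∉ insert x S := by simp [hxy.symm, hyS]
  have c1 : (insert x (insert y S)).card = S.card + 2 := by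
    rw [Finset.card_insert_of_notMem hx1, Finset.card_insert_of_notMem hyS]
  have c2 : (insert y (insert x S)).card = S.card + 2 := by
    rw [Finset.card_insert_of_notMem hy1, Finset.card_insert_of_notMem hxS]
  have l1 := hT _ (by omega : (insert x (insert y S)).card ≤ k + 1)
  have l2 := hT _ (by omega : (insert y (insert x S)).card ≤ k + 1)
  rw [Finset.coe_insert, linearIndepOn_insert (by exact_mod_cast hx1)] at l1
  rw [Finset.coe_insert, linearIndepOn_insert (by exact_mod_cast hy1)] at l2
  obtain ⟨α, hαx, hα⟩ := Submodule.exists_le_ker_of_notMem l1.2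
  obtain ⟨β, hβy, hβ⟩ := Submodule.exists_le_ker_of_notMem l2.2
  have αz : ∀ u ∈ insert y S, α (P u) = 0 := fun u hu =>
    hα (Submodule.subset_span ⟨u, by exact_mod_cast hu, rfl⟩)
  have βz : ∀ u ∈ insert x S, β (P u) = 0 := fun u hu =>
    hβ (Submodule.subset_span ⟨u, by exact_mod_cast hu, rfl⟩)
  let φ : (V → Fin (k+1) → ℝ) →ₗ[ℝ] ℝ :=
    ∑ u ∈ A, ((β (P u)) • (α ∘ₗ LinearMap.proj u) - (α (P u)) • (β ∘ₗ LinearMap.proj u))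
  have φs : ∀ i (q : Fin (k+1) → ℝ), φ (Pi.single i q) =
      if i ∈ A then β (P i) * α q - α (P i) * β q else 0 := by
    intro i q
    simp only [φ, LinearMap.sum_apply, LinearMap.sub_apply, LinearMap.smul_apply,
      LinearMap.comp_apply, LinearMap.proj_apply, smul_eq_mul]
    split_ifs with hi
    · rw [Finset.sum_eq_single i]
      · simp
      · intro b _ hb
        simp [Pi.single_eq_of_ne hb]
      · intro h; exact absurd hi h
    · apply Finset.sum_eq_zero
      intro u hu
      have : u ≠ i := by rintro rfl; exact hi hu
      simp [Pi.single_eq_of_ne this]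
  have φr : ∀ i j, φ (row P s(i, j)) = (if i ∈ A then β (P i) * α (P i - P j) - α (P i) * β (P i - P j) else 0)
      + (if j ∈ A then β (P j) * α (P j - P i) - α (P j) * β (P j - P i) else 0) := by
    intro i j
    rw [row_mk, map_add, φs, φs]
  have hFz : Submodule.span ℝ (row P '' F) ≤ LinearMap.ker φ := by
    rw [Submodule.span_le]
    rintro _ ⟨e, he, rfl⟩
    induction e with
    | h i j =>
      simp only [SetLike.mem_coe, LinearMap.mem_ker]
      rw [φr]
      have hsep : ∀ a b, s(a, b) ∈ F → a ∈ A → b ∉ A → b ∈ S := by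
        intro a b hab ha hb
        by_contra hbS
        exact hcon a ha b hb hbS hab
      by_cases hi : i ∈ A <;> by_cases hj : j ∈ A
      · simp only [hi, hj, if_true, map_sub]; ring
      · have := hsep i j he hi hj
        simp only [hi, hj, if_true, if_false, map_sub, αz j (Finset.mem_insert_of_mem this),
          βz j (Finset.mem_insert_of_mem this)]; ring
      · have := hsep j i (by rwa [Sym2.eq_swap]) hj hi
        simp only [hi, hj, if_true, if_false, map_sub, αz i (Finset.mem_insert_of_mem this),
          βz i (Finset.mem_insert_of_mem this)]; ring
      · simp [hi, hj]
  have := hFz hxy'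
  rw [LinearMap.mem_ker, φr] at this
  simp only [hx, hy, if_true, if_false, map_sub, αz y (Finset.mem_insert_self _ _),
    βz x (Finset.mem_insert_self _ _)] at this
  have h' : α (P x) * β (P y) = 0 := by linarith
  exact (mul_ne_zero hαx hβy) h'

lemma upper_aux {k : ℕ} (P : V → Fin (k+1) → ℝ) (hP : ∀ v, P v 0 = 1)
    (I : Finset (Sym2 V)) (X : Finset V) (hI : LinearIndepOn ℝ (row P) (I : Set (Sym2 V)))
    (hX : ∀ e ∈ I, ∀ v ∈ e, v ∈ X) : I.card ≤ k * X.card := by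
  classical
  let g : V × Fin k → (V → Fin (k+1) → ℝ) := fun j => Pi.single j.1 (Pi.single j.2.succ 1)
  have key : ∀ e ∈ I, row P e ∈ Submodule.span ℝ (g '' ((X ×ˢ Finset.univ : Finset (V × Fin k)) : Set (V × Fin k))) := by
    intro e he
    have hs : ∀ x ∈ X, ∀ q : Fin (k+1) → ℝ, q 0 = 0 → (Pi.single x q : V → Fin (k+1) → ℝ) ∈
        Submodule.span ℝ (g '' ((X ×ˢ Finset.univ : Finset (V × Fin k)) : Set (V × Fin k))) := by
      intro x hx q hq
      have : (Pi.single x q : V → Fin (k+1) → ℝ) = ∑ i : Fin k, q i.succ • g (x, i) := by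
        funext u
        by_cases hu : u = x
        · subst hu
          funext a
          simp only [Pi.single_eq_same, Finset.sum_apply, Pi.smul_apply, g, smul_eq_mul]
          refine Fin.cases ?_ (fun a => ?_) a
          · simp [hq]
          · simp [Pi.single_apply]
        · simp [g, Pi.single_eq_of_ne hu, Finset.sum_apply]
      rw [this]
      refine Submodule.sum_mem _ fun i _ => Submodule.smul_mem _ _ (Submodule.subset_span ⟨(x, i), ?_, rfl⟩)
      simp [hx]
    have hXe := hX e he
    induction e with
    | h x y =>
      rw [row_mk]
      exact Submodule.add_mem _ (hs x (hXe x (by simp)) _ (by simp [hP]))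
        (hs y (hXe y (by simp)) _ (by simp [hP]))
  let r : Sym2 V ⊕ (V × Fin k) → (V → Fin (k+1) → ℝ) := Sum.elim (row P) g
  have := card_le_aux r ((X ×ˢ Finset.univ).map ⟨Sum.inr, Sum.inr_injective⟩)
    (I.map ⟨Sum.inl, Sum.inl_injective⟩) (by
      rw [Finset.coe_map]
      exact LinearIndepOn.image_of_comp Sum.inl r hI) (by
      intro e he
      obtain ⟨e, he', rfl⟩ := Finset.mem_map.1 he
      have := key e he'
      rw [Finset.coe_map, ← Set.image_comp]
      exact this)
  simp only [Finset.card_map, Finset.card_product, Finset.card_univ, Fintype.card_fin] at this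
  rw [mul_comm]; exact this

lemma diff_indep' {k : ℕ} (P : V → Fin (k+1) → ℝ)
    (hT : ∀ T : Finset V, T.card ≤ k + 1 → LinearIndepOn ℝ P (T : Set V))
    (v : V) (Z : Finset V) (hvZ : v ∉ Z) (hZ : Z.card ≤ k) :
    LinearIndepOn ℝ (fun z => P v - P z) (Z : Set V) :=
  diff_indep P v Z hvZ (hT _ (by rw [Finset.card_insert_of_notMem hvZ]; omega))

theorem exists_rig (V : Type*) [Fintype V] [DecidableEq V] (k : ℕ) : Nonempty (Rig V k) := by
  obtain ⟨P, hP, hT, hgen⟩ := exists_P V k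
  refine ⟨⟨fun I => LinearIndepOn ℝ (row P) (I : Set (Sym2 V)),
    fun F => {e | row P e ∈ Submodule.span ℝ (row P '' F)}, ?_, ?_, ?_, ?_, ?_, ?_, ?_, ?_, ?_, ?_, ?_⟩⟩
  · simp
  · intro I J hJ hIJ
    exact hJ.mono (by exact_mod_cast hIJ)
  · intro I e hI he
    rw [Finset.coe_insert]
    exact hI.insert he
  · intro F e he
    exact Submodule.subset_span ⟨e, he, rfl⟩
  · intro F F' h e he
    have : Submodule.span ℝ (row P '' F) ≤ Submodule.span ℝ (row P '' F') := by
      rw [Submodule.span_le]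
      rintro _ ⟨e, he, rfl⟩
      exact h he
    exact this he
  · intro I J hJ h
    exact card_le_aux _ I J hJ (fun e he => h he)
  · intro I v Z hI hv hvZ hZ
    exact zero_ext_aux P I v Z hI hv hvZ (diff_indep' P hT v Z hvZ hZ)
  · intro I v x y Z hI hxyI hv hxy hvx hvy hvZ hxZ hyZ hZ
    refine hgen _ _ ?_ (one_ext_aux P I v x y Z hI hxyI hv hxy hvx hvy hvZ hxZ hyZ (hT _ ?_))
    · intro u
      by_cases hu : u = v
      · subst hu
        simp [hP]; norm_num
      · simp [hu, hP]
    · rw [Finset.card_insert_of_notMem (by simp [hyZ, hxy.symm]), Finset.card_insert_of_notMem hxZ]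
      omega
  · intro F v w Z hZ hvw hvZ hwZ h1 h2 h3
    exact clos_aux P hP hT (Submodule.span ℝ (row P '' F)) v w Z hZ hvw hvZ hwZ h1 h2 h3
  · intro I X hI hX
    exact upper_aux P hP I X hI hX
  · intro F S A x y h hS hx hy hyS hAS
    exact conn_aux P hT F S A x y (h x y (by rintro rfl; exact hy hx)) hS hx hy hyS hAS

end RigAux

namespace RigAux

section generic
variable {α : Type*} [DecidableEq α]

open Classical in
/-- rank -/
noncomputable def rk (Ind : Finset α → Prop) (A : Finset α) : ℕ :=
  (A.powerset.filter Ind).sup Finset.card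

lemma le_rk {Ind : Finset α → Prop} {I A : Finset α} (hI : Ind I) (h : I ⊆ A) :
    I.card ≤ rk Ind A := by
  classical
  unfold rk
  exact Finset.le_sup (f := Finset.card) (by simp [hI, h])

lemma exists_basis {Ind : Finset α → Prop} (h0 : Ind ∅) (A : Finset α) :
    ∃ I ⊆ A, Ind I ∧ I.card = rk Ind A := by
  classical
  obtain ⟨I, hI, h⟩ := Finset.exists_mem_eq_sup (A.powerset.filter Ind) ⟨∅, by simp [h0]⟩ Finset.card
  simp only [Finset.mem_filter, Finset.mem_powerset] at hI
  exact ⟨I, hI.1, hI.2, h.symm⟩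

/-- augmentation property -/
def Aug (Ind : Finset α → Prop) : Prop :=
  ∀ I J : Finset α, Ind I → Ind J → I.card < J.card → ∃ e ∈ J, e ∉ I ∧ Ind (insert e I)

lemma extend_basis {Ind : Finset α → Prop} (haug : Aug Ind) (A : Finset α) :
    ∀ (n : ℕ) (I : Finset α), Ind I → I ⊆ A → rk Ind A ≤ I.card + n →
      ∃ J, I ⊆ J ∧ J ⊆ A ∧ Ind J ∧ J.card = rk Ind A := by
  intro n
  induction n with
  | zero =>
    intro I hI hIA h
    exact ⟨I, subset_rfl, hIA, hI, le_antisymm (le_rk hI hIA) (by omega)⟩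
  | succ n ih =>
    intro I hI hIA h
    by_cases hc : rk Ind A ≤ I.card
    · exact ⟨I, subset_rfl, hIA, hI, le_antisymm (le_rk hI hIA) hc⟩
    · obtain ⟨B, hBA, hB, hBc⟩ : ∃ B ⊆ A, Ind B ∧ B.card = rk Ind A := by
        classical
        obtain ⟨I, hI, h⟩ := Finset.exists_mem_eq_sup (A.powerset.filter Ind) ⟨I, by simp [hI, hIA]⟩ Finset.card
        simp only [Finset.mem_filter, Finset.mem_powerset] at hI
        exact ⟨I, hI.1, hI.2, h.symm⟩
      obtain ⟨e, heB, heI, he⟩ := haug I B hI hB (by omega)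
      obtain ⟨J, h1, h2, h3, h4⟩ := ih (insert e I) he
        (Finset.insert_subset (hBA heB) hIA) (by rw [Finset.card_insert_of_notMem heI]; omega)
      exact ⟨J, (Finset.subset_insert e I).trans h1, h2, h3, h4⟩

lemma insert_of_rk_lt {Ind : Finset α → Prop} (haug : Aug Ind)
    (hmono : ∀ I J, Ind J → I ⊆ J → Ind I) {A I : Finset α} {e : α}
    (h : rk Ind A < rk Ind (insert e A)) (hI : Ind I) (hIA : I ⊆ A) : Ind (insert e I) := by
  obtain ⟨J, h1, h2, h3, h4⟩ := extend_basis haug (insert e A) (rk Ind (insert e A)) I hI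
    (hIA.trans (Finset.subset_insert e A)) (by omega)
  have he : e ∈ J := by
    by_contra he
    have : J ⊆ A := fun x hx => by
      rcases Finset.mem_insert.1 (h2 hx) with rfl | h
      · exact absurd hx he
      · exact h
    have := le_rk h3 this
    omega
  exact hmono _ _ h3 (Finset.insert_subset he h1)

lemma step {A B : Finset α → Prop} (hA : Aug A) (hB : ∀ I J, B J → I ⊆ J → B I)
    (I1 I2 J1 J2 : Finset α) (a1 : A I1) (b2 : B I2) (hd : Disjoint I1 I2) (aJ : A J1)
    (hJ : Disjoint J1 J2) (hlt : I1.card < J1.card) :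
    (∃ e ∈ J1, e ∉ I1 ∧ e ∉ I2 ∧ A (insert e I1)) ∨
    ∃ I1' I2', A I1' ∧ B I2' ∧ Disjoint I1' I2' ∧ I1' ∪ I2' = I1 ∪ I2 ∧
      (I1' ∩ J1).card + (I2' ∩ J2).card = (I1 ∩ J1).card + (I2 ∩ J2).card + 1 := by
  obtain ⟨e, heJ, heI, he⟩ := hA I1 J1 a1 aJ hlt
  by_cases he2 : e ∈ I2
  · right
    refine ⟨insert e I1, I2.erase e, he, hB _ _ b2 (Finset.erase_subset _ _), ?_, ?_, ?_⟩
    · rw [Finset.disjoint_insert_left]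
      exact ⟨Finset.notMem_erase _ _, hd.mono_right (Finset.erase_subset _ _)⟩
    · ext x
      simp only [Finset.mem_union, Finset.mem_insert, Finset.mem_erase]
      by_cases hx : x = e
      · subst hx; simp [he2]
      · simp [hx]
    · have h1 : (insert e I1 ∩ J1).card = (I1 ∩ J1).card + 1 := by
        rw [Finset.insert_inter_of_mem heJ, Finset.card_insert_of_notMem (by simp [heI])]
      have h2 : I2.erase e ∩ J2 = I2 ∩ J2 := by
        have : e ∉ J2 := Finset.disjoint_left.1 hJ heJ
        rw [Finset.erase_inter, Finset.erase_eq_of_notMem]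
        simp [this]
      rw [h1, h2]; omega
  · left
    exact ⟨e, heJ, heI, he2, he⟩

/-- union of independence systems -/
def UInd (A B : Finset α → Prop) (I : Finset α) : Prop :=
  ∃ I1 I2, A I1 ∧ B I2 ∧ Disjoint I1 I2 ∧ I1 ∪ I2 = I

lemma UInd_mono {A B : Finset α → Prop} (hA : ∀ I J, A J → I ⊆ J → A I)
    (hB : ∀ I J, B J → I ⊆ J → B I) : ∀ I J, UInd A B J → I ⊆ J → UInd A B I := by
  rintro I _ ⟨J1, J2, a, b, hd, rfl⟩ hI
  refine ⟨I ∩ J1, I ∩ J2, hA _ _ a Finset.inter_subset_right, hB _ _ b Finset.inter_subset_right,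
    hd.mono Finset.inter_subset_right Finset.inter_subset_right, ?_⟩
  rw [← Finset.inter_union_distrib_left]
  exact Finset.inter_eq_left.2 hI

lemma UInd_aug {A B : Finset α → Prop} (hA : Aug A) (hB : Aug B)
    (mA : ∀ I J, A J → I ⊆ J → A I) (mB : ∀ I J, B J → I ⊆ J → B I) : Aug (UInd A B) := by
  rintro I _ hI ⟨J1, J2, aJ, bJ, hJ, rfl⟩ hlt
  by_contra! hcon
  have key : ∀ n : ℕ, ∃ I1 I2, A I1 ∧ B I2 ∧ Disjoint I1 I2 ∧ I1 ∪ I2 = I ∧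
      n ≤ (I1 ∩ J1).card + (I2 ∩ J2).card := by
    intro n
    induction n with
    | zero =>
      obtain ⟨I1, I2, a, b, hd, h⟩ := hI
      exact ⟨I1, I2, a, b, hd, h, by omega⟩
    | succ n ih =>
      obtain ⟨I1, I2, a, b, hd, rfl, hn⟩ := ih
      rw [Finset.card_union_of_disjoint hd, Finset.card_union_of_disjoint hJ] at hlt
      by_cases h1 : I1.card < J1.card
      · rcases step hA mB I1 I2 J1 J2 a b hd aJ hJ h1 with ⟨e, heJ, h3, h4, h5⟩ | ⟨I1', I2', h1, h2, h3, h4, h5⟩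
        · refine absurd ⟨insert e I1, I2, h5, b, ?_, ?_⟩ (hcon e (Finset.mem_union_left _ heJ) (by simp [h3, h4]))
          · rw [Finset.disjoint_insert_left]; exact ⟨h4, hd⟩
          · rw [Finset.insert_union]
        · exact ⟨I1', I2', h1, h2, h3, h4, by omega⟩
      · have h1 : I2.card < J2.card := by omega
        rcases step hB mA I2 I1 J2 J1 b a hd.symm bJ hJ.symm h1 with ⟨e, heJ, h3, h4, h5⟩ | ⟨I1', I2', h1, h2, h3, h4, h5⟩
        · refine absurd ⟨I1, insert e I2, a, h5, ?_, ?_⟩ (hcon e (Finset.mem_union_right _ heJ) (by simp [h3, h4]))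
          · rw [Finset.disjoint_insert_right]; exact ⟨h4, hd⟩
          · rw [Finset.union_insert]
        · exact ⟨I2', I1', h2, h1, h3.symm, by rw [Finset.union_comm, h4, Finset.union_comm], by omega⟩
  obtain ⟨I1, I2, a, b, hd, rfl, hn⟩ := key ((I.card) + 1)
  rw [Finset.card_union_of_disjoint hd] at hn
  have := Finset.card_le_card (Finset.inter_subset_left (s₁ := I1) (s₂ := J1))
  have := Finset.card_le_card (Finset.inter_subset_left (s₁ := I2) (s₂ := J2))
  omega

end generic

variable {V : Type*} [Fintype V] [DecidableEq V] {k : ℕ}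

lemma Rig_aug (R : Rig V k) : Aug R.Ind := by
  intro I J hI hJ h
  by_contra! hcon
  have : (J : Set (Sym2 V)) ⊆ R.cl I := by
    intro e he
    by_contra hecl
    exact hcon e he (fun h => hecl (R.sub_cl _ h)) (R.insert_ind I e hI hecl)
  have := R.card_le I J hJ this
  omega

lemma Rig_basis (R : Rig V k) (F : Finset (Sym2 V)) :
    ∃ I ⊆ F, R.Ind I ∧ (F : Set (Sym2 V)) ⊆ R.cl I := by
  obtain ⟨I, hIF, hI, hc⟩ := exists_basis R.empty F
  refine ⟨I, hIF, hI, fun e he => ?_⟩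
  by_contra hecl
  have h1 := R.insert_ind I e hI hecl
  have heI : e ∉ I := fun h => hecl (R.sub_cl _ h)
  have := le_rk h1 (Finset.insert_subset he hIF)
  rw [Finset.card_insert_of_notMem heI] at this
  omega

lemma cl_mono (R : Rig V k) {F F' : Set (Sym2 V)} (h : F ⊆ F') : R.cl F ⊆ R.cl F' :=
  R.cl_le _ _ (h.trans (R.sub_cl _))

lemma cl_grow (R : Rig V k) (F : Set (Sym2 V)) (X Y : Finset V)
    (hX : ∀ a ∈ X, ∀ b ∈ X, a ≠ b → s(a, b) ∈ R.cl F)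
    (hY : ∀ z ∈ Y, ∃ N ⊆ X, z ∉ N ∧ N.card = k ∧ ∀ n ∈ N, s(z, n) ∈ R.cl F) :
    ∀ a ∈ X ∪ Y, ∀ b ∈ X ∪ Y, a ≠ b → s(a, b) ∈ R.cl F := by
  induction Y using Finset.induction_on with
  | empty => simpa using hX
  | insert z Y hz ih =>
    have ih := ih (fun z hz => hY z (Finset.mem_insert_of_mem hz))
    obtain ⟨N, hNX, hzN, hNc, hN⟩ := hY z (Finset.mem_insert_self _ _)
    have key : ∀ b ∈ X ∪ Y, z ≠ b → s(z, b) ∈ R.cl F := by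
      intro b hb hzb
      by_cases hbN : b ∈ N
      · exact hN b hbN
      · refine R.clos F z b N hNc hzb hzN hbN hN ?_ ?_
        · intro n hn
          exact ih b hb n (Finset.mem_union_left _ (hNX hn)) (by rintro rfl; exact hbN hn)
        · intro n hn n' hn' hne
          exact ih n (Finset.mem_union_left _ (hNX hn)) n' (Finset.mem_union_left _ (hNX hn')) hne
    intro a ha b hb hab
    rw [Finset.union_insert, Finset.mem_insert] at ha hb
    rcases ha with rfl | ha <;> rcases hb with rfl | hb
    · exact absurd rfl hab
    · exact key b hb hab
    · rw [Sym2.eq_swap]; exact key a ha hab.symm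
    · exact ih a ha b hb hab

end RigAux

namespace RigAux
variable {V : Type*} [Fintype V] [DecidableEq V] {k : ℕ}

open Classical in
/-- edges of G inside Y -/
noncomputable def eOn (G : SimpleGraph V) (Y : Finset V) : Finset (Sym2 V) :=
  Finset.univ.filter (fun e => e ∈ G.edgeSet ∧ ∀ v ∈ e, v ∈ Y)

lemma mem_eOn {G : SimpleGraph V} {Y : Finset V} {x y : V} :
    s(x, y) ∈ eOn G Y ↔ G.Adj x y ∧ x ∈ Y ∧ y ∈ Y := by simp [eOn]

lemma mem_eOn' {G : SimpleGraph V} {Y : Finset V} {e : Sym2 V} :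
    e ∈ eOn G Y ↔ e ∈ G.edgeSet ∧ ∀ v ∈ e, v ∈ Y := by simp [eOn]

lemma eOn_mono {G : SimpleGraph V} {Y Z : Finset V} (h : Y ⊆ Z) : eOn G Y ⊆ eOn G Z := by
  intro e; rw [mem_eOn', mem_eOn']; exact fun ⟨a, b⟩ => ⟨a, fun v hv => h (b v hv)⟩

/-- union matroid -/
def UU (R : Rig V k) (T : Rig V 1) : Finset (Sym2 V) → Prop := UInd R.Ind T.Ind

/-- closed graph -/
def ClosedG (R : Rig V k) (T : Rig V 1) (G : SimpleGraph V) : Prop :=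
  ∀ x y, x ≠ y → ¬ G.Adj x y → ∀ I, UU R T I → (∀ e ∈ I, e ∈ G.edgeSet) →
    UU R T (insert s(x, y) I)

/-- full sets -/
def FullG (R : Rig V k) (T : Rig V 1) (G : SimpleGraph V) (X : Finset V) : Prop :=
  ∃ F1 F2 : Finset (Sym2 V), F1 ⊆ eOn G X ∧ F2 ⊆ eOn G X ∧ Disjoint F1 F2 ∧
    (∀ a ∈ X, ∀ b ∈ X, a ≠ b → s(a, b) ∈ R.cl F1) ∧
    (∀ a ∈ X, ∀ b ∈ X, a ≠ b → s(a, b) ∈ T.cl F2)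

/-- cliques -/
def Clq (G : SimpleGraph V) (X : Finset V) : Prop := ∀ a ∈ X, ∀ b ∈ X, a ≠ b → G.Adj a b

lemma Clq.mono {G : SimpleGraph V} {X Y : Finset V} (h : Clq G Y) (hX : X ⊆ Y) : Clq G X :=
  fun a ha b hb => h a (hX ha) b (hX hb)

lemma UU_mono (R : Rig V k) (T : Rig V 1) : ∀ I J, UU R T J → I ⊆ J → UU R T I :=
  UInd_mono R.mono T.mono

lemma UU_aug (R : Rig V k) (T : Rig V 1) : Aug (UU R T) :=
  UInd_aug (Rig_aug R) (Rig_aug T) R.mono T.mono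

lemma UU_empty (R : Rig V k) (T : Rig V 1) : UU R T ∅ :=
  ⟨∅, ∅, R.empty, T.empty, by simp, by simp⟩

lemma pairs_mem {G : SimpleGraph V} {X : Finset V} {C : Set (Sym2 V)}
    (h : ∀ a ∈ X, ∀ b ∈ X, a ≠ b → s(a, b) ∈ C) {e : Sym2 V} (he : e ∈ eOn G X) : e ∈ C := by
  induction e with
  | h x y =>
    rw [mem_eOn] at he
    exact h x he.2.1 y he.2.2 he.1.ne

lemma full_clq {R : Rig V k} {T : Rig V 1} {G : SimpleGraph V} (hG : ClosedG R T G)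
    {X : Finset V} (h : FullG R T G X) : Clq G X := by
  intro x hx y hy hxy
  by_contra hadj
  obtain ⟨F1, F2, h1, h2, hd, p1, p2⟩ := h
  obtain ⟨I1, i1, ind1, c1⟩ := Rig_basis R F1
  obtain ⟨I2, i2, ind2, c2⟩ := Rig_basis T F2
  have hsub : I1 ∪ I2 ⊆ eOn G X := Finset.union_subset (i1.trans h1) (i2.trans h2)
  have hdI : Disjoint I1 I2 := hd.mono i1 i2
  have hnot : s(x, y) ∉ I1 ∪ I2 := fun h => hadj (mem_eOn.1 (hsub h)).1
  obtain ⟨J1, J2, a, b, hJ, hJU⟩ := hG x y hxy hadj (I1 ∪ I2) ⟨I1, I2, ind1, ind2, hdI, rfl⟩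
    (fun e he => (mem_eOn'.1 (hsub he)).1)
  have p1' : ∀ a ∈ X, ∀ b ∈ X, a ≠ b → s(a, b) ∈ R.cl I1 :=
    fun a ha b hb hab => R.cl_le _ _ c1 (p1 a ha b hb hab)
  have p2' : ∀ a ∈ X, ∀ b ∈ X, a ≠ b → s(a, b) ∈ T.cl I2 :=
    fun a ha b hb hab => T.cl_le _ _ c2 (p2 a ha b hb hab)
  have q1 : J1.card ≤ I1.card := by
    refine R.card_le _ _ a fun e he => ?_
    have : e ∈ insert s(x, y) (I1 ∪ I2) := hJU ▸ Finset.mem_union_left _ he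
    rcases Finset.mem_insert.1 this with rfl | h
    · exact p1' x hx y hy hxy
    · exact pairs_mem p1' (hsub h)
  have q2 : J2.card ≤ I2.card := by
    refine T.card_le _ _ b fun e he => ?_
    have : e ∈ insert s(x, y) (I1 ∪ I2) := hJU ▸ Finset.mem_union_right _ he
    rcases Finset.mem_insert.1 this with rfl | h
    · exact p2' x hx y hy hxy
    · exact pairs_mem p2' (hsub h)
  have := congrArg Finset.card hJU
  rw [Finset.card_insert_of_notMem hnot, Finset.card_union_of_disjoint hJ,
    Finset.card_union_of_disjoint hdI] at this
  omega

lemma clq_full (R : Rig V k) (T : Rig V 1) {G : SimpleGraph V} {X : Finset V} (h : Clq G X)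
    (hc : 2 * k + 2 ≤ X.card) : FullG R T G X := by
  obtain ⟨A, hAX, hAc⟩ := Finset.exists_subset_card_eq (show k + 1 ≤ X.card by omega)
  set B := X \ A with hB
  have hBc : k + 1 ≤ B.card := by
    rw [hB, Finset.card_sdiff_of_subset hAX]; omega
  have hBX : B ⊆ X := Finset.sdiff_subset
  have hBA : ∀ b ∈ B, b ∉ A := fun b hb => (Finset.mem_sdiff.1 hb).2
  obtain ⟨a, ha⟩ : A.Nonempty := Finset.card_pos.1 (by omega)
  obtain ⟨b, hb⟩ : B.Nonempty := Finset.card_pos.1 (by omega)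
  set F2 : Finset (Sym2 V) := B.image (fun z => s(a, z)) ∪ A.image (fun z => s(b, z)) with hF2
  have mem2 : ∀ p q, s(p, q) ∈ F2 ↔ (p = a ∧ q ∈ B) ∨ (q = a ∧ p ∈ B) ∨ (p = b ∧ q ∈ A) ∨
      (q = b ∧ p ∈ A) := by
    intro p q
    simp only [hF2, Finset.mem_union, Finset.mem_image, Sym2.eq_iff]
    constructor
    · rintro (⟨z, hz, ⟨rfl, rfl⟩ | ⟨rfl, rfl⟩⟩ | ⟨z, hz, ⟨rfl, rfl⟩ | ⟨rfl, rfl⟩⟩) <;> tauto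
    · rintro (⟨rfl, h⟩ | ⟨rfl, h⟩ | ⟨rfl, h⟩ | ⟨rfl, h⟩)
      · exact Or.inl ⟨q, h, by tauto⟩
      · exact Or.inl ⟨p, h, by tauto⟩
      · exact Or.inr ⟨q, h, by tauto⟩
      · exact Or.inr ⟨p, h, by tauto⟩
  have hbA := hBA b hb
  have haB : a ∉ B := fun h => hBA a h ha
  have hF2X : F2 ⊆ eOn G X := by
    intro e he
    induction e with
    | h p q =>
      rw [mem2] at he
      rw [mem_eOn]
      have : p ≠ q ∧ p ∈ X ∧ q ∈ X := by
        rcases he with ⟨rfl, h⟩ | ⟨rfl, h⟩ | ⟨rfl, h⟩ | ⟨rfl, h⟩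
        · exact ⟨by rintro rfl; exact haB h, hAX ha, hBX h⟩
        · exact ⟨by rintro rfl; exact haB h, hBX h, hAX ha⟩
        · exact ⟨by rintro rfl; exact hbA h, hBX hb, hAX h⟩
        · exact ⟨by rintro rfl; exact hbA h, hAX h, hBX hb⟩
      exact ⟨h p this.2.1 q this.2.2 this.1, this.2⟩
  have m1 : ∀ p ∈ X, ∀ q ∈ X, p ≠ q → s(p, q) ∉ F2 →
      s(p, q) ∈ R.cl ((eOn G X \ F2 : Finset (Sym2 V)) : Set (Sym2 V)) := by
    intro p hp q hq hpq hn
    apply R.sub_cl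
    rw [Finset.mem_coe, Finset.mem_sdiff, mem_eOn]
    exact ⟨⟨h p hp q hq hpq, hp, hq⟩, hn⟩
  refine ⟨eOn G X \ F2, F2, Finset.sdiff_subset, hF2X, Finset.sdiff_disjoint, ?_, ?_⟩
  · have s1 := cl_grow R ((eOn G X \ F2 : Finset (Sym2 V)) : Set (Sym2 V)) A (B.erase b) (by
      intro p hp q hq hpq
      refine m1 p (hAX hp) q (hAX hq) hpq ?_
      rw [mem2]
      rintro (⟨rfl, h⟩ | ⟨rfl, h⟩ | ⟨rfl, h⟩ | ⟨rfl, h⟩)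
      · exact hBA _ h hq
      · exact hBA _ h hp
      · exact hbA hp
      · exact hbA hq) (by
      intro z hz
      rw [Finset.mem_erase] at hz
      refine ⟨A.erase a, Finset.erase_subset _ _, fun h => hBA z hz.2 (Finset.mem_of_mem_erase h),
        by rw [Finset.card_erase_of_mem ha]; omega, ?_⟩
      intro n hn
      rw [Finset.mem_erase] at hn
      have hzn : z ≠ n := by rintro rfl; exact hBA z hz.2 hn.2
      refine m1 z (hBX hz.2) n (hAX hn.2) hzn ?_
      rw [mem2]
      rintro (⟨rfl, h⟩ | ⟨rfl, h⟩ | ⟨rfl, h⟩ | ⟨rfl, h⟩)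
      · exact haB hz.2
      · exact hn.1 rfl
      · exact hz.1 rfl
      · exact hbA hn.2)
    have s2 := cl_grow R ((eOn G X \ F2 : Finset (Sym2 V)) : Set (Sym2 V)) (A ∪ B.erase b) {b} s1 (by
      intro z hz
      rw [Finset.mem_singleton] at hz
      subst hz
      obtain ⟨N, hN, hNc⟩ := Finset.exists_subset_card_eq
        (show k ≤ (B.erase z).card by rw [Finset.card_erase_of_mem hb]; omega)
      refine ⟨N, hN.trans Finset.subset_union_right, fun h => Finset.notMem_erase z B (hN h), hNc, ?_⟩
      intro n hn
      have hn := Finset.mem_erase.1 (hN hn)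
      refine m1 z (hBX hb) n (hBX hn.2) (Ne.symm hn.1) ?_
      rw [mem2]
      rintro (⟨rfl, h⟩ | ⟨rfl, h⟩ | ⟨_, h⟩ | ⟨rfl, h⟩)
      · exact haB hb
      · exact haB hn.2
      · exact hBA n hn.2 h
      · exact hn.1 rfl)
    have hall : ∀ p ∈ X, p ∈ A ∪ B.erase b ∪ {b} := by
      intro p hp
      simp only [Finset.mem_union, Finset.mem_erase, Finset.mem_singleton, hB, Finset.mem_sdiff]
      tauto
    exact fun p hp q hq => s2 p (hall p hp) q (hall q hq)
  · have s1 := cl_grow T (F2 : Set (Sym2 V)) {a} B (by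
      intro p hp q hq hpq
      rw [Finset.mem_singleton] at hp hq
      exact absurd (hp.trans hq.symm) hpq) (by
      intro z hz
      refine ⟨{a}, subset_rfl, by rw [Finset.mem_singleton]; rintro rfl; exact haB hz, by simp, ?_⟩
      intro n hn
      rw [Finset.mem_singleton] at hn
      exact T.sub_cl _ (Finset.mem_coe.2 ((mem2 _ _).2 (by tauto))))
    have s2 := cl_grow T (F2 : Set (Sym2 V)) ({a} ∪ B) A s1 (by
      intro z hz
      refine ⟨{b}, by simp [hb], by rw [Finset.mem_singleton]; rintro rfl; exact hbA hz, by simp, ?_⟩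
      intro n hn
      rw [Finset.mem_singleton] at hn
      exact T.sub_cl _ (Finset.mem_coe.2 ((mem2 _ _).2 (by tauto))))
    have hall : ∀ p ∈ X, p ∈ {a} ∪ B ∪ A := by
      intro p hp
      simp only [Finset.mem_union, Finset.mem_singleton, hB, Finset.mem_sdiff]
      tauto
    exact fun p hp q hq => s2 p (hall p hp) q (hall q hq)

lemma full_ext {R : Rig V k} {T : Rig V 1} {G : SimpleGraph V} {X : Finset V}
    (h : FullG R T G X) {z : V} (hz : z ∉ X) {N : Finset V} (hN : N ⊆ X)
    (hadj : ∀ n ∈ N, G.Adj z n) (hNc : k + 1 ≤ N.card) : FullG R T G (insert z X) := by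
  obtain ⟨F1, F2, h1, h2, hd, p1, p2⟩ := h
  obtain ⟨n0, hn0⟩ : N.Nonempty := Finset.card_pos.1 (by omega)
  obtain ⟨M, hM, hMc⟩ := Finset.exists_subset_card_eq
    (show k ≤ (N.erase n0).card by rw [Finset.card_erase_of_mem hn0]; omega)
  have hMN : M ⊆ N := hM.trans (Finset.erase_subset _ _)
  have hn0M : n0 ∉ M := fun h => Finset.notMem_erase n0 N (hM h)
  have zno : ∀ w, s(z, w) ∉ eOn G X := fun w h => hz (mem_eOn.1 h).2.1
  have hall : ∀ p ∈ insert z X, p ∈ X ∪ {z} := by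
    intro p hp; simpa [or_comm] using hp
  refine ⟨F1 ∪ M.image (fun w => s(z, w)), insert s(z, n0) F2, ?_, ?_, ?_, ?_, ?_⟩
  · apply Finset.union_subset (h1.trans (eOn_mono (Finset.subset_insert _ _)))
    intro e he
    obtain ⟨w, hw, rfl⟩ := Finset.mem_image.1 he
    rw [mem_eOn]
    exact ⟨hadj w (hMN hw), by simp, by simp [hN (hMN hw)]⟩
  · apply Finset.insert_subset _ (h2.trans (eOn_mono (Finset.subset_insert _ _)))
    rw [mem_eOn]
    exact ⟨hadj _ hn0, by simp, by simp [hN hn0]⟩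
  · rw [Finset.disjoint_union_left, Finset.disjoint_insert_right, Finset.disjoint_insert_right]
    refine ⟨⟨fun h => zno _ (h1 h), hd⟩, ?_, ?_⟩
    · intro h
      obtain ⟨w, hw, he⟩ := Finset.mem_image.1 h
      rw [Sym2.congr_right] at he
      exact hn0M (he ▸ hw)
    · rw [Finset.disjoint_left]
      intro e he he2
      obtain ⟨w, hw, rfl⟩ := Finset.mem_image.1 he
      exact zno _ (h2 he2)
  · have s := cl_grow R ((F1 ∪ M.image (fun w => s(z, w)) : Finset (Sym2 V)) : Set (Sym2 V)) X {z}
      (fun a ha b hb hab => cl_mono R (by simp) (p1 a ha b hb hab)) (by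
      intro y hy
      rw [Finset.mem_singleton] at hy
      subst hy
      refine ⟨M, hMN.trans hN, fun h => hz (hN (hMN h)), hMc, ?_⟩
      intro n hn
      exact R.sub_cl _ (Finset.mem_coe.2 (Finset.mem_union_right _ (Finset.mem_image_of_mem _ hn))))
    exact fun p hp q hq => s p (hall p hp) q (hall q hq)
  · have s := cl_grow T ((insert s(z, n0) F2 : Finset (Sym2 V)) : Set (Sym2 V)) X {z}
      (fun a ha b hb hab => cl_mono T (by simp) (p2 a ha b hb hab)) (by
      intro y hy
      rw [Finset.mem_singleton] at hy
      subst hy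
      refine ⟨{n0}, by simp [hN hn0], by rw [Finset.mem_singleton]; rintro rfl; exact hz (hN hn0),
        by simp, ?_⟩
      intro n hn
      rw [Finset.mem_singleton] at hn
      subst hn
      exact T.sub_cl _ (by simp))
    exact fun p hp q hq => s p (hall p hp) q (hall q hq)

lemma adj_all {R : Rig V k} {T : Rig V 1} {G : SimpleGraph V} (hG : ClosedG R T G)
    {K : Finset V} (hK : Clq G K) (hKc : 2 * k + 2 ≤ K.card) {z : V} {N : Finset V}
    (hN : N ⊆ K) (hadj : ∀ n ∈ N, G.Adj z n) (hNc : k + 1 ≤ N.card) :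
    ∀ w ∈ K, w ≠ z → G.Adj z w := by
  intro w hw hwz
  by_cases hz : z ∈ K
  · exact hK z hz w hw hwz.symm
  · exact full_clq hG (full_ext (clq_full R T hK hKc) hz hN hadj hNc) z (by simp) w (by simp [hw])
      hwz.symm

lemma exists_closed (R : Rig V k) (T : Rig V 1) (G : SimpleGraph V) :
    ∃ G' : SimpleGraph V, G ≤ G' ∧ ClosedG R T G' ∧
      rk (UU R T) (eOn G' Finset.univ) = rk (UU R T) (eOn G Finset.univ) := by
  classical
  obtain ⟨A, hA, hmax⟩ := Finset.exists_max_image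
    (Finset.univ.filter (fun A : SimpleGraph V => G ≤ A ∧
      rk (UU R T) (eOn A Finset.univ) = rk (UU R T) (eOn G Finset.univ)))
    (fun A => (eOn A Finset.univ).card) ⟨G, by simp⟩
  simp only [Finset.mem_filter, Finset.mem_univ, true_and] at hA hmax
  refine ⟨A, hA.1, ?_, hA.2⟩
  intro x y hxy hadj I hI hIA
  have hIA' : I ⊆ eOn A Finset.univ := fun e he => mem_eOn'.2 ⟨hIA e he, by simp⟩
  set A' := A ⊔ SimpleGraph.edge x y with hA'
  have hE : eOn A' Finset.univ = insert s(x, y) (eOn A Finset.univ) := by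
    ext e
    induction e with
    | h p q =>
      rw [mem_eOn, Finset.mem_insert, mem_eOn, hA', SimpleGraph.sup_adj, SimpleGraph.edge_adj,
        Sym2.eq_iff]
      simp only [Finset.mem_univ, and_true]
      constructor
      · rintro (h | ⟨h, h'⟩)
        · exact Or.inr h
        · tauto
      · rintro (h | h)
        · right
          rcases h with ⟨rfl, rfl⟩ | ⟨rfl, rfl⟩
          · exact ⟨by tauto, hxy⟩
          · exact ⟨by tauto, hxy.symm⟩
        · exact Or.inl h
  have hn : s(x, y) ∉ eOn A Finset.univ := fun h => hadj (mem_eOn.1 h).1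
  refine insert_of_rk_lt (UU_aug R T) (UU_mono R T) (A := eOn A Finset.univ) ?_ hI hIA'
  rw [← hE]
  by_contra hlt
  have hle : rk (UU R T) (eOn A Finset.univ) ≤ rk (UU R T) (eOn A' Finset.univ) := by
    obtain ⟨J, hJ, hJi, hJc⟩ := exists_basis (UU_empty R T) (eOn A Finset.univ)
    rw [← hJc]
    exact le_rk hJi (hJ.trans (by rw [hE]; exact Finset.subset_insert _ _))
  have := hmax A' ⟨hA.1.trans le_sup_left, by omega⟩
  rw [hE, Finset.card_insert_of_notMem hn] at this
  omega

lemma rk_upper (R : Rig V k) (T : Rig V 1) (G : SimpleGraph V) (X : Finset V) :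
    rk (UU R T) (eOn G X) ≤ (k + 1) * X.card := by
  obtain ⟨J, hJ, ⟨J1, J2, a, b, hd, rfl⟩, hJc⟩ := exists_basis (UU_empty R T) (eOn G X)
  rw [← hJc, Finset.card_union_of_disjoint hd]
  have h1 := R.upper J1 X a (fun e he => (mem_eOn'.1 (hJ (Finset.mem_union_left _ he))).2)
  have h2 := T.upper J2 X b (fun e he => (mem_eOn'.1 (hJ (Finset.mem_union_right _ he))).2)
  linarith [add_mul k 1 X.card]

/-- combine the parts -/
lemma inc_aux (R : Rig V k) (T : Rig V 1) {G : SimpleGraph V} {Y : Finset V} {v : V} (hv : v ∉ Y)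
    {I1 I2 : Finset (Sym2 V)} (hI1 : I1 ⊆ eOn G Y) (hI2 : I2 ⊆ eOn G Y) (hd : Disjoint I1 I2)
    {Z1 Z2 : Finset V} (hZ1 : Z1 ⊆ Y) (hZ2 : Z2 ⊆ Y) (a1 : ∀ z ∈ Z1, G.Adj v z)
    (a2 : ∀ z ∈ Z2, G.Adj v z) (hdZ : Disjoint Z1 Z2)
    (i1 : R.Ind (I1 ∪ Z1.image (fun z => s(v, z))))
    (i2 : T.Ind (I2 ∪ Z2.image (fun z => s(v, z)))) :
    I1.card + I2.card + (Z1.card + Z2.card) ≤ rk (UU R T) (eOn G (insert v Y)) := by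
  have inj : ∀ Z : Finset V, (Z.image (fun z => s(v, z))).card = Z.card := fun Z =>
    Finset.card_image_of_injective _ (fun x y h => Sym2.congr_right.1 h)
  have vno : ∀ w, s(v, w) ∉ eOn G Y := fun w h => hv (mem_eOn.1 h).2.1
  have dI : ∀ (I : Finset (Sym2 V)) (Z : Finset V), I ⊆ eOn G Y →
      Disjoint I (Z.image (fun z => s(v, z))) := by
    intro I Z hI
    rw [Finset.disjoint_right]
    intro e he he2
    obtain ⟨w, hw, rfl⟩ := Finset.mem_image.1 he
    exact vno _ (hI he2)
  have dZ : Disjoint (Z1.image (fun z => s(v, z))) (Z2.image (fun z => s(v, z))) := by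
    rw [Finset.disjoint_left]
    intro e he he2
    obtain ⟨w, hw, rfl⟩ := Finset.mem_image.1 he
    obtain ⟨w', hw', h⟩ := Finset.mem_image.1 he2
    rw [Sym2.congr_right] at h
    subst h
    exact Finset.disjoint_left.1 hdZ hw hw'
  have sub : ∀ (I : Finset (Sym2 V)) (Z : Finset V), I ⊆ eOn G Y → Z ⊆ Y → (∀ z ∈ Z, G.Adj v z) →
      I ∪ Z.image (fun z => s(v, z)) ⊆ eOn G (insert v Y) := by
    intro I Z hI hZ ha
    apply Finset.union_subset (hI.trans (eOn_mono (Finset.subset_insert _ _)))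
    intro e he
    obtain ⟨w, hw, rfl⟩ := Finset.mem_image.1 he
    rw [mem_eOn]
    exact ⟨ha w hw, by simp, by simp [hZ hw]⟩
  have D : Disjoint (I1 ∪ Z1.image (fun z => s(v, z))) (I2 ∪ Z2.image (fun z => s(v, z))) := by
    rw [Finset.disjoint_union_left, Finset.disjoint_union_right, Finset.disjoint_union_right]
    exact ⟨⟨hd, dI _ _ hI1⟩, (dI _ _ hI2).symm, dZ⟩
  have := le_rk (Ind := UU R T) ⟨_, _, i1, i2, D, rfl⟩
    (Finset.union_subset (sub I1 Z1 hI1 hZ1 a1) (sub I2 Z2 hI2 hZ2 a2))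
  rw [Finset.card_union_of_disjoint D, Finset.card_union_of_disjoint (dI _ _ hI1),
    Finset.card_union_of_disjoint (dI _ _ hI2), inj, inj] at this
  omega

lemma notMem_of_eOn {G : SimpleGraph V} {Y : Finset V} {v : V} (hv : v ∉ Y)
    {I : Finset (Sym2 V)} (hI : I ⊆ eOn G Y) : ∀ e ∈ I, v ∉ e :=
  fun e he h => hv ((mem_eOn'.1 (hI he)).2 v h)

lemma inc1 (R : Rig V k) (T : Rig V 1) {G : SimpleGraph V} {Y : Finset V} {v : V} (hv : v ∉ Y)
    {B : Finset V} (hB : B ⊆ Y) (ha : ∀ z ∈ B, G.Adj v z) :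
    rk (UU R T) (eOn G Y) + min (k + 1) B.card ≤ rk (UU R T) (eOn G (insert v Y)) := by
  obtain ⟨J, hJ, ⟨J1, J2, a, b, hd, rfl⟩, hJc⟩ := exists_basis (UU_empty R T) (eOn G Y)
  obtain ⟨Z1, hZ1, hZ1c⟩ := Finset.exists_subset_card_eq (show min k B.card ≤ B.card by omega)
  obtain ⟨Z2, hZ2, hZ2c⟩ := Finset.exists_subset_card_eq
    (show min 1 (B.card - k) ≤ (B \ Z1).card by rw [Finset.card_sdiff_of_subset hZ1]; omega)
  have hZ2B : Z2 ⊆ B := hZ2.trans Finset.sdiff_subset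
  have j1 := Finset.union_subset_left hJ
  have j2 := Finset.union_subset_right hJ
  have := inc_aux R T hv j1 j2 hd (hZ1.trans hB) (hZ2B.trans hB)
    (fun z hz => ha z (hZ1 hz)) (fun z hz => ha z (hZ2B hz))
    (Finset.disjoint_sdiff.mono_right hZ2)
    (R.zero_ext J1 v Z1 a (notMem_of_eOn hv j1) (fun h => hv (hB (hZ1 h))) (by omega))
    (T.zero_ext J2 v Z2 b (notMem_of_eOn hv j2) (fun h => hv (hB (hZ2B h))) (by omega))
  rw [← hJc, Finset.card_union_of_disjoint hd]
  omega

lemma inc2 {R : Rig V k} {T : Rig V 1} {G : SimpleGraph V} (hG : ClosedG R T G) (hk : 0 < k)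
    {Y : Finset V} {v : V} (hv : v ∉ Y)
    {B : Finset V} (hB : B ⊆ Y) (ha : ∀ z ∈ B, G.Adj v z) (hBc : k + 2 ≤ B.card)
    (hn : ¬ Clq G B) :
    rk (UU R T) (eOn G Y) + (k + 2) ≤ rk (UU R T) (eOn G (insert v Y)) := by
  unfold Clq at hn
  push Not at hn
  obtain ⟨x, hx, y, hy, hxy, hadj⟩ := hn
  obtain ⟨J, hJ, hJU, hJc⟩ := exists_basis (UU_empty R T) (eOn G Y)
  have hxyJ : s(x, y) ∉ J := fun h => hadj (mem_eOn.1 (hJ h)).1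
  obtain ⟨F1, F2, a, b, hd, hF⟩ := hG x y hxy hadj J hJU (fun e he => (mem_eOn'.1 (hJ he)).1)
  have hvx : v ≠ x := by rintro rfl; exact hv (hB hx)
  have hvy : v ≠ y := by rintro rfl; exact hv (hB hy)
  have hcard := congrArg Finset.card hF
  rw [Finset.card_insert_of_notMem hxyJ, Finset.card_union_of_disjoint hd] at hcard
  have hBe : ((B.erase x).erase y).card + 2 = B.card := by
    rw [Finset.card_erase_of_mem (by simp [hy, hxy.symm]), Finset.card_erase_of_mem hx]; omega
  have hBmem : ∀ z ∈ (B.erase x).erase y, z ≠ x ∧ z ≠ y ∧ z ∈ B := by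
    intro z hz; simp only [Finset.mem_erase] at hz; tauto
  have subF : ∀ e, e ∈ F1 ∪ F2 → e ≠ s(x, y) → e ∈ eOn G Y := by
    intro e he hne
    rw [hF] at he
    exact hJ (Finset.mem_of_mem_insert_of_ne he hne)
  have hmem : s(x, y) ∈ F1 ∪ F2 := by rw [hF]; simp
  rcases Finset.mem_union.1 hmem with h | h
  · have h2 : s(x, y) ∉ F2 := Finset.disjoint_left.1 hd h
    obtain ⟨Z, hZ, hZc⟩ := Finset.exists_subset_card_eq (show k - 1 ≤ ((B.erase x).erase y).card by omega)
    obtain ⟨w, hw⟩ : (((B.erase x).erase y) \ Z).Nonempty := Finset.card_pos.1 (by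
      rw [Finset.card_sdiff_of_subset hZ]; omega)
    rw [Finset.mem_sdiff] at hw
    have hwB := hBmem w hw.1
    have hxZ : x ∉ Z := fun h => (hBmem x (hZ h)).1 rfl
    have hyZ : y ∉ Z := fun h => (hBmem y (hZ h)).2.1 rfl
    have f1 : F1.erase s(x, y) ⊆ eOn G Y := fun e he =>
      subF e (Finset.mem_union_left _ (Finset.mem_of_mem_erase he)) (Finset.ne_of_mem_erase he)
    have f2 : F2 ⊆ eOn G Y := fun e he =>
      subF e (Finset.mem_union_right _ he) (by rintro rfl; exact h2 he)
    have sZ : insert x (insert y Z) ⊆ B := by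
      intro z hz
      simp only [Finset.mem_insert] at hz
      rcases hz with rfl | rfl | hz
      · exact hx
      · exact hy
      · exact (hBmem z (hZ hz)).2.2
    have sw : {w} ⊆ B := by simp [hwB.2.2]
    have := inc_aux R T hv f1 f2 (hd.mono_left (Finset.erase_subset _ _)) (sZ.trans hB) (sw.trans hB)
      (fun z hz => ha z (sZ hz)) (fun z hz => ha z (sw hz))
      (by
        rw [Finset.disjoint_singleton_right]
        simp only [Finset.mem_insert]
        tauto)
      (R.one_ext _ v x y Z (by rwa [Finset.insert_erase h]) (Finset.notMem_erase _ _)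
        (notMem_of_eOn hv f1) hxy hvx hvy (fun h => hv (hB (hBmem v (hZ h)).2.2)) hxZ hyZ (by omega))
      (T.zero_ext F2 v {w} b (notMem_of_eOn hv f2) (fun h => hv (hB (sw h))) (by simp))
    rw [Finset.card_erase_of_mem h, Finset.card_insert_of_notMem (by simp [hxy, hxZ]),
      Finset.card_insert_of_notMem hyZ, Finset.card_singleton] at this
    have := Finset.card_pos.2 ⟨_, h⟩
    omega
  · have h2 : s(x, y) ∉ F1 := Finset.disjoint_right.1 hd h
    obtain ⟨Z, hZ, hZc⟩ := Finset.exists_subset_card_eq (show k ≤ ((B.erase x).erase y).card by omega)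
    have hxZ : x ∉ Z := fun h => (hBmem x (hZ h)).1 rfl
    have hyZ : y ∉ Z := fun h => (hBmem y (hZ h)).2.1 rfl
    have f2 : F2.erase s(x, y) ⊆ eOn G Y := fun e he =>
      subF e (Finset.mem_union_right _ (Finset.mem_of_mem_erase he)) (Finset.ne_of_mem_erase he)
    have f1 : F1 ⊆ eOn G Y := fun e he =>
      subF e (Finset.mem_union_left _ he) (by rintro rfl; exact h2 he)
    have sZ : Z ⊆ B := fun z hz => (hBmem z (hZ hz)).2.2
    have sw : insert x (insert y ∅) ⊆ B := by
      intro z hz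
      simp only [Finset.mem_insert, Finset.notMem_empty, or_false] at hz
      rcases hz with rfl | rfl
      · exact hx
      · exact hy
    have := inc_aux R T hv f1 f2 (hd.mono_right (Finset.erase_subset _ _)) (sZ.trans hB) (sw.trans hB)
      (fun z hz => ha z (sZ hz)) (fun z hz => ha z (sw hz))
      (by
        rw [Finset.disjoint_insert_right, Finset.disjoint_insert_right]
        simp [hxZ, hyZ])
      (R.zero_ext F1 v Z a (notMem_of_eOn hv f1) (fun h => hv (hB (sZ h))) (by omega))
      (T.one_ext _ v x y ∅ (by rwa [Finset.insert_erase h]) (Finset.notMem_erase _ _)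
        (notMem_of_eOn hv f2) hxy hvx hvy (by simp) (by simp) (by simp) (by simp))
    rw [Finset.card_erase_of_mem h, Finset.card_insert_of_notMem (by simp [hxy]),
      Finset.card_insert_of_notMem (by simp), Finset.card_empty] at this
    have := Finset.card_pos.2 ⟨_, h⟩
    omega

end RigAux

namespace RigAux
variable {V : Type*} [Fintype V] [DecidableEq V] {k : ℕ}

/-- orders of the vertices -/
abbrev Ord (V : Type*) [Fintype V] := V ≃ Fin (Fintype.card V)

/-- members of N below v -/
def blw (p : Ord V) (N : Finset V) (v : V) : Finset V := N.filter (fun u => p u < p v)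

lemma mem_blw {p : Ord V} {N : Finset V} {v u : V} : u ∈ blw p N v ↔ u ∈ N ∧ p u < p v := by
  simp [blw]

lemma blw_sub (p : Ord V) (N : Finset V) (v : V) : blw p N v ⊆ N := Finset.filter_subset _ _

lemma rank_unique (p : Ord V) (M : Finset V) (j : ℕ) (hj : j < M.card) :
    (M.filter (fun w => (blw p M w).card = j)).card = 1 := by
  have lt : ∀ w ∈ M, ∀ w' ∈ M, p w < p w' → (blw p M w).card < (blw p M w').card := by
    intro w hw w' hw' h
    apply Finset.card_lt_card
    rw [Finset.ssubset_iff_of_subset]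
    · exact ⟨w, mem_blw.2 ⟨hw, h⟩, fun h => lt_irrefl _ (mem_blw.1 h).2⟩
    · intro u hu
      rw [mem_blw] at hu ⊢
      exact ⟨hu.1, hu.2.trans h⟩
  have inj : Set.InjOn (fun w => (blw p M w).card) (M : Set V) := by
    intro w hw w' hw' h
    simp only at h
    by_contra hne
    rcases lt_or_gt_of_ne (fun h => hne (p.injective h) : p w ≠ p w') with h1 | h1
    · exact absurd h (lt w hw w' hw' h1).ne
    · exact absurd h (lt w' hw' w hw h1).ne'
  have im : M.image (fun w => (blw p M w).card) = Finset.range M.card := by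
    apply Finset.eq_of_subset_of_card_le
    · intro i hi
      obtain ⟨w, hw, rfl⟩ := Finset.mem_image.1 hi
      rw [Finset.mem_range]
      apply Finset.card_lt_card
      rw [Finset.ssubset_iff_of_subset (blw_sub _ _ _)]
      exact ⟨w, hw, fun h => lt_irrefl _ (mem_blw.1 h).2⟩
    · rw [Finset.card_image_of_injOn inj, Finset.card_range]
  have : j ∈ M.image (fun w => (blw p M w).card) := by rw [im]; simpa using hj
  obtain ⟨w, hw, hwj⟩ := Finset.mem_image.1 this
  rw [Finset.card_eq_one]
  refine ⟨w, ?_⟩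
  ext u
  simp only [Finset.mem_filter, Finset.mem_singleton]
  constructor
  · rintro ⟨hu, h⟩
    exact inj hu hw (h.trans hwj.symm)
  · rintro rfl
    exact ⟨hw, hwj⟩

lemma count_rank (N : Finset V) (v : V) (hv : v ∉ N) (j : ℕ) (hj : j ≤ N.card) :
    (N.card + 1) * (Finset.univ.filter (fun p : Ord V => (blw p N v).card = j)).card =
      Fintype.card (Ord V) := by
  set M := insert v N with hM
  have hMc : M.card = N.card + 1 := Finset.card_insert_of_notMem hv
  have hblw : ∀ p : Ord V, blw p M v = blw p N v := by
    intro p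
    ext u
    rw [mem_blw, mem_blw, hM, Finset.mem_insert]
    constructor
    · rintro ⟨rfl | h, h2⟩
      · exact absurd h2 (lt_irrefl _)
      · exact ⟨h, h2⟩
    · exact fun ⟨a, b⟩ => ⟨Or.inr a, b⟩
  have sw : ∀ w ∈ M, (Finset.univ.filter (fun p : Ord V => (blw p M w).card = j)).card =
      (Finset.univ.filter (fun p : Ord V => (blw p N v).card = j)).card := by
    intro w hw
    have hsM : ∀ u, Equiv.swap v w u ∈ M ↔ u ∈ M := by
      intro u
      by_cases h1 : u = v
      · rw [h1, Equiv.swap_apply_left]; simp [hw]; simp [hM]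
      · by_cases h2 : u = w
        · rw [h2, Equiv.swap_apply_right]; simp [hw]; simp [hM]
        · rw [Equiv.swap_apply_of_ne_of_ne h1 h2]
    have key : ∀ p : Ord V, (blw ((Equiv.swap v w).trans p) M v).card = (blw p M w).card := by
      intro p
      refine Finset.card_bij (fun u _ => Equiv.swap v w u) ?_ ?_ ?_
      · intro u hu
        rw [mem_blw] at hu ⊢
        rw [hsM]
        simpa using hu
      · intro a _ b _ h
        exact (Equiv.swap v w).injective h
      · intro u hu
        rw [mem_blw] at hu
        refine ⟨Equiv.swap v w u, ?_, by simp⟩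
        rw [mem_blw, hsM]
        simpa using hu
    refine Finset.card_bij (fun p _ => (Equiv.swap v w).trans p) ?_ ?_ ?_
    · intro p hp
      simp only [Finset.mem_filter, Finset.mem_univ, true_and] at hp ⊢
      rw [← hblw, key, hp]
    · intro p _ q _ h
      apply Equiv.ext; intro u
      have := congrArg (fun f : Ord V => f (Equiv.swap v w u)) h
      simpa using this
    · intro p hp
      simp only [Finset.mem_filter, Finset.mem_univ, true_and] at hp
      have e : (Equiv.swap v w).trans ((Equiv.swap v w).trans p) = p := by ext; simp
      refine ⟨(Equiv.swap v w).trans p, ?_, e⟩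
      simp only [Finset.mem_filter, Finset.mem_univ, true_and]
      rw [← key, e, hblw, hp]
  rw [← hMc, ← smul_eq_mul, ← Finset.sum_const, ← Finset.sum_congr rfl sw]
  simp only [Finset.card_filter]
  rw [Finset.sum_comm]
  simp only [← Finset.card_filter]
  rw [Finset.sum_congr rfl (fun p _ => rank_unique p M j (by omega))]
  simp

lemma clq_insert {G : SimpleGraph V} {B : Finset V} {z : V} (h : Clq G B)
    (hz : ∀ b ∈ B, b ≠ z → G.Adj z b) : Clq G (insert z B) := by
  intro a ha b hb hab
  rw [Finset.mem_insert] at ha hb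
  rcases ha with rfl | ha <;> rcases hb with rfl | hb
  · exact absurd rfl hab
  · exact hz b hb hab.symm
  · exact (hz a ha hab).symm
  · exact h a ha b hb hab

lemma exists_z {R : Rig V k} {T : Rig V 1} {G : SimpleGraph V} (hG : ClosedG R T G)
    {N : Finset V} {v : V} (hv : v ∉ N) (hN : ∀ u ∈ N, G.Adj v u) (hnc : ¬ Clq G N)
    {B : Finset V} (hB : B ⊆ N) (hBc : Clq G B) (hcard : 2 * k + 1 ≤ B.card) :
    ∃ z ∈ N, z ∉ B ∧ ¬ Clq G (insert z B) := by
  by_contra! hcon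
  apply hnc
  have hz : ∀ z ∈ N, ∀ b ∈ B, b ≠ z → G.Adj z b := by
    intro z hz b hb hbz
    by_cases hzB : z ∈ B
    · exact hBc z hzB b hb hbz.symm
    · exact hcon z hz hzB z (by simp) b (by simp [hb]) hbz.symm
  intro x hx y hy hxy
  by_cases hxB : x ∈ B
  · exact (hz y hy x hxB hxy).symm
  by_cases hyB : y ∈ B
  · exact hz x hx y hyB hxy.symm
  have hK : Clq G (insert v (insert y B)) := by
    apply clq_insert (clq_insert hBc (hz y hy))
    intro b hb _
    rw [Finset.mem_insert] at hb
    rcases hb with rfl | hb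
    · exact hN _ hy
    · exact hN _ (hB hb)
  have hvB : v ∉ insert y B := by
    rw [Finset.mem_insert]; rintro (rfl | h)
    · exact hv hy
    · exact hv (hB h)
  refine adj_all hG hK ?_ (z := x) (N := B) ?_ ?_ ?_ y (by simp) hxy.symm
  · rw [Finset.card_insert_of_notMem hvB, Finset.card_insert_of_notMem hyB]; omega
  · intro b hb; simp [hb]
  · intro b hb; exact hz x hx b hb (by rintro rfl; exact hxB hb)
  · omega

lemma not_clq_swap {R : Rig V k} {T : Rig V 1} {G : SimpleGraph V} (hG : ClosedG R T G)
    {N : Finset V} {v : V} (hv : v ∉ N) (hN : ∀ u ∈ N, G.Adj v u)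
    {B : Finset V} (hB : B ⊆ N) (hBc : Clq G B) (hcard : 2 * k + 1 ≤ B.card) {z : V} (hz : z ∈ N)
    (hzB : z ∉ B) (hnz : ¬ Clq G (insert z B)) {A : Finset V} (hA : A ⊆ B) (hAc : B.card ≤ A.card + 1)
    (hAz : ∀ a ∈ A, G.Adj z a) : False := by
  apply hnz
  have hvB : v ∉ B := fun h => hv (hB h)
  have hK : Clq G (insert v B) := clq_insert hBc (fun b hb _ => hN b (hB hb))
  apply clq_insert hBc
  intro b hb hbz
  refine adj_all hG hK ?_ (z := z) (N := insert v A) ?_ ?_ ?_ b (by simp [hb]) hbz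
  · rw [Finset.card_insert_of_notMem hvB]; omega
  · exact Finset.insert_subset_insert _ hA
  · intro n hn
    rcases Finset.mem_insert.1 hn with rfl | hn
    · exact (hN z hz).symm
    · exact hAz n hn
  · rw [Finset.card_insert_of_notMem (fun h => hvB (hA h))]; omega

open Classical in
lemma count_clq_le {R : Rig V k} {T : Rig V 1} {G : SimpleGraph V} (hG : ClosedG R T G)
    {N : Finset V} {v : V} (hv : v ∉ N) (hN : ∀ u ∈ N, G.Adj v u) (hnc : ¬ Clq G N)
    (j : ℕ) (hj : 2 * k + 1 ≤ j) (y : V) (hy : y ∈ N) :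
    (Finset.univ.filter (fun p : Ord V => (blw p N v).card = j ∧ Clq G (blw p N v))).card ≤
    (Finset.univ.filter (fun p : Ord V => (blw p N v).card = j ∧ y ∉ blw p N v)).card := by
  have hex : ∀ B : Finset V, ∃ z, B ⊆ N → Clq G B → 2 * k + 1 ≤ B.card →
      z ∈ N ∧ z ∉ B ∧ ¬ Clq G (insert z B) := by
    intro B
    by_cases h : B ⊆ N ∧ Clq G B ∧ 2 * k + 1 ≤ B.card
    · obtain ⟨z, a, b, c⟩ := exists_z hG hv hN hnc h.1 h.2.1 h.2.2
      exact ⟨z, fun _ _ _ => ⟨a, b, c⟩⟩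
    · exact ⟨v, fun a b c => absurd ⟨a, b, c⟩ h⟩
  choose z hz using hex
  have hvy : v ≠ y := by rintro rfl; exact hv hy
  -- the swapped order
  have sb : ∀ p : Ord V, ∀ w ∈ N, w ∉ blw p N v → y ∈ blw p N v →
      blw ((Equiv.swap y w).trans p) N v = insert w ((blw p N v).erase y) := by
    intro p w hw hwB hyB
    have hvw : v ≠ w := by rintro rfl; exact hv hw
    have hyw : y ≠ w := by rintro rfl; exact hwB hyB
    rw [mem_blw] at hyB
    have hwB' : ¬ p w < p v := fun h => hwB (mem_blw.2 ⟨hw, h⟩)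
    ext u
    rw [mem_blw, Finset.mem_insert, Finset.mem_erase, mem_blw]
    simp only [Equiv.trans_apply, Equiv.swap_apply_of_ne_of_ne hvy hvw]
    by_cases h1 : u = y
    · subst h1
      simp [hwB', hyw]
    · by_cases h2 : u = w
      · subst h2
        simp [hw, hyB.2]
      · rw [Equiv.swap_apply_of_ne_of_ne h1 h2]
        tauto
  refine Finset.card_le_card_of_injOn
    (fun p => if y ∈ blw p N v then (Equiv.swap y (z (blw p N v))).trans p else p) ?_ ?_
  · intro p hp
    simp only [Finset.coe_filter, Finset.mem_univ, true_and, Set.mem_ofPred_eq] at hp ⊢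
    obtain ⟨hpj, hpc⟩ := hp
    split_ifs with hyB
    · obtain ⟨a, b, c⟩ := hz _ (blw_sub p N v) hpc (by omega)
      rw [sb p _ a b hyB]
      have hyz : y ≠ z (blw p N v) := by intro h; rw [← h] at b; exact b hyB
      refine ⟨?_, by simp [hyz]⟩
      rw [Finset.card_insert_of_notMem (by simp [b]), Finset.card_erase_of_mem hyB]
      have := Finset.card_pos.2 ⟨y, hyB⟩
      omega
    · exact ⟨hpj, hyB⟩
  · have nc : ∀ p : Ord V, (blw p N v).card = j → Clq G (blw p N v) → y ∈ blw p N v →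
        ¬ Clq G (insert (z (blw p N v)) ((blw p N v).erase y)) := by
      intro p hpj hpc hyB hcl
      obtain ⟨a, b, c⟩ := hz _ (blw_sub p N v) hpc (by omega)
      refine not_clq_swap hG hv hN (blw_sub p N v) hpc (by omega) a b c
        (Finset.erase_subset y _) (by rw [Finset.card_erase_of_mem hyB]; omega) ?_
      intro w hw
      exact hcl _ (by simp) w (Finset.mem_insert_of_mem hw)
        (by intro h; rw [h] at b; exact b (Finset.mem_of_mem_erase hw))
    intro p hp q hq h
    simp only [Finset.coe_filter, Finset.mem_univ, true_and, Set.mem_ofPred_eq] at hp hq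
    obtain ⟨hpj, hpc⟩ := hp
    obtain ⟨hqj, hqc⟩ := hq
    obtain ⟨a, b, c⟩ := hz _ (blw_sub p N v) hpc (by omega)
    obtain ⟨a', b', c'⟩ := hz _ (blw_sub q N v) hqc (by omega)
    by_cases hyp : y ∈ blw p N v <;> by_cases hyq : y ∈ blw q N v
    · simp only [hyp, hyq, if_true] at h
      have hb := congrArg (fun r : Ord V => blw r N v) h
      simp only [sb p _ a b hyp, sb q _ a' b' hyq] at hb
      by_cases hzz : z (blw p N v) = z (blw q N v)
      · rw [hzz] at h
        apply Equiv.ext; intro u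
        have := congrArg (fun f : Ord V => f (Equiv.swap y (z (blw q N v)) u)) h
        simpa using this
      · exfalso
        set B := blw p N v with hB
        set B' := blw q N v with hB'
        have mem : ∀ u, (u = z B ∨ (u ≠ y ∧ u ∈ B)) ↔ (u = z B' ∨ (u ≠ y ∧ u ∈ B')) := by
          intro u
          have := congrArg (fun s : Finset V => u ∈ s) hb
          simpa [Finset.mem_insert, Finset.mem_erase] using this
        have hzB' : z B ∈ B' := by
          rcases (mem (z B)).1 (Or.inl rfl) with h | h
          · exact absurd h hzz
          · exact h.2
        refine not_clq_swap (B := B) hG hv hN (blw_sub p N v) hpc (by omega) a b c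
          (Finset.erase_subset (z B') _) ?_ ?_
        · have := Finset.pred_card_le_card_erase (s := B) (a := z B')
          omega
        · intro w hw
          rw [Finset.mem_erase] at hw
          apply hqc _ hzB' w
          · by_cases hwy : w = y
            · subst hwy; exact hyq
            · rcases (mem w).1 (Or.inr ⟨hwy, hw.2⟩) with h | h
              · exact absurd h hw.1
              · exact h.2
          · intro h; rw [h] at b; exact b hw.2
    · simp only [hyp, hyq, if_true, if_false] at h
      exfalso
      apply nc p hpj hpc hyp
      rw [← sb p _ a b hyp, h]
      exact hqc
    · simp only [hyp, hyq, if_true, if_false] at h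
      exfalso
      apply nc q hqj hqc hyq
      rw [← sb q _ a' b' hyq, ← h]
      exact hpc
    · simpa only [hyp, hyq, if_false] using h

open Classical in
lemma count_clq {R : Rig V k} {T : Rig V 1} {G : SimpleGraph V} (hG : ClosedG R T G)
    {N : Finset V} {v : V} (hv : v ∉ N) (hN : ∀ u ∈ N, G.Adj v u) (hnc : ¬ Clq G N)
    (j : ℕ) (hj : 2 * k + 1 ≤ j) :
    N.card * (Finset.univ.filter (fun p : Ord V => (blw p N v).card = j ∧ Clq G (blw p N v))).card
    ≤ (N.card - j) * (Finset.univ.filter (fun p : Ord V => (blw p N v).card = j)).card := by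
  have h1 := Finset.sum_le_sum (fun y hy => count_clq_le hG hv hN hnc j hj y hy)
  rw [Finset.sum_const, smul_eq_mul] at h1
  refine h1.trans (le_of_eq ?_)
  have : ∀ y ∈ N, (Finset.univ.filter (fun p : Ord V => (blw p N v).card = j ∧ y ∉ blw p N v)).card
      = ∑ p ∈ Finset.univ.filter (fun p : Ord V => (blw p N v).card = j),
        if y ∉ blw p N v then 1 else 0 := by
    intro y _
    rw [← Finset.card_filter, Finset.filter_filter]
  rw [Finset.sum_congr rfl this, Finset.sum_comm, mul_comm, ← smul_eq_mul, ← Finset.sum_const]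
  apply Finset.sum_congr rfl
  intro p hp
  simp only [Finset.mem_filter, Finset.mem_univ, true_and] at hp
  rw [← Finset.card_filter, Finset.filter_notMem_eq_sdiff,
    Finset.card_sdiff_of_subset (blw_sub _ _ _), hp]

lemma sum_min (d D : ℕ) (h : d ≤ D) :
    2 * ∑ j ∈ Finset.range (D + 1), min d j + d * (d + 1) = 2 * d * (D + 1) := by
  induction D, h using Nat.le_induction with
  | base =>
    have : ∑ j ∈ Finset.range (d + 1), min d j = ∑ j ∈ Finset.range (d + 1), j :=
      Finset.sum_congr rfl (fun j hj => by rw [Finset.mem_range] at hj; omega)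
    rw [this]
    have := Finset.sum_range_id_mul_two (d + 1)
    simp only [Nat.add_sub_cancel] at this
    nlinarith
  | succ D h ih =>
    rw [Finset.sum_range_succ, min_eq_left (by omega)]
    nlinarith

lemma sum_tail (m D : ℕ) (h : m ≤ D) :
    2 * ∑ j ∈ Finset.range (D + 1), (if m + 1 ≤ j then j else 0) + m * (m + 1) = D * (D + 1) := by
  induction D, h using Nat.le_induction with
  | base =>
    have : ∑ j ∈ Finset.range (m + 1), (if m + 1 ≤ j then j else 0) = 0 :=
      Finset.sum_eq_zero (fun j hj => by rw [Finset.mem_range] at hj; rw [if_neg]; omega)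
    rw [this]; omega
  | succ D h ih =>
    rw [Finset.sum_range_succ, if_pos (by omega)]
    nlinarith

open Classical in
/-- lower bound for the increment -/
noncomputable def gg (k : ℕ) (G : SimpleGraph V) (B : Finset V) : ℕ :=
  min (k + 1) B.card + (if 2 * k + 1 ≤ B.card ∧ ¬ Clq G B then 1 else 0)

open Classical in
lemma sum_gg {R : Rig V k} {T : Rig V 1} {G : SimpleGraph V} (hG : ClosedG R T G)
    {N : Finset V} {v : V} (hv : v ∉ N) (hN : ∀ u ∈ N, G.Adj v u) (hnc : ¬ Clq G N)
    (hD : k ^ 2 + 3 * k + 5 ≤ N.card) :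
    (k + 1) * Fintype.card (Ord V) < ∑ p : Ord V, gg k G (blw p N v) := by
  set D := N.card with hDdef
  set M := Fintype.card (Ord V) with hM
  have hMpos : 0 < M := Fintype.card_pos_iff.2 ⟨Fintype.equivFin V⟩
  have fib : ∑ p : Ord V, gg k G (blw p N v) = ∑ j ∈ Finset.range (D + 1),
      ∑ p ∈ Finset.univ.filter (fun p : Ord V => (blw p N v).card = j), gg k G (blw p N v) := by
    symm
    apply Finset.sum_fiberwise_of_maps_to
    intro p _
    rw [Finset.mem_range]
    have := Finset.card_le_card (blw_sub p N v)
    omega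
  have each : ∀ j ∈ Finset.range (D + 1), (D * min (k + 1) j + (if 2 * k + 1 ≤ j then j else 0)) * M ≤
      D * (D + 1) * ∑ p ∈ Finset.univ.filter (fun p : Ord V => (blw p N v).card = j),
        gg k G (blw p N v) := by
    intro j hj
    rw [Finset.mem_range] at hj
    have haj := count_rank N v hv j (by omega)
    set a := (Finset.univ.filter (fun p : Ord V => (blw p N v).card = j)).card with ha
    have hs : ∑ p ∈ Finset.univ.filter (fun p : Ord V => (blw p N v).card = j), gg k G (blw p N v)
        = min (k + 1) j * a + (if 2 * k + 1 ≤ j then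
          (Finset.univ.filter (fun p : Ord V => (blw p N v).card = j ∧ ¬ Clq G (blw p N v))).card
          else 0) := by
      unfold gg
      rw [Finset.sum_add_distrib]
      congr 1
      · rw [mul_comm, ← smul_eq_mul, ha, ← Finset.sum_const]
        apply Finset.sum_congr rfl
        intro p hp
        simp only [Finset.mem_filter, Finset.mem_univ, true_and] at hp
        rw [hp]
      · split_ifs with h
        · rw [← Finset.filter_filter, Finset.card_filter (fun p : Ord V => ¬ Clq G (blw p N v))]
          apply Finset.sum_congr rfl
          intro p hp
          simp only [Finset.mem_filter, Finset.mem_univ, true_and] at hp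
          simp [hp, h]
        · apply Finset.sum_eq_zero
          intro p hp
          simp only [Finset.mem_filter, Finset.mem_univ, true_and] at hp
          simp [hp, h]
    rw [hs, hM, ← haj, ← hDdef]
    split_ifs with h
    · have hc := count_clq hG hv hN hnc j h
      have hsplit := Finset.card_filter_add_card_filter_not (s := Finset.univ.filter
        (fun p : Ord V => (blw p N v).card = j)) (fun p => Clq G (blw p N v))
      rw [Finset.filter_filter, Finset.filter_filter, ← ha] at hsplit
      rw [← ha, ← hDdef] at hc
      set c := (Finset.univ.filter (fun p : Ord V => (blw p N v).card = j ∧ Clq G (blw p N v))).card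
      set e := (Finset.univ.filter (fun p : Ord V => (blw p N v).card = j ∧ ¬ Clq G (blw p N v))).card
      have : j * a ≤ D * e := by
        obtain ⟨r, hr⟩ : ∃ r, D = j + r := ⟨D - j, by omega⟩
        have hr' : D - j = r := by omega
        rw [hr'] at hc
        have : D * a = D * c + D * e := by rw [← hsplit]; ring
        have : D * a = j * a + r * a := by rw [hr]; ring
        omega
      calc (D * min (k + 1) j + j) * ((D + 1) * a)
          = D * (D + 1) * (min (k + 1) j * a) + (D + 1) * (j * a) := by ring
        _ ≤ D * (D + 1) * (min (k + 1) j * a) + (D + 1) * (D * e) := by gcongr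
        _ = _ := by ring
    · apply le_of_eq; ring
  have tot := Finset.sum_le_sum each
  rw [← Finset.mul_sum, ← fib, ← Finset.sum_mul, Finset.sum_add_distrib, ← Finset.mul_sum] at tot
  have s1 := sum_min (k + 1) D (by nlinarith)
  have s2 := sum_tail (2 * k) D (by nlinarith)
  set A := ∑ j ∈ Finset.range (D + 1), min (k + 1) j
  set C := ∑ j ∈ Finset.range (D + 1), (if 2 * k + 1 ≤ j then j else 0)
  set W := ∑ p : Ord V, gg k G (blw p N v)
  have key : D * (D + 1) * (k + 1) < D * A + C := by
    have e1 : 2 * (D * A) + D * ((k + 1) * (k + 1 + 1)) = 2 * (D * (D + 1) * (k + 1)) := by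
      have := congrArg (fun x => D * x) s1
      linarith
    have e2 : D * (k ^ 2 + 3 * k + 6) ≤ D * (D + 1) := Nat.mul_le_mul le_rfl (by omega)
    have e3 : 2 * k * (2 * k + 1) < 4 * D := by nlinarith
    nlinarith
  by_contra hcon
  push Not at hcon
  have : D * (D + 1) * W ≤ D * (D + 1) * ((k + 1) * M) := Nat.mul_le_mul le_rfl hcon
  have : (D * A + C) * M ≤ (D * (D + 1) * (k + 1)) * M := by linarith
  have := Nat.le_of_mul_le_mul_right this hMpos
  omega

lemma telescope (p : Ord V) (f : Finset V → ℕ) (g : V → ℕ) (X : Finset V)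
    (h : ∀ v ∈ X, f (blw p X v) + g v ≤ f (insert v (blw p X v))) : ∑ v ∈ X, g v ≤ f X := by
  induction X using Finset.induction_on_max_value p with
  | empty => simp
  | insert a s ha hmax ih =>
    rw [Finset.sum_insert ha]
    have e1 : blw p (insert a s) a = s := by
      ext u
      rw [mem_blw, Finset.mem_insert]
      constructor
      · rintro ⟨rfl | h, h2⟩
        · exact absurd h2 (lt_irrefl _)
        · exact h
      · intro hu
        refine ⟨Or.inr hu, lt_of_le_of_ne (hmax u hu) ?_⟩
        intro h
        rw [p.injective h] at hu
        exact ha hu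
    have e2 : ∀ v ∈ s, blw p (insert a s) v = blw p s v := by
      intro v hv
      ext u
      rw [mem_blw, mem_blw, Finset.mem_insert]
      constructor
      · rintro ⟨rfl | h, h2⟩
        · exact absurd h2 (not_lt.2 (hmax v hv))
        · exact ⟨h, h2⟩
      · exact fun ⟨a, b⟩ => ⟨Or.inr a, b⟩
    have h1 := h a (by simp)
    rw [e1] at h1
    have := ih (fun v hv => by rw [← e2 v hv]; exact h v (by simp [hv]))
    omega

open Classical in
lemma exists_simplicial {R : Rig V k} {T : Rig V 1} {G : SimpleGraph V} (hG : ClosedG R T G)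
    (hk : 0 < k) (X : Finset V) (hX : X.Nonempty)
    (hdeg : ∀ v ∈ X, k ^ 2 + 3 * k + 5 ≤ (X.filter (fun u => G.Adj v u)).card) :
    ∃ v ∈ X, Clq G (X.filter (fun u => G.Adj v u)) := by
  by_contra! hcon
  have h1 : ∀ p : Ord V, ∑ v ∈ X, gg k G (blw p (X.filter (fun u => G.Adj v u)) v) ≤
      (k + 1) * X.card := by
    intro p
    refine (telescope p (fun Y => rk (UU R T) (eOn G Y)) _ X ?_).trans (rk_upper R T G X)
    intro v hv
    have hvY : v ∉ blw p X v := fun h => lt_irrefl _ (mem_blw.1 h).2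
    have hB : blw p (X.filter (fun u => G.Adj v u)) v ⊆ blw p X v := by
      intro u hu
      rw [mem_blw, Finset.mem_filter] at hu
      exact mem_blw.2 ⟨hu.1.1, hu.2⟩
    have hadj : ∀ z ∈ blw p (X.filter (fun u => G.Adj v u)) v, G.Adj v z := by
      intro u hu
      rw [mem_blw, Finset.mem_filter] at hu
      exact hu.1.2
    unfold gg
    split_ifs with h
    · have := inc2 hG hk hvY hB hadj (by omega) h.2
      omega
    · have := inc1 R T hvY hB hadj
      omega
  have h2 : ∀ v ∈ X, (k + 1) * Fintype.card (Ord V) <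
      ∑ p : Ord V, gg k G (blw p (X.filter (fun u => G.Adj v u)) v) := by
    intro v hv
    exact sum_gg hG (by simp) (fun u hu => (Finset.mem_filter.1 hu).2) (hcon v hv) (hdeg v hv)
  have h3 := Finset.sum_lt_sum_of_nonempty hX h2
  have h4 := Finset.sum_le_sum (fun p (_ : p ∈ (Finset.univ : Finset (Ord V))) => h1 p)
  rw [Finset.sum_comm] at h4
  rw [Finset.sum_const, smul_eq_mul] at h3 h4
  rw [Finset.card_univ] at h4
  nlinarith

end RigAux

namespace RigAux
variable {V : Type*} [Fintype V] [DecidableEq V] {k : ℕ}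

/-- separation condition -/
def Sep (c : ℕ) (G : SimpleGraph V) (X : Finset V) : Prop :=
  c + 1 ≤ X.card ∧ ∀ A B : Finset V, A ⊆ X → B ⊆ X → A.Nonempty → B.Nonempty → Disjoint A B →
    (∀ a ∈ A, ∀ b ∈ B, ¬ G.Adj a b) → A.card + B.card + c ≤ X.card

open Classical in
lemma sep_clq {R : Rig V k} {T : Rig V 1} {G : SimpleGraph V} (hG : ClosedG R T G)
    (hk : 0 < k) (n : ℕ) : ∀ X : Finset V, X.card = n → Sep (k ^ 2 + 3 * k + 5) G X → Clq G X := by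
  induction n using Nat.strong_induction_on with
  | _ n ih =>
  intro X hXn hS
  by_contra hnc
  have hnc' := hnc
  unfold Clq at hnc'
  push Not at hnc'
  obtain ⟨a, ha, b, hb, hab, hadj⟩ := hnc'
  set c := k ^ 2 + 3 * k + 5 with hc
  have hck : 2 * k + 2 ≤ c := by nlinarith
  have hX2 : 1 + 1 + c ≤ X.card := by
    simpa using hS.2 {a} {b} (by simpa using ha) (by simpa using hb) (by simp) (by simp)
      (by simpa using hab) (by simpa using hadj)
  have hdeg : ∀ v ∈ X, c ≤ (X.filter (fun u => G.Adj v u)).card := by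
    intro v hv
    have hvN : v ∉ X.filter (fun u => G.Adj v u) := by simp
    have hsub : insert v (X.filter (fun u => G.Adj v u)) ⊆ X :=
      Finset.insert_subset hv (Finset.filter_subset _ _)
    have hcs := Finset.card_sdiff_add_card_eq_card hsub
    rw [Finset.card_insert_of_notMem hvN] at hcs
    by_cases hne : (X \ insert v (X.filter (fun u => G.Adj v u))).Nonempty
    · have := hS.2 {v} (X \ insert v (X.filter (fun u => G.Adj v u))) (by simpa using hv)
        Finset.sdiff_subset (by simp) hne (by simp) (by
          intro x hx y hy hxy
          rw [Finset.mem_singleton] at hx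
          subst hx
          rw [Finset.mem_sdiff] at hy
          apply hy.2
          simp [hy.1, hxy])
      rw [Finset.card_singleton] at this
      omega
    · rw [Finset.not_nonempty_iff_eq_empty] at hne
      rw [hne, Finset.card_empty] at hcs
      omega
  obtain ⟨x, hx, hsim⟩ := exists_simplicial hG hk X ⟨a, ha⟩ hdeg
  have hxc : (X.erase x).card + 1 = X.card := Finset.card_erase_add_one hx
  have hK : Clq G (X.erase x) := by
    refine ih (X.erase x).card (by omega) _ rfl ⟨by omega, ?_⟩
    intro A B hA hB hAn hBn hd hno
    have hA' := hA.trans (Finset.erase_subset _ _)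
    have hB' := hB.trans (Finset.erase_subset _ _)
    have hxA : x ∉ A := fun h => Finset.notMem_erase x X (hA h)
    have hxB : x ∉ B := fun h => Finset.notMem_erase x X (hB h)
    by_cases hnb : ∃ y ∈ B, G.Adj x y
    · obtain ⟨y, hy, hxy⟩ := hnb
      have := hS.2 A (insert x B) hA' (Finset.insert_subset hx hB') hAn (by simp)
        (by rw [Finset.disjoint_insert_right]; exact ⟨hxA, hd⟩) (by
          intro p hp q hq hpq
          rcases Finset.mem_insert.1 hq with rfl | hq
          · refine hno p hp y hy (hsim p (by simp [hA' hp, hpq.symm]) y (by simp [hB' hy, hxy]) ?_)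
            rintro rfl
            exact Finset.disjoint_left.1 hd hp hy
          · exact hno p hp q hq hpq)
      rw [Finset.card_insert_of_notMem hxB] at this
      omega
    · push Not at hnb
      have := hS.2 (insert x A) B (Finset.insert_subset hx hA') hB' (by simp) hBn
        (by rw [Finset.disjoint_insert_left]; exact ⟨hxB, hd⟩) (by
          intro p hp q hq hpq
          rcases Finset.mem_insert.1 hp with rfl | hp
          · exact hnb q hq hpq
          · exact hno p hp q hq hpq)
      rw [Finset.card_insert_of_notMem hxA] at this
      omega
  apply hnc
  rw [← Finset.insert_erase hx]
  apply clq_insert hK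
  refine adj_all hG hK (by omega) (N := X.filter (fun u => G.Adj x u)) ?_ ?_ ?_
  · intro u hu
    rw [Finset.mem_filter] at hu
    exact Finset.mem_erase.2 ⟨hu.2.ne', hu.1⟩
  · exact fun u hu => (Finset.mem_filter.1 hu).2
  · have := hdeg x hx
    omega

lemma reach_ind {W : Type*} {H : SimpleGraph W} {P : W → Prop}
    (hP : ∀ x y, H.Adj x y → P x → P y) {u v : W} (h : H.Reachable u v) (hu : P u) : P v := by
  obtain ⟨w⟩ := h
  induction w with
  | nil => exact hu
  | cons hadj _ ih => exact ih (hP _ _ hadj hu)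

lemma sep_univ {c : ℕ} {G : SimpleGraph V} (hG : KConnected G c) : Sep c G Finset.univ := by
  refine ⟨by simpa [Nat.card_eq_fintype_card] using hG.1, ?_⟩
  intro A B _ _ ⟨a, ha⟩ ⟨b, hb⟩ hd hno
  by_contra hlt
  have hu : (A ∪ B)ᶜ.card + (A ∪ B).card = Fintype.card V := by
    rw [Finset.card_compl]
    have := Finset.card_le_univ (A ∪ B)
    omega
  rw [Finset.card_union_of_disjoint hd] at hu
  rw [Finset.card_univ] at hlt
  have hcon := hG.2 (((A ∪ B)ᶜ : Finset V) : Set V) (Finset.finite_toSet _)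
    (by rw [Set.ncard_coe_finset]; omega)
  have hmem : ∀ w, w ∈ ((((A ∪ B)ᶜ : Finset V) : Set V)ᶜ : Set V) ↔ w ∈ A ∨ w ∈ B := by
    intro w; simp [not_and_or, or_iff_not_imp_left]
  have hr := hcon.preconnected ⟨a, (hmem a).2 (Or.inl ha)⟩ ⟨b, (hmem b).2 (Or.inr hb)⟩
  have := reach_ind (P := fun w => w.1 ∈ A) (by
    rintro ⟨x, hx⟩ ⟨y, hy⟩ hxy hxA
    rcases (hmem y).1 hy with h | h
    · exact h
    · exact absurd hxy (hno x hxA y h)) hr ha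
  exact Finset.disjoint_left.1 hd this hb

lemma two_parts (R : Rig V k) (T : Rig V 1) (hk : 0 < k) {G : SimpleGraph V}
    (hG : KConnected G (k ^ 2 + 3 * k + 5)) :
    ∃ F1 F2 : Finset (Sym2 V), (∀ e ∈ F1, e ∈ G.edgeSet) ∧ (∀ e ∈ F2, e ∈ G.edgeSet) ∧
      Disjoint F1 F2 ∧ (∀ x y, x ≠ y → s(x, y) ∈ R.cl F1) ∧ (∀ x y, x ≠ y → s(x, y) ∈ T.cl F2) := by
  obtain ⟨G', hle, hcl, hrk⟩ := exists_closed R T G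
  have hS := sep_univ hG
  have hS' : Sep (k ^ 2 + 3 * k + 5) G' Finset.univ :=
    ⟨hS.1, fun A B hA hB ha hb hd hno =>
      hS.2 A B hA hB ha hb hd (fun a ha b hb h => hno a ha b hb (hle h))⟩
  have hclq := sep_clq hcl hk _ Finset.univ rfl hS'
  obtain ⟨F1, F2, h1, h2, hd, p1, p2⟩ := clq_full R T hclq (by have := hS.1; nlinarith)
  obtain ⟨I1, i1, ind1, c1⟩ := Rig_basis R F1
  obtain ⟨I2, i2, ind2, c2⟩ := Rig_basis T F2
  have p1' : ∀ a ∈ Finset.univ, ∀ b ∈ Finset.univ, a ≠ b → s(a, b) ∈ R.cl I1 :=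
    fun a ha b hb hab => R.cl_le _ _ c1 (p1 a ha b hb hab)
  have p2' : ∀ a ∈ Finset.univ, ∀ b ∈ Finset.univ, a ≠ b → s(a, b) ∈ T.cl I2 :=
    fun a ha b hb hab => T.cl_le _ _ c2 (p2 a ha b hb hab)
  have hdI : Disjoint I1 I2 := hd.mono i1 i2
  have hr := le_rk (Ind := UU R T) ⟨I1, I2, ind1, ind2, hdI, rfl⟩
    (Finset.union_subset (i1.trans h1) (i2.trans h2))
  rw [hrk, Finset.card_union_of_disjoint hdI] at hr
  obtain ⟨J, hJ, ⟨J1, J2, a, b, hdJ, rfl⟩, hJc⟩ := exists_basis (UU_empty R T) (eOn G Finset.univ)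
  rw [← hJc, Finset.card_union_of_disjoint hdJ] at hr
  have j1 := Finset.union_subset_left hJ
  have j2 := Finset.union_subset_right hJ
  have q1 : J1.card ≤ I1.card := R.card_le _ _ a (fun e he => pairs_mem p1' (j1 he))
  have q2 : J2.card ≤ I2.card := T.card_le _ _ b (fun e he => pairs_mem p2' (j2 he))
  refine ⟨J1, J2, fun e he => (mem_eOn'.1 (j1 he)).1, fun e he => (mem_eOn'.1 (j2 he)).1, hdJ, ?_, ?_⟩
  · intro x y hxy
    by_contra hn
    have hn' : s(x, y) ∉ J1 := fun h => hn (R.sub_cl _ h)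
    have := R.card_le I1 _ (R.insert_ind J1 _ a hn) (by
      intro e he
      rcases Finset.mem_insert.1 (Finset.mem_coe.1 he) with rfl | he
      · exact p1' x (by simp) y (by simp) hxy
      · exact pairs_mem p1' (j1 he))
    rw [Finset.card_insert_of_notMem hn'] at this
    omega
  · intro x y hxy
    by_contra hn
    have hn' : s(x, y) ∉ J2 := fun h => hn (T.sub_cl _ h)
    have := T.card_le I2 _ (T.insert_ind J2 _ b hn) (by
      intro e he
      rcases Finset.mem_insert.1 (Finset.mem_coe.1 he) with rfl | he
      · exact p2' x (by simp) y (by simp) hxy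
      · exact pairs_mem p2' (j2 he))
    rw [Finset.card_insert_of_notMem hn'] at this
    omega

lemma path_of (T : Rig V 1) {G : SimpleGraph V} {F : Finset (Sym2 V)} (hF : ∀ e ∈ F, e ∈ G.edgeSet)
    (hcl : ∀ x y, x ≠ y → s(x, y) ∈ T.cl F) (s t : V) :
    ∃ p : G.Walk s t, p.IsPath ∧ ∀ e ∈ p.edges, e ∈ F := by
  classical
  set H := SimpleGraph.fromEdgeSet (F : Set (Sym2 V)) with hH
  have hle : H ≤ G := by
    intro x y h
    rw [hH, SimpleGraph.fromEdgeSet_adj] at h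
    exact hF _ (Finset.mem_coe.1 h.1)
  have hr : H.Reachable s t := by
    by_contra hn
    obtain ⟨a, ha, b, hb, _, he⟩ := T.conn (F : Set (Sym2 V)) ∅
      (Finset.univ.filter (fun w => H.Reachable s w)) s t hcl (by simp) (by simp) (by simpa using hn)
      (by simp) (by simp)
    simp only [Finset.mem_filter, Finset.mem_univ, true_and] at ha hb
    apply hb
    refine ha.trans (SimpleGraph.Adj.reachable ?_)
    rw [hH, SimpleGraph.fromEdgeSet_adj]
    refine ⟨he, ?_⟩
    rintro rfl
    exact hb ha
  obtain ⟨w⟩ := hr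
  refine ⟨w.toPath.1.mapLe hle, (SimpleGraph.Walk.mapLe_isPath hle).2 w.toPath.2, ?_⟩
  intro e he
  rw [SimpleGraph.Walk.edges_mapLe_eq_edges] at he
  have := w.toPath.1.edges_subset_edgeSet he
  rw [hH, SimpleGraph.edgeSet_fromEdgeSet] at this
  exact this.1

lemma kconn_of (R : Rig V k) {H : SimpleGraph V} {F : Finset (Sym2 V)} (hF : ∀ e ∈ F, e ∈ H.edgeSet)
    (hcl : ∀ x y, x ≠ y → s(x, y) ∈ R.cl F) (hcard : k + 1 ≤ Nat.card V) : KConnected H k := by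
  classical
  refine ⟨hcard, fun S hS hSk => ?_⟩
  have hc : hS.toFinset.card = S.ncard := (Set.ncard_eq_toFinset_card S hS).symm
  rw [SimpleGraph.connected_iff]
  constructor
  · rintro ⟨x, hx⟩ ⟨y, hy⟩
    by_contra hn
    obtain ⟨a, ha, b, hb, hbS, he⟩ := R.conn (F : Set (Sym2 V)) hS.toFinset
      (Finset.univ.filter (fun w => ∃ h : w ∈ Sᶜ, (H.induce (Sᶜ : Set V)).Reachable ⟨x, hx⟩ ⟨w, h⟩))
      x y hcl (by omega)
      (by
        simp only [Finset.mem_filter, Finset.mem_univ, true_and]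
        exact ⟨hx, SimpleGraph.Reachable.refl _⟩)
      (by
        simp only [Finset.mem_filter, Finset.mem_univ, true_and]
        rintro ⟨_, h⟩
        exact hn h)
      (by simpa using hy)
      (by
        rw [Finset.disjoint_left]
        intro w hw hwS
        simp only [Finset.mem_filter, Finset.mem_univ, true_and] at hw
        obtain ⟨h, _⟩ := hw
        exact h ((Set.Finite.mem_toFinset hS).1 hwS))
    simp only [Finset.mem_filter, Finset.mem_univ, true_and] at ha hb
    obtain ⟨haS, har⟩ := ha
    have hbS' : b ∈ Sᶜ := fun h => hbS ((Set.Finite.mem_toFinset hS).2 h)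
    apply hb
    refine ⟨hbS', har.trans (SimpleGraph.Adj.reachable ?_)⟩
    exact hF _ (Finset.mem_coe.1 he)
  · by_contra hne
    have hall : hS.toFinset = Finset.univ := by
      ext w
      simp only [Set.Finite.mem_toFinset, Finset.mem_univ, iff_true]
      by_contra hw
      exact hne ⟨⟨w, hw⟩⟩
    rw [hall, Finset.card_univ, ← Nat.card_eq_fintype_card] at hc
    omega

end RigAux

/-- If `G` is a `(k²+3k+5)`-connected finite simple graph, then for every pair of vertices
`s`, `t` there is a path `P` from `s` to `t` in `G` such that `G − E(P)` is `k`-connected. -/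
theorem removable_path {V : Type*} [Fintype V] (k : ℕ) (hk : 0 < k)
    (G : SimpleGraph V) (hG : KConnected G (k ^ 2 + 3 * k + 5)) (s t : V) :
    ∃ p : G.Walk s t, p.IsPath ∧
      KConnected (G.deleteEdges {e | e ∈ p.edges}) k := by
  classical
  obtain ⟨R⟩ := RigAux.exists_rig V k
  obtain ⟨T⟩ := RigAux.exists_rig V 1
  obtain ⟨F1, F2, h1, h2, hd, c1, c2⟩ := RigAux.two_parts R T hk hG
  obtain ⟨p, hp, hpe⟩ := RigAux.path_of T h2 c2 s t
  refine ⟨p, hp, RigAux.kconn_of R (F := F1) ?_ c1 (by have := hG.1; nlinarith)⟩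
  intro e he
  rw [SimpleGraph.edgeSet_deleteEdges]
  exact ⟨h1 e he, fun h => Finset.disjoint_left.1 hd he (hpe e h)⟩
end
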